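/- arXiv:1601.04308 — 2 statements merged into one kernel-verified Lean document; each statement's English description precedes it below -/
import Mathlib

section
/- Comparison principle (coercive case). Let Ω ⊂ ℝ^N be an open set of class W^{2,∞}, let the measures μ_x satisfy (M), the jump function j satisfy (J0) and (J1), and let H be a coercive Hamiltonian satisfying either (H1) and (Ha) (sublinearly coercive) or (H1), (Hb) and (Hc) (superlinearly coercive). If u is a bounded upper semicontinuous viscosity subsolution and v a bounded lower semicontinuous viscosity supersolution of u − I[u](x) + H(x,Du) = 0 in Ω with generalized Neumann boundary condition ∂u/∂n = 0 on ∂Ω, then u ≤ v on the closure of Ω. -/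
set_option autoImplicit false

/- Common framework for censored nonlocal Hamilton–Jacobi equations with
Neumann boundary conditions (Barles-type viscosity solutions). -/

open Set Metric MeasureTheory Filter Topology Function
open scoped RealInnerProductSpace NNReal ENNReal

noncomputable section

namespace Censored

abbrev Euc (N : ℕ) : Type := EuclideanSpace ℝ (Fin N)

variable {N : ℕ}

/-- Signed distance to the boundary of `Ω`, positive inside `Ω`. -/
def sdist (Ω : Set (Euc N)) (x : Euc N) : ℝ := infDist x Ωᶜ - infDist x Ω

/-- A modulus of continuity. -/
def IsModulus (ω : ℝ → ℝ) : Prop :=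
  (∀ s, 0 ≤ ω s) ∧ Monotone ω ∧ Tendsto ω (nhdsWithin 0 (Ioi 0)) (nhds 0)

/-- A `W^{2,∞}` boundary chart for `Ω` at `s`, with radius `r`: a diffeomorphism of
class `W^{2,∞}` (i.e. `C^1` with Lipschitz differential, with inverse of the same
regularity) whose `N`-th component coincides with the signed distance. -/
def IsW2Chart (hN : 0 < N) (Ω : Set (Euc N)) (s : Euc N) (r : ℝ)
    (ψ ψinv : Euc N → Euc N) : Prop :=
  0 < r ∧
  ContDiffOn ℝ 1 ψ (ball s r) ∧
  (∃ L : ℝ≥0, LipschitzOnWith L (fun x => fderiv ℝ ψ x) (ball s r)) ∧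
  ContDiffOn ℝ 1 ψinv (ψ '' ball s r) ∧
  (∃ L : ℝ≥0, LipschitzOnWith L (fun x => fderiv ℝ ψinv x) (ψ '' ball s r)) ∧
  (∀ x ∈ ball s r, ψinv (ψ x) = x) ∧
  (∀ x ∈ ball s r, ψ x ⟨N - 1, Nat.sub_lt hN Nat.one_pos⟩ = sdist Ω x)

/-- Assumption (O): `Ω` is open of class `W^{2,∞}`. -/
def IsW2Domain (hN : 0 < N) (Ω : Set (Euc N)) : Prop :=
  IsOpen Ω ∧ ∀ s ∈ frontier Ω, ∃ r ψ ψinv, IsW2Chart hN Ω s r ψ ψinv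

/-- `n` is the exterior unit normal vector field to `∂Ω`:  `n = -D d` where `d` is the
signed distance (positive inside). -/
def IsExteriorNormal (Ω : Set (Euc N)) (n : Euc N → Euc N) : Prop :=
  ∀ x ∈ frontier Ω, ‖n x‖ = 1 ∧ HasGradientAt (sdist Ω) (-(n x)) x

/-- First part of assumption (M): the measures `μ_x` have a (measurable, nonnegative)
density `g x` with respect to Lebesgue measure, bounded by `Cμ |z|^{-(N+σ)}`. -/
def AssumptionM1 (Ω : Set (Euc N)) (g : Euc N → Euc N → ℝ) (Cμ σ : ℝ) : Prop :=
  0 < Cμ ∧ σ ∈ Ioo (0:ℝ) 1 ∧ (∀ x, Measurable (g x)) ∧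
  (∀ x ∈ closure Ω, ∀ z : Euc N, 0 ≤ g x z) ∧
  (∀ x ∈ closure Ω, ∀ z : Euc N, g x z ≤ Cμ * ‖z‖ ^ (-((N : ℝ) + σ)))

/-- Assumption (M). -/
def AssumptionM (Ω : Set (Euc N)) (g : Euc N → Euc N → ℝ) (Cμ Dμ σ : ℝ) : Prop :=
  AssumptionM1 Ω g Cμ σ ∧ 0 < Dμ ∧
  (∀ x ∈ closure Ω, ∀ y ∈ closure Ω, ∀ z : Euc N,
    |g x z - g y z| ≤ Dμ * ‖x - y‖ * ‖z‖ ^ (-((N : ℝ) + σ)))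

/-- Assumption (J0). -/
def AssumptionJ0 (Ω : Set (Euc N)) (j : Euc N → Euc N → Euc N) (Aj : ℝ) : Prop :=
  ∀ x ∈ closure Ω,
    ContDiff ℝ 1 (j x) ∧ Function.Bijective (j x) ∧
    ContDiff ℝ 1 (Function.invFun (j x)) ∧
    ∀ z : Euc N, ‖fderiv ℝ (Function.invFun (j x)) z‖ ≤ Aj

/-- Assumption (J1). -/
def AssumptionJ1 (Ω : Set (Euc N)) (j : Euc N → Euc N → Euc N) (Cj' Cj Dj : ℝ) : Prop :=
  0 < Cj' ∧ 0 < Cj ∧ 0 < Dj ∧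
  (∀ x ∈ closure Ω, ∀ z : Euc N, Cj' * ‖z‖ ≤ ‖j x z‖ ∧ ‖j x z‖ ≤ Cj * ‖z‖) ∧
  (∀ x ∈ closure Ω, ∀ y ∈ closure Ω, ∀ z : Euc N, ‖j x z - j y z‖ ≤ Dj * ‖z‖ * ‖x - y‖)

/-- The truncated censored nonlocal term over `{|z| ≥ ξ}` (`I^ξ`). -/
def Iout (Ω : Set (Euc N)) (j : Euc N → Euc N → Euc N) (g : Euc N → Euc N → ℝ)
    (ξ : ℝ) (u : Euc N → ℝ) (x : Euc N) : ℝ :=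
  ∫ z in {z : Euc N | ξ ≤ ‖z‖ ∧ x + j x z ∈ closure Ω}, (u (x + j x z) - u x) * g x z

/-- The truncated censored nonlocal term over `{|z| < ξ}` (`I_ξ`). -/
def Iin (Ω : Set (Euc N)) (j : Euc N → Euc N → Euc N) (g : Euc N → Euc N → ℝ)
    (ξ : ℝ) (φ : Euc N → ℝ) (x : Euc N) : ℝ :=
  ∫ z in {z : Euc N | ‖z‖ < ξ ∧ x + j x z ∈ closure Ω}, (φ (x + j x z) - φ x) * g x z

/-- The censored nonlocal operator of order `σ < 1`, as a principal value. -/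
def Ipv (Ω : Set (Euc N)) (j : Euc N → Euc N → Euc N) (g : Euc N → Euc N → ℝ)
    (u : Euc N → ℝ) (x : Euc N) : ℝ :=
  limUnder (nhdsWithin (0:ℝ) (Ioi 0)) (fun δ =>
    ∫ z in {z : Euc N | δ < ‖z‖ ∧ x + j x z ∈ closure Ω}, (u (x + j x z) - u x) * g x z)

/-- `u` is bounded on `S`. -/
def BddOn (u : Euc N → ℝ) (S : Set (Euc N)) : Prop := ∃ M, ∀ x ∈ S, |u x| ≤ M

/-- `u = u(x,t)` is bounded on `S × I`. -/
def BddOnT (u : Euc N → ℝ → ℝ) (S : Set (Euc N)) (I : Set ℝ) : Prop :=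
  ∃ M, ∀ x ∈ S, ∀ t ∈ I, |u x t| ≤ M

/-- Viscosity subsolution, with generalized Neumann boundary conditions, of the
stationary equation `F(x, u, Du, I[u]) = 0` in `Ω`, `∂u/∂n = 0` on `∂Ω`,
for the censored operator determined by `j, g` (with constant `Cj` from (J1)). -/
def IsSubSol (Ω : Set (Euc N)) (j : Euc N → Euc N → Euc N) (g : Euc N → Euc N → ℝ)
    (n : Euc N → Euc N) (Cj : ℝ) (F : Euc N → ℝ → Euc N → ℝ → ℝ) (u : Euc N → ℝ) : Prop :=
  ∀ ξ > (0:ℝ), ∀ φ : Euc N → ℝ, ContDiff ℝ 1 φ →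
    ∀ x ∈ closure Ω,
      (∀ y ∈ closedBall x (Cj * ξ) ∩ closure Ω, u y - φ y ≤ u x - φ x) →
      (x ∈ Ω → F x (u x) (gradient φ x) (Iin Ω j g ξ φ x + Iout Ω j g ξ u x) ≤ 0) ∧
      (x ∈ frontier Ω →
        min (F x (u x) (gradient φ x) (Iin Ω j g ξ φ x + Iout Ω j g ξ u x))
          ⟪gradient φ x, n x⟫ ≤ 0)

/-- Viscosity supersolution, with generalized Neumann boundary conditions. -/
def IsSuperSol (Ω : Set (Euc N)) (j : Euc N → Euc N → Euc N) (g : Euc N → Euc N → ℝ)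
    (n : Euc N → Euc N) (Cj : ℝ) (F : Euc N → ℝ → Euc N → ℝ → ℝ) (v : Euc N → ℝ) : Prop :=
  ∀ ξ > (0:ℝ), ∀ φ : Euc N → ℝ, ContDiff ℝ 1 φ →
    ∀ x ∈ closure Ω,
      (∀ y ∈ closedBall x (Cj * ξ) ∩ closure Ω, v x - φ x ≤ v y - φ y) →
      (x ∈ Ω → 0 ≤ F x (v x) (gradient φ x) (Iin Ω j g ξ φ x + Iout Ω j g ξ v x)) ∧
      (x ∈ frontier Ω →
        0 ≤ max (F x (v x) (gradient φ x) (Iin Ω j g ξ φ x + Iout Ω j g ξ v x))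
          ⟪gradient φ x, n x⟫)

/-- `F` corresponding to the stationary equation `u - I[u] + H(x,Du) = 0`. -/
def statF (H : Euc N → Euc N → ℝ) : Euc N → ℝ → Euc N → ℝ → ℝ :=
  fun x r p I => r - I + H x p

/-- `F` corresponding to the ergodic equation `λ - I[w] - H(x,Dw) = 0`. -/
def ergF (H : Euc N → Euc N → ℝ) (lam : ℝ) : Euc N → ℝ → Euc N → ℝ → ℝ :=
  fun x _ p I => lam - I - H x p

/-- Parabolic viscosity subsolution with generalized Neumann boundary conditions,
for `F(x, t, ∂_t u, u, Du, I[u(·,t)]) = 0` in `Ω × (0,∞)`. -/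
def IsParSubSol (Ω : Set (Euc N)) (j : Euc N → Euc N → Euc N) (g : Euc N → Euc N → ℝ)
    (n : Euc N → Euc N) (Cj : ℝ) (F : Euc N → ℝ → ℝ → ℝ → Euc N → ℝ → ℝ)
    (u : Euc N → ℝ → ℝ) : Prop :=
  ∀ ξ > (0:ℝ), ∀ φ : Euc N → ℝ → ℝ,
    ContDiff ℝ 1 (fun q : Euc N × ℝ => φ q.1 q.2) →
    ∀ x ∈ closure Ω, ∀ t ∈ Ioi (0:ℝ),
      (∀ y ∈ closedBall x (Cj * ξ) ∩ closure Ω, ∀ s ∈ Ioi (0:ℝ), |s - t| ≤ ξ →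
        u y s - φ y s ≤ u x t - φ x t) →
      (x ∈ Ω →
        F x t (deriv (φ x) t) (u x t) (gradient (fun y => φ y t) x)
          (Iin Ω j g ξ (fun y => φ y t) x + Iout Ω j g ξ (fun y => u y t) x) ≤ 0) ∧
      (x ∈ frontier Ω →
        min (F x t (deriv (φ x) t) (u x t) (gradient (fun y => φ y t) x)
              (Iin Ω j g ξ (fun y => φ y t) x + Iout Ω j g ξ (fun y => u y t) x))
          ⟪gradient (fun y => φ y t) x, n x⟫ ≤ 0)

/-- Parabolic viscosity supersolution with generalized Neumann boundary conditions. -/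
def IsParSuperSol (Ω : Set (Euc N)) (j : Euc N → Euc N → Euc N) (g : Euc N → Euc N → ℝ)
    (n : Euc N → Euc N) (Cj : ℝ) (F : Euc N → ℝ → ℝ → ℝ → Euc N → ℝ → ℝ)
    (v : Euc N → ℝ → ℝ) : Prop :=
  ∀ ξ > (0:ℝ), ∀ φ : Euc N → ℝ → ℝ,
    ContDiff ℝ 1 (fun q : Euc N × ℝ => φ q.1 q.2) →
    ∀ x ∈ closure Ω, ∀ t ∈ Ioi (0:ℝ),
      (∀ y ∈ closedBall x (Cj * ξ) ∩ closure Ω, ∀ s ∈ Ioi (0:ℝ), |s - t| ≤ ξ →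
        v x t - φ x t ≤ v y s - φ y s) →
      (x ∈ Ω →
        0 ≤ F x t (deriv (φ x) t) (v x t) (gradient (fun y => φ y t) x)
          (Iin Ω j g ξ (fun y => φ y t) x + Iout Ω j g ξ (fun y => v y t) x)) ∧
      (x ∈ frontier Ω →
        0 ≤ max (F x t (deriv (φ x) t) (v x t) (gradient (fun y => φ y t) x)
              (Iin Ω j g ξ (fun y => φ y t) x + Iout Ω j g ξ (fun y => v y t) x))
          ⟪gradient (fun y => φ y t) x, n x⟫)

/-- `F` for the parabolic equation `∂_t u - I[u] + H(x,t,u,Du) = 0`. -/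
def parF (H : Euc N → ℝ → ℝ → Euc N → ℝ) : Euc N → ℝ → ℝ → ℝ → Euc N → ℝ → ℝ :=
  fun x t pt r p I => pt - I + H x t r p

/-! ### Hamiltonians: Bellman form and coercive form (stationary) -/




/-- `H` is of Bellman type with drift `b` and cost `l` over the control set `A`. -/
def IsBellman {A : Type} (b : Euc N → A → Euc N) (l : Euc N → A → ℝ)
    (H : Euc N → Euc N → ℝ) : Prop :=
  ∀ x p, H x p = ⨆ α : A, (-⟪b x α, p⟫ - l x α)

/-- Continuity and boundedness of the Bellman data `b, l`. -/
def BellmanData {A : Type} [TopologicalSpace A]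
    (b : Euc N → A → Euc N) (l : Euc N → A → ℝ) : Prop :=
  Continuous (fun q : Euc N × A => b q.1 q.2) ∧ (∃ M, ∀ x α, ‖b x α‖ ≤ M) ∧
  Continuous (fun q : Euc N × A => l q.1 q.2) ∧ (∃ M, ∀ x α, |l x α| ≤ M)

/-- Assumption (C): uniform continuity of the cost `l`. -/
def AssumptionC (Ω : Set (Euc N)) {A : Type} (l : Euc N → A → ℝ) : Prop :=
  ∃ ω, IsModulus ω ∧ ∀ (α : A), ∀ x ∈ closure Ω, ∀ y ∈ closure Ω,
    |l x α - l y α| ≤ ω ‖x - y‖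

/-- Assumption (L): uniform Lipschitz continuity of the drift `b`. -/
def AssumptionL (Ω : Set (Euc N)) {A : Type} (b : Euc N → A → Euc N) : Prop :=
  ∃ C > (0:ℝ), ∀ (α : A), ∀ x ∈ closure Ω, ∀ y ∈ closure Ω,
    ‖b x α - b y α‖ ≤ C * ‖x - y‖

/-- The part of the boundary where the drift points inwards for every control. -/
def GammaIn (Ω : Set (Euc N)) (n : Euc N → Euc N) {A : Type}
    (b : Euc N → A → Euc N) : Set (Euc N) :=
  {x | x ∈ frontier Ω ∧ ∀ α : A, ⟪b x α, n x⟫ < 0}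

/-- The part of the boundary where the drift points outwards for every control. -/
def GammaOut (Ω : Set (Euc N)) (n : Euc N → Euc N) {A : Type}
    (b : Euc N → A → Euc N) : Set (Euc N) :=
  {x | x ∈ frontier Ω ∧ ∀ α : A, 0 < ⟪b x α, n x⟫}

/-- The part of the boundary where the drift points both inwards and outwards. -/
def GammaMix (Ω : Set (Euc N)) (n : Euc N → Euc N) {A : Type}
    (b : Euc N → A → Euc N) : Set (Euc N) :=
  {x | x ∈ frontier Ω ∧ ∃ α₁ α₂ : A, ⟪b x α₁, n x⟫ < 0 ∧ 0 < ⟪b x α₂, n x⟫}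

/-- `S` is a union of connected components of `T`. -/
def IsUnionOfComponents (S T : Set (Euc N)) : Prop :=
  S ⊆ T ∧ ∀ x ∈ S, connectedComponentIn T x ⊆ S

/-- Assumption (B). -/
def AssumptionB (Ω : Set (Euc N)) (n : Euc N → Euc N) {A : Type}
    (b : Euc N → A → Euc N) : Prop :=
  GammaIn Ω n b ∪ GammaOut Ω n b ∪ GammaMix Ω n b = frontier Ω ∧
  IsUnionOfComponents (GammaIn Ω n b) (frontier Ω) ∧
  IsUnionOfComponents (GammaOut Ω n b) (frontier Ω) ∧
  IsUnionOfComponents (GammaMix Ω n b) (frontier Ω)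

/-- All the structural assumptions on a Bellman Hamiltonian: (C), (L), (B) together
with continuity and boundedness of the data. -/
def StatBellmanOK (Ω : Set (Euc N)) (n : Euc N → Euc N) {A : Type} [TopologicalSpace A]
    (b : Euc N → A → Euc N) (l : Euc N → A → ℝ) (H : Euc N → Euc N → ℝ) : Prop :=
  BellmanData b l ∧ IsBellman b l H ∧ AssumptionC Ω l ∧ AssumptionL Ω b ∧ AssumptionB Ω n b

/-- Assumption (H1): superfractional coercivity of order `m > σ`. -/
def AssumptionH1 (Ω : Set (Euc N)) (H : Euc N → Euc N → ℝ) (σ m c₀ D : ℝ) : Prop :=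
  σ < m ∧ 0 < c₀ ∧ 0 < D ∧ ∀ x ∈ closure Ω, ∀ p : Euc N, c₀ * ‖p‖ ^ m - D ≤ H x p

/-- Assumption (Ha) (sublinear case) with constant `C` and modulus `ω₁`. -/
def AssumptionHa (H : Euc N → Euc N → ℝ) (C : ℝ) (ω₁ : ℝ → ℝ) : Prop :=
  0 < C ∧ IsModulus ω₁ ∧
  ∀ x y p q : Euc N, H y p - H x q ≤ ω₁ ‖x - y‖ * (1 + ‖p‖) + C * ‖p - q‖

/-- Assumption (Hb) (superlinear case) with constants `m, A, Cb`. -/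
def AssumptionHb (H : Euc N → Euc N → ℝ) (m A Cb : ℝ) : Prop :=
  1 < m ∧ 0 < A ∧ 0 < Cb ∧
  ∀ μ ∈ Ioo (0:ℝ) 1, ∀ x p : Euc N,
    H x p - μ * H x (μ⁻¹ • p) ≤ (1 - μ) * (Cb * (1 - m) * ‖p‖ ^ m + A)

/-- Assumption (Hc) with constant `C` and modulus `ω₁`. -/
def AssumptionHc (H : Euc N → Euc N → ℝ) (m C : ℝ) (ω₁ : ℝ → ℝ) : Prop :=
  0 < C ∧ IsModulus ω₁ ∧
  ∀ x y p q : Euc N,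
    H y p - H x q ≤ ω₁ ‖x - y‖ * (1 + (max ‖p‖ ‖q‖) ^ m)
      + C * ‖p - q‖ * (max ‖p‖ ‖q‖) ^ (m - 1)

/-- The structural assumptions on a coercive Hamiltonian:
(H1), (Ha) (sublinear) or (H1), (Hb), (Hc) (superlinear). -/
def StatCoerciveOK (Ω : Set (Euc N)) (H : Euc N → Euc N → ℝ) (σ : ℝ) : Prop :=
  ∃ m c₀ D, AssumptionH1 Ω H σ m c₀ D ∧
    ((m ≤ 1 ∧ ∃ C ω₁, AssumptionHa H C ω₁) ∨
     (∃ A Cb, AssumptionHb H m A Cb ∧ ∃ C ω₁, AssumptionHc H m C ω₁))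

/-- Assumption (E). -/
def AssumptionE (Ω : Set (Euc N)) (H : Euc N → Euc N → ℝ) : Prop :=
  ∀ R > (0:ℝ), ∃ HR : ℝ, ∀ x ∈ closure Ω, ∀ p : Euc N, ‖p‖ ≤ R → |H x p| ≤ HR

/-! ### Parabolic Hamiltonians and assumptions -/

/-- `H(x,t,r,p)` is of (time-dependent) Bellman type. -/
def IsParBellman {A : Type} (lam : Euc N → ℝ → A → ℝ) (b : Euc N → ℝ → A → Euc N)
    (l : Euc N → ℝ → A → ℝ) (H : Euc N → ℝ → ℝ → Euc N → ℝ) : Prop :=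
  ∀ x t r p, H x t r p = ⨆ α : A, (lam x t α * r - ⟪b x t α, p⟫ - l x t α)

/-- Continuity and boundedness of the parabolic Bellman data. -/
def ParBellmanData {A : Type} [TopologicalSpace A] (lam : Euc N → ℝ → A → ℝ)
    (b : Euc N → ℝ → A → Euc N) (l : Euc N → ℝ → A → ℝ) : Prop :=
  Continuous (fun q : Euc N × ℝ × A => lam q.1 q.2.1 q.2.2) ∧
  (∃ M, ∀ x t α, |lam x t α| ≤ M) ∧
  Continuous (fun q : Euc N × ℝ × A => b q.1 q.2.1 q.2.2) ∧
  (∃ M, ∀ x t α, ‖b x t α‖ ≤ M) ∧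
  Continuous (fun q : Euc N × ℝ × A => l q.1 q.2.1 q.2.2) ∧
  (∃ M, ∀ x t α, |l x t α| ≤ M)

/-- Assumption (C'): uniform continuity of `l` and `λ` in `(x,t)`, uniformly in `α`. -/
def AssumptionC' (Ω : Set (Euc N)) {A : Type} (lam l : Euc N → ℝ → A → ℝ) : Prop :=
  (∃ ω, IsModulus ω ∧ ∀ (α : A), ∀ x ∈ closure Ω, ∀ y ∈ closure Ω,
      ∀ t ∈ Ici (0:ℝ), ∀ s ∈ Ici (0:ℝ), |l x t α - l y s α| ≤ ω (‖x - y‖ + |t - s|)) ∧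
  (∃ ω, IsModulus ω ∧ ∀ (α : A), ∀ x ∈ closure Ω, ∀ y ∈ closure Ω,
      ∀ t ∈ Ici (0:ℝ), ∀ s ∈ Ici (0:ℝ), |lam x t α - lam y s α| ≤ ω (‖x - y‖ + |t - s|))

/-- Assumption (L'): uniform Lipschitz continuity of the drift `b` in `(x,t)`. -/
def AssumptionL' (Ω : Set (Euc N)) {A : Type} (b : Euc N → ℝ → A → Euc N) : Prop :=
  ∃ C > (0:ℝ), ∀ (α : A), ∀ x ∈ closure Ω, ∀ y ∈ closure Ω, ∀ s ∈ Ici (0:ℝ), ∀ t ∈ Ici (0:ℝ),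
    ‖b x s α - b y t α‖ ≤ C * (‖x - y‖ + |s - t|)

/-- Inward part of the boundary for time-dependent drift. -/
def GammaInT (Ω : Set (Euc N)) (n : Euc N → Euc N) {A : Type}
    (b : Euc N → ℝ → A → Euc N) : Set (Euc N) :=
  {x | x ∈ frontier Ω ∧ ∀ t ∈ Ici (0:ℝ), ∀ α : A, ⟪b x t α, n x⟫ < 0}

/-- Outward part of the boundary for time-dependent drift. -/
def GammaOutT (Ω : Set (Euc N)) (n : Euc N → Euc N) {A : Type}
    (b : Euc N → ℝ → A → Euc N) : Set (Euc N) :=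
  {x | x ∈ frontier Ω ∧ ∀ t ∈ Ici (0:ℝ), ∀ α : A, 0 < ⟪b x t α, n x⟫}

/-- Mixed part of the boundary for time-dependent drift. -/
def GammaMixT (Ω : Set (Euc N)) (n : Euc N → Euc N) {A : Type}
    (b : Euc N → ℝ → A → Euc N) : Set (Euc N) :=
  {x | x ∈ frontier Ω ∧ ∀ t ∈ Ici (0:ℝ),
    ∃ α₁ α₂ : A, ⟪b x t α₁, n x⟫ < 0 ∧ 0 < ⟪b x t α₂, n x⟫}

/-- Assumption (B'). -/
def AssumptionB' (Ω : Set (Euc N)) (n : Euc N → Euc N) {A : Type}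
    (b : Euc N → ℝ → A → Euc N) : Prop :=
  GammaInT Ω n b ∪ GammaOutT Ω n b ∪ GammaMixT Ω n b = frontier Ω ∧
  IsUnionOfComponents (GammaInT Ω n b) (frontier Ω) ∧
  IsUnionOfComponents (GammaOutT Ω n b) (frontier Ω) ∧
  IsUnionOfComponents (GammaMixT Ω n b) (frontier Ω)

/-- All the structural assumptions on a parabolic Bellman Hamiltonian: (C'), (L'), (B'). -/
def ParBellmanOK (Ω : Set (Euc N)) (n : Euc N → Euc N) {A : Type} [TopologicalSpace A]
    (lam : Euc N → ℝ → A → ℝ) (b : Euc N → ℝ → A → Euc N) (l : Euc N → ℝ → A → ℝ)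
    (H : Euc N → ℝ → ℝ → Euc N → ℝ) : Prop :=
  ParBellmanData lam b l ∧ IsParBellman lam b l H ∧
  AssumptionC' Ω lam l ∧ AssumptionL' Ω b ∧ AssumptionB' Ω n b

/-- Assumption (H'): monotonicity of `H` in the `u` variable. -/
def AssumptionH' (Ω : Set (Euc N)) (H : Euc N → ℝ → ℝ → Euc N → ℝ) : Prop :=
  ∃ K : ℝ, ∀ R > (0:ℝ), ∃ γ, -K ≤ γ ∧
    ∀ x ∈ closure Ω, ∀ t ∈ Icc (0:ℝ) R, ∀ r s : ℝ, |r| ≤ R → |s| ≤ R → s ≤ r →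
      ∀ p : Euc N, γ * (r - s) ≤ H x t r p - H x t s p

/-- Assumption (H''): the monotonicity constants `γ_R` are bounded below by some `γ₀ > 0`. -/
def AssumptionH'' (Ω : Set (Euc N)) (H : Euc N → ℝ → ℝ → Euc N → ℝ) : Prop :=
  ∃ γ₀ > (0:ℝ), ∀ R > (0:ℝ), ∃ γ, γ₀ ≤ γ ∧
    ∀ x ∈ closure Ω, ∀ t ∈ Icc (0:ℝ) R, ∀ r s : ℝ, |r| ≤ R → |s| ≤ R → s ≤ r →
      ∀ p : Euc N, γ * (r - s) ≤ H x t r p - H x t s p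

/-- Assumption (E'). -/
def AssumptionE' (Ω : Set (Euc N)) (H : Euc N → ℝ → ℝ → Euc N → ℝ) : Prop :=
  ∀ T > (0:ℝ), ∀ R > (0:ℝ), ∃ HR : ℝ, ∀ x ∈ Ω, ∀ t ∈ Icc (0:ℝ) T, ∀ r : ℝ, ∀ p : Euc N,
    |r| ≤ R → ‖p‖ ≤ R → |H x t r p| ≤ HR

/-- Assumption (H0'): separated structure `H(x,t,r,p) = H₀(x,r,p) - f(x,t)`. -/
def AssumptionH0' (H : Euc N → ℝ → ℝ → Euc N → ℝ) : Prop :=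
  ∃ (H₀ : Euc N → ℝ → Euc N → ℝ) (f : Euc N → ℝ → ℝ),
    Continuous (fun q : Euc N × ℝ × Euc N => H₀ q.1 q.2.1 q.2.2) ∧
    UniformContinuous (fun q : Euc N × ℝ => f q.1 q.2) ∧
    (∃ M, ∀ x t, |f x t| ≤ M) ∧
    ∀ x t r p, H x t r p = H₀ x r p - f x t

/-- Assumption (He'): `H` satisfies (H1), (Ha) in `x`, uniformly in `t`
and uniformly on compact sets in `r` (sublinearly coercive case). -/
def AssumptionHe' (Ω : Set (Euc N)) (H : Euc N → ℝ → ℝ → Euc N → ℝ) (σ : ℝ) : Prop :=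
  ∃ m : ℝ, σ < m ∧ m ≤ 1 ∧
    ∀ R > (0:ℝ),
      (∃ c₀ > (0:ℝ), ∃ D > (0:ℝ), ∀ x ∈ closure Ω, ∀ t ∈ Ici (0:ℝ), ∀ r : ℝ, |r| ≤ R →
        ∀ p : Euc N, c₀ * ‖p‖ ^ m - D ≤ H x t r p) ∧
      (∃ C > (0:ℝ), ∃ ω₁, IsModulus ω₁ ∧ ∀ x y : Euc N, ∀ t ∈ Ici (0:ℝ), ∀ r : ℝ, |r| ≤ R →
        ∀ p q : Euc N, H y t r p - H x t r q ≤ ω₁ ‖x - y‖ * (1 + ‖p‖) + C * ‖p - q‖)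

/-- Assumption (He''): `H` satisfies (H1), (Hb), (Hc) in `x`, uniformly in `t`
and uniformly on compact sets in `r` (superlinearly coercive case, exponent `m`). -/
def AssumptionHe'' (Ω : Set (Euc N)) (H : Euc N → ℝ → ℝ → Euc N → ℝ) (σ m : ℝ) : Prop :=
  1 < m ∧ σ < m ∧
  ∀ R > (0:ℝ),
    (∃ c₀ > (0:ℝ), ∃ D > (0:ℝ), ∀ x ∈ closure Ω, ∀ t ∈ Ici (0:ℝ), ∀ r : ℝ, |r| ≤ R →
      ∀ p : Euc N, c₀ * ‖p‖ ^ m - D ≤ H x t r p) ∧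
    (∃ A > (0:ℝ), ∃ Cb > (0:ℝ), ∀ μ ∈ Ioo (0:ℝ) 1, ∀ x ∈ closure Ω, ∀ t ∈ Ici (0:ℝ),
      ∀ r : ℝ, |r| ≤ R → ∀ p : Euc N,
        H x t r p - μ * H x t r (μ⁻¹ • p) ≤ (1 - μ) * (Cb * (1 - m) * ‖p‖ ^ m + A)) ∧
    (∃ C > (0:ℝ), ∃ ω₁, IsModulus ω₁ ∧ ∀ x y : Euc N, ∀ t ∈ Ici (0:ℝ), ∀ r : ℝ, |r| ≤ R →
      ∀ p q : Euc N, H y t r p - H x t r q ≤ ω₁ ‖x - y‖ * (1 + (max ‖p‖ ‖q‖) ^ m)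
        + C * ‖p - q‖ * (max ‖p‖ ‖q‖) ^ (m - 1))

/-- Structural parabolic coercive assumptions: (H0') and (He') or (He''). -/
def ParCoerciveOK (Ω : Set (Euc N)) (H : Euc N → ℝ → ℝ → Euc N → ℝ) (σ : ℝ) : Prop :=
  AssumptionH0' H ∧ (AssumptionHe' Ω H σ ∨ ∃ m, AssumptionHe'' Ω H σ m)

/-! ### Iterative covering property -/

/-- The iterated reachable sets `X_r(x)` of the censored jump process. -/
def Xiter (Ω : Set (Euc N)) (j : Euc N → Euc N → Euc N) (g : Euc N → Euc N → ℝ)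
    (x : Euc N) : ℕ → Set (Euc N)
  | 0 => {x}
  | r + 1 => (⋃ ξ ∈ Xiter Ω j g x r,
      (fun z => ξ + j ξ z) '' closure (Function.support (g ξ))) ∩ closure Ω

/-- Iterative covering property: `𝒳(x) = Ω` (i.e. the closure of the reachable set
is all of `closure Ω`) for every `x ∈ Ω`. -/
def CoveringProperty (Ω : Set (Euc N)) (j : Euc N → Euc N → Euc N)
    (g : Euc N → Euc N → ℝ) : Prop :=
  ∀ x ∈ Ω, closure (⋃ r : ℕ, Xiter Ω j g x r) = closure Ω


/-- Radial integrals of the singular kernel. -/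
theorem exists_radial_const (hN : 0 < N) {σ : ℝ} (h0 : 0 < σ) (h1 : σ < 1) :
    ∃ c > (0:ℝ), ∀ ξ > (0:ℝ),
      (IntegrableOn (fun z : Euc N => ‖z‖ * ‖z‖ ^ (-((N:ℝ) + σ))) {z | ‖z‖ < ξ} ∧
        ∫ z in {z : Euc N | ‖z‖ < ξ}, ‖z‖ * ‖z‖ ^ (-((N:ℝ) + σ)) ≤ c * ξ ^ (1 - σ)) ∧
      (IntegrableOn (fun z : Euc N => ‖z‖ ^ (-((N:ℝ) + σ))) {z | ξ ≤ ‖z‖} ∧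
        ∫ z in {z : Euc N | ξ ≤ ‖z‖}, ‖z‖ ^ (-((N:ℝ) + σ)) ≤ c * ξ ^ (-σ)) := by
  have : Nonempty (Fin N) := ⟨⟨0, hN⟩⟩
  have : Nontrivial (Euc N) := inferInstance
  set κ : ℝ := (N : ℝ) * (volume : Measure (Euc N)).real (ball 0 1) with hκ
  have hκ0 : 0 ≤ κ := by positivity
  have hdim : Module.finrank ℝ (Euc N) = N := by simp
  have hNr : ((N - 1 : ℕ) : ℝ) = (N : ℝ) - 1 := by
    rw [Nat.cast_sub hN]; simp
  have hσ1 : 0 < 1 - σ := by linarith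
  refine ⟨κ / (1 - σ) + κ / σ + 1, by positivity, fun ξ hξ => ⟨?_, ?_⟩⟩
  · set f : ℝ → ℝ := (Iio ξ).indicator (fun y => y * y ^ (-((N:ℝ) + σ))) with hf
    have hset : MeasurableSet {z : Euc N | ‖z‖ < ξ} := measurableSet_lt measurable_norm measurable_const
    have e1 : ∀ z : Euc N, f ‖z‖ = {z : Euc N | ‖z‖ < ξ}.indicator
        (fun z : Euc N => ‖z‖ * ‖z‖ ^ (-((N:ℝ) + σ))) z := by
      intro z; simp [hf, indicator]
    have e2 : ∀ y ∈ Ioi (0:ℝ), y ^ (N - 1) • f y = (Iio ξ).indicator (fun y => y ^ (-σ)) y := by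
      intro y hy
      have hy' : (0:ℝ) < y := hy
      by_cases hyx : y < ξ
      · simp only [hf, indicator, mem_Iio, hyx, if_true, smul_eq_mul]
        rw [← Real.rpow_natCast y (N-1), hNr]
        nth_rewrite 2 [← Real.rpow_one y]
        rw [← Real.rpow_add hy', ← Real.rpow_add hy']
        congr 1; ring
      · simp [hf, indicator, hyx]
    have hI : Integrable (fun y : ℝ => (Iio ξ).indicator (fun y => y ^ (-σ)) y) (volume.restrict (Ioi 0)) := by
      rw [integrable_indicator_iff measurableSet_Iio, IntegrableOn, Measure.restrict_restrict measurableSet_Iio]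
      have : Iio ξ ∩ Ioi 0 = Ioo 0 ξ := by ext; simp [and_comm]
      rw [this]
      have := (intervalIntegral.intervalIntegrable_rpow' (a := 0) (b := ξ) (r := -σ) (by linarith))
      exact ((intervalIntegrable_iff_integrableOn_Ioc_of_le hξ.le).mp this).mono_set Ioo_subset_Ioc_self
    constructor
    · rw [← integrable_indicator_iff hset]
      have := (integrable_fun_norm_addHaar (volume : Measure (Euc N)) (f := f)).2 (by
        rw [hdim]
        exact (integrableOn_congr_fun e2 measurableSet_Ioi).2 hI)
      exact this.congr (ae_of_all _ e1)
    · rw [← integral_indicator hset, ← integral_congr_ae (ae_of_all _ e1),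
        integral_fun_norm_addHaar (volume : Measure (Euc N)) f, hdim,
        setIntegral_congr_fun measurableSet_Ioi e2, integral_indicator measurableSet_Iio,
        Measure.restrict_restrict measurableSet_Iio]
      have : Iio ξ ∩ Ioi 0 = Ioo 0 ξ := by ext; simp [and_comm]
      rw [this, ← integral_Ioc_eq_integral_Ioo, ← intervalIntegral.integral_of_le hξ.le,
        integral_rpow (Or.inl (by linarith)), Real.zero_rpow (by linarith)]
      rw [nsmul_eq_mul, smul_eq_mul, ← mul_assoc, ← hκ, show -σ + 1 = 1 - σ by ring]
      have : 0 ≤ ξ ^ (1 - σ) := by positivity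
      have h3 : 0 ≤ κ / σ := by positivity
      have : κ * ((ξ ^ (1 - σ) - 0) / (1 - σ)) = κ / (1 - σ) * ξ ^ (1 - σ) := by ring
      rw [this]
      gcongr
      linarith
  · set f : ℝ → ℝ := (Ici ξ).indicator (fun y => y ^ (-((N:ℝ) + σ))) with hf
    have hset : MeasurableSet {z : Euc N | ξ ≤ ‖z‖} := measurableSet_le measurable_const measurable_norm
    have e1 : ∀ z : Euc N, f ‖z‖ = {z : Euc N | ξ ≤ ‖z‖}.indicator
        (fun z : Euc N => ‖z‖ ^ (-((N:ℝ) + σ))) z := by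
      intro z; simp [hf, indicator]
    have e2 : ∀ y ∈ Ioi (0:ℝ), y ^ (N - 1) • f y = (Ici ξ).indicator (fun y => y ^ (-1-σ)) y := by
      intro y hy
      have hy' : (0:ℝ) < y := hy
      by_cases hyx : ξ ≤ y
      · simp only [hf, indicator, mem_Ici, hyx, if_true, smul_eq_mul]
        rw [← Real.rpow_natCast y (N-1), hNr]
        rw [← Real.rpow_add hy']
        congr 1; ring
      · simp [hf, indicator, hyx]
    have hss : Ici ξ ∩ Ioi 0 = Ici ξ := by
      ext y; simp; intro h; linarith
    have hI : Integrable (fun y : ℝ => (Ici ξ).indicator (fun y => y ^ (-1-σ)) y) (volume.restrict (Ioi 0)) := by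
      rw [integrable_indicator_iff measurableSet_Ici, IntegrableOn, Measure.restrict_restrict measurableSet_Ici]
      rw [hss]
      exact (integrableOn_Ici_iff_integrableOn_Ioi (by simp)).2 (integrableOn_Ioi_rpow_of_lt (by linarith) hξ)
    constructor
    · rw [← integrable_indicator_iff hset]
      have := (integrable_fun_norm_addHaar (volume : Measure (Euc N)) (f := f)).2 (by
        rw [hdim]
        exact (integrableOn_congr_fun e2 measurableSet_Ioi).2 hI)
      exact this.congr (ae_of_all _ e1)
    · rw [← integral_indicator hset, ← integral_congr_ae (ae_of_all _ e1),
        integral_fun_norm_addHaar (volume : Measure (Euc N)) f, hdim,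
        setIntegral_congr_fun measurableSet_Ioi e2, integral_indicator measurableSet_Ici,
        Measure.restrict_restrict measurableSet_Ici]
      rw [hss, integral_Ici_eq_integral_Ioi,
        integral_Ioi_rpow_of_lt (by linarith) hξ]
      rw [nsmul_eq_mul, smul_eq_mul, ← mul_assoc, ← hκ, show -1 - σ + 1 = - σ by ring]
      have : 0 ≤ ξ ^ (- σ) := by positivity
      have h3 : 0 ≤ κ / (1 - σ) := by positivity
      have : κ * (-ξ ^ (-σ) / -σ) = κ / σ * ξ ^ (-σ) := by
        rw [neg_div_neg_eq]; ring
      rw [this]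
      gcongr
      linarith



theorem grad_add {f h : Euc N → ℝ} {a b x : Euc N} (hf : HasGradientAt f a x)
    (hh : HasGradientAt h b x) : HasGradientAt (fun y => f y + h y) (a + b) x := by
  rw [hasGradientAt_iff_hasFDerivAt] at *
  rw [map_add]; exact hf.add hh

theorem grad_sub {f h : Euc N → ℝ} {a b x : Euc N} (hf : HasGradientAt f a x)
    (hh : HasGradientAt h b x) : HasGradientAt (fun y => f y - h y) (a - b) x := by
  rw [hasGradientAt_iff_hasFDerivAt] at *
  rw [map_sub]; exact hf.sub hh

theorem grad_mul {f : Euc N → ℝ} {a x : Euc N} (c : ℝ) (hf : HasGradientAt f a x) :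
    HasGradientAt (fun y => c * f y) (c • a) x := by
  rw [hasGradientAt_iff_hasFDerivAt] at *
  have : (InnerProductSpace.toDual ℝ (Euc N)) (c • a) = c • (InnerProductSpace.toDual ℝ (Euc N)) a := by
    simp
  rw [this]; exact hf.const_mul c

theorem grad_neg {f : Euc N → ℝ} {a x : Euc N} (hf : HasGradientAt f a x) :
    HasGradientAt (fun y => - f y) (- a) x := by
  have := grad_mul (-1) hf
  simpa using this

/-- chain rule with a real function -/
theorem grad_comp {f : Euc N → ℝ} {a x : Euc N} {F : ℝ → ℝ} {F' : ℝ} (hF : HasDerivAt F F' (f x))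
    (hf : HasGradientAt f a x) : HasGradientAt (fun y => F (f y)) (F' • a) x := by
  rw [hasGradientAt_iff_hasFDerivAt] at *
  have : (InnerProductSpace.toDual ℝ (Euc N)) (F' • a) = F' • (InnerProductSpace.toDual ℝ (Euc N)) a := by
    simp
  rw [this]; exact hF.comp_hasFDerivAt x hf

theorem grad_normsq (c x : Euc N) :
    HasGradientAt (fun y : Euc N => ‖y - c‖ ^ 2) ((2:ℝ) • (x - c)) x := by
  rw [hasGradientAt_iff_hasFDerivAt]
  have h := ((hasFDerivAt_id x).sub_const c).norm_sq
  refine h.congr_fderiv ?_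
  ext z
  simp

theorem cd_normsq (c : Euc N) : ContDiff ℝ 1 (fun y : Euc N => ‖y - c‖ ^ 2) :=
  (contDiff_id.sub contDiff_const).norm_sq ℝ

/-- Regularised distance. -/
def sq (τ : ℝ) (x : Euc N) : ℝ := √(‖x‖ ^ 2 + τ ^ 2)

theorem sq_pos {τ : ℝ} (hτ : 0 < τ) (x : Euc N) : 0 < sq τ x :=
  Real.sqrt_pos.2 (by positivity)

theorem sq_sq (τ : ℝ) (x : Euc N) : sq τ x ^ 2 = ‖x‖ ^ 2 + τ ^ 2 :=
  Real.sq_sqrt (by positivity)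

theorem sq_zero {τ : ℝ} (hτ : 0 < τ) : sq τ (0 : Euc N) = τ := by
  simp [sq, Real.sqrt_sq hτ.le]

theorem norm_le_sq (τ : ℝ) (x : Euc N) : ‖x‖ ≤ sq τ x :=
  Real.le_sqrt_of_sq_le (by nlinarith [sq_nonneg τ])

theorem sq_le {τ : ℝ} (hτ : 0 < τ) (x : Euc N) : sq τ x ≤ ‖x‖ + τ :=
  Real.sqrt_le_iff.2 ⟨by positivity, by nlinarith [norm_nonneg x]⟩

theorem sq_neg (τ : ℝ) (x : Euc N) : sq τ (-x) = sq τ x := by simp [sq]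

theorem sq_lip {τ : ℝ} (hτ : 0 < τ) (x y : Euc N) : sq τ x - sq τ y ≤ ‖x - y‖ := by
  have h1 := sq_sq τ x
  have h2 := sq_sq τ y
  have h3 := norm_le_sq τ x
  have h4 := norm_le_sq τ y
  have h5 := sq_pos hτ x
  have h6 := sq_pos hτ y
  have h7 : ‖x‖ - ‖y‖ ≤ ‖x - y‖ := norm_sub_norm_le x y
  by_contra hcon
  push Not at hcon
  have h8 := norm_nonneg (x - y)
  have h9 : (sq τ x - sq τ y) * (sq τ x + sq τ y) = (‖x‖ - ‖y‖) * (‖x‖ + ‖y‖) := by nlinarith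
  have h10 : (‖x‖ - ‖y‖) * (‖x‖ + ‖y‖) ≤ ‖x - y‖ * (sq τ x + sq τ y) := by
    apply mul_le_mul h7 (by linarith) (by positivity) h8
  have : ‖x - y‖ * (sq τ x + sq τ y) < (sq τ x - sq τ y) * (sq τ x + sq τ y) :=
    mul_lt_mul_of_pos_right hcon (by positivity)
  linarith

theorem sq_lip_abs {τ : ℝ} (hτ : 0 < τ) (x y : Euc N) : |sq τ x - sq τ y| ≤ ‖x - y‖ := by
  rw [abs_le]
  constructor
  · have := sq_lip hτ y x
    rw [norm_sub_rev] at this; linarith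
  · exact sq_lip hτ x y

theorem sq_grad {τ : ℝ} (hτ : 0 < τ) (c x : Euc N) :
    HasGradientAt (fun y => sq τ (y - c)) ((sq τ (x - c))⁻¹ • (x - c)) x := by
  have h1 : HasGradientAt (fun y : Euc N => ‖y - c‖ ^ 2 + τ ^ 2) ((2:ℝ) • (x - c) + 0) x :=
    grad_add (grad_normsq c x) (hasGradientAt_const x (τ ^ 2))
  have hp : ‖x - c‖ ^ 2 + τ ^ 2 ≠ 0 := by positivity
  have h2 := grad_comp (Real.hasDerivAt_sqrt hp) h1
  have e : (1 / (2 * √(‖x - c‖ ^ 2 + τ ^ 2))) • ((2:ℝ) • (x - c) + 0)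
      = (sq τ (x - c))⁻¹ • (x - c) := by
    rw [add_zero, smul_smul]; congr 1; unfold sq
    have : √(‖x - c‖ ^ 2 + τ ^ 2) ≠ 0 := (sq_pos hτ (x - c)).ne'
    field_simp
  rw [e] at h2
  exact h2

theorem sq_cd {τ : ℝ} (hτ : 0 < τ) (c : Euc N) : ContDiff ℝ 1 (fun y => sq τ (y - c)) := by
  unfold sq
  exact ((cd_normsq c).add contDiff_const).sqrt (fun x => by positivity)

/-- The localising bump. -/
theorem bump_grad (c x : Euc N) : HasGradientAt (fun y : Euc N => (1 + ‖y - c‖ ^ 2)⁻¹)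
    ((-((1 + ‖x - c‖ ^ 2) ^ 2)⁻¹) • ((2:ℝ) • (x - c))) x := by
  have h1 : HasGradientAt (fun y : Euc N => 1 + ‖y - c‖ ^ 2) (0 + (2:ℝ) • (x - c)) x :=
    grad_add (hasGradientAt_const x (1:ℝ)) (grad_normsq c x)
  rw [zero_add] at h1
  exact grad_comp (hasDerivAt_inv (by positivity : (1 + ‖x - c‖ ^ 2) ≠ 0)) h1

theorem bump_cd (c : Euc N) : ContDiff ℝ 1 (fun y : Euc N => (1 + ‖y - c‖ ^ 2)⁻¹) :=
  (contDiff_const.add (cd_normsq c)).inv (fun x => by positivity)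

theorem bump_grad_norm (c x : Euc N) :
    ‖(-((1 + ‖x - c‖ ^ 2) ^ 2)⁻¹) • ((2:ℝ) • (x - c))‖ ≤ 1 := by
  rw [norm_smul, norm_smul, norm_neg, norm_inv, norm_pow, Real.norm_of_nonneg (by positivity : 0 ≤ 1 + ‖x - c‖ ^ 2)]
  rw [inv_mul_le_iff₀ (by positivity)]
  simp only [Real.norm_ofNat]
  nlinarith [sq_nonneg (‖x - c‖ - 1), sq_nonneg (‖x-c‖^2), norm_nonneg (x - c)]

/-- gradient bound implies Lipschitz bound -/
theorem lip_of_grad {f : Euc N → ℝ} {G : Euc N → Euc N} {K : ℝ}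
    (hG : ∀ x, HasGradientAt f (G x) x) (hK : ∀ x, ‖G x‖ ≤ K) (x y : Euc N) :
    |f x - f y| ≤ K * ‖x - y‖ := by
  have := (convex_univ : Convex ℝ (univ : Set (Euc N))).norm_image_sub_le_of_norm_hasFDerivWithin_le
    (f := f) (f' := fun x => InnerProductSpace.toDual ℝ (Euc N) (G x)) (C := K)
    (fun x _ => (hG x).hasFDerivAt.hasFDerivWithinAt) (fun x _ => by simpa using hK x)
    (mem_univ y) (mem_univ x)
  simpa using this



theorem sdist_lip (Ω : Set (Euc N)) : LipschitzWith 2 (sdist Ω) := by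
  have h1 := lipschitz_infDist_pt (Ωᶜ)
  have h2 := lipschitz_infDist_pt Ω
  have := h1.sub h2
  have e : (1 + 1 : ℝ≥0) = 2 := by norm_num
  rw [e] at this
  exact this

theorem sdist_frontier {Ω : Set (Euc N)} {x : Euc N} (hx : x ∈ frontier Ω) : sdist Ω x = 0 := by
  have h1 : x ∈ closure Ω := frontier_subset_closure hx
  have h2 : x ∈ closure Ωᶜ := by
    rw [← frontier_compl] at hx; exact frontier_subset_closure hx
  simp [sdist, infDist_zero_of_mem_closure h1, infDist_zero_of_mem_closure h2]

theorem sdist_closure {Ω : Set (Euc N)} {x : Euc N} (hx : x ∈ closure Ω) : 0 ≤ sdist Ω x := by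
  simp [sdist, infDist_zero_of_mem_closure hx, infDist_nonneg]

/-- The chart gives a `C^{1,1}` signed distance. -/
theorem chart_sdist {hN : 0 < N} {Ω : Set (Euc N)} {s : Euc N} {r : ℝ} {ψ ψinv : Euc N → Euc N}
    (h : IsW2Chart hN Ω s r ψ ψinv) :
    ContDiffOn ℝ 1 (sdist Ω) (ball s r) ∧ ∃ C ≥ (0:ℝ), ∀ x ∈ ball s r, ∀ y ∈ ball s r,
      ‖fderiv ℝ (sdist Ω) x - fderiv ℝ (sdist Ω) y‖ ≤ C * ‖x - y‖ := by
  obtain ⟨hr, hψ, ⟨L, hL⟩, -, -, -, hd⟩ := h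
  set i : Fin N := ⟨N - 1, Nat.sub_lt hN Nat.one_pos⟩ with hi
  set pr : Euc N →L[ℝ] ℝ := EuclideanSpace.proj i with hpr
  have h1 : ContDiffOn ℝ 1 (fun x => pr (ψ x)) (ball s r) := pr.contDiff.comp_contDiffOn hψ
  have heq : ∀ x ∈ ball s r, sdist Ω x = pr (ψ x) := fun x hx => (hd x hx).symm
  have hcd : ContDiffOn ℝ 1 (sdist Ω) (ball s r) := h1.congr heq
  have hfd : ∀ x ∈ ball s r, fderiv ℝ (sdist Ω) x = pr.comp (fderiv ℝ ψ x) := by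
    intro x hx
    have hev : sdist Ω =ᶠ[𝓝 x] fun x => pr (ψ x) := by
      filter_upwards [isOpen_ball.mem_nhds hx] with y hy using heq y hy
    rw [hev.fderiv_eq]
    have hdiff : DifferentiableAt ℝ ψ x :=
      (hψ.contDiffAt (isOpen_ball.mem_nhds hx)).differentiableAt (by norm_num)
    exact (pr.hasFDerivAt.comp x hdiff.hasFDerivAt).fderiv
  refine ⟨hcd, ‖pr‖ * L, by positivity, fun x hx y hy => ?_⟩
  rw [hfd x hx, hfd y hy, ← ContinuousLinearMap.comp_sub]
  have h2 := hL.dist_le_mul x hx y hy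
  rw [dist_eq_norm, dist_eq_norm] at h2
  calc _ ≤ ‖pr‖ * ‖fderiv ℝ ψ x - fderiv ℝ ψ y‖ := ContinuousLinearMap.opNorm_comp_le _ _
    _ ≤ ‖pr‖ * (L * ‖x - y‖) := by gcongr
    _ = _ := by ring

/-- Exterior normal at boundary points: quadratic estimate. -/
theorem geo_normal {hN : 0 < N} {Ω : Set (Euc N)} (hΩ : IsW2Domain hN Ω)
    {n : Euc N → Euc N} (hn : IsExteriorNormal Ω n) {xb : Euc N} (hxb : xb ∈ closure Ω) :
    ∃ r > (0:ℝ), ∃ C ≥ (0:ℝ), ∀ x ∈ frontier Ω, x ∈ ball xb r → ∀ y ∈ closure Ω, y ∈ ball xb r →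
      -(C * ‖x - y‖ ^ 2) ≤ ⟪x - y, n x⟫ := by
  by_cases hin : xb ∈ Ω
  · obtain ⟨r, hr, hball⟩ := Metric.isOpen_iff.1 hΩ.1 xb hin
    refine ⟨r, hr, 0, le_rfl, fun x hx hxr => ?_⟩
    exact absurd (hball hxr) (by rw [hΩ.1.frontier_eq] at hx; exact hx.2)
  · have hfr : xb ∈ frontier Ω := by rw [hΩ.1.frontier_eq]; exact ⟨hxb, hin⟩
    obtain ⟨r, ψ, ψinv, hch⟩ := hΩ.2 xb hfr
    obtain ⟨hcd, C, hC, hlip⟩ := chart_sdist hch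
    refine ⟨r, hch.1, C, hC, fun x hx hxr y hy hyr => ?_⟩
    have hseg : segment ℝ x y ⊆ ball xb r := (convex_ball xb r).segment_subset hxr hyr
    have key := (convex_segment x y).norm_image_sub_le_of_norm_fderiv_le' (𝕜 := ℝ) (f := sdist Ω)
      (φ := fderiv ℝ (sdist Ω) x) (C := C * ‖x - y‖)
      (fun z hz => (hcd.contDiffAt (isOpen_ball.mem_nhds (hseg hz))).differentiableAt (by norm_num))
      (fun z hz => by
        refine (hlip z (hseg hz) x hxr).trans ?_
        have : ‖z - x‖ ≤ ‖x - y‖ := by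
          have := norm_sub_le_of_mem_segment hz
          rwa [norm_sub_rev y x] at this
        gcongr)
      (left_mem_segment ℝ x y) (right_mem_segment ℝ x y)
    have hgr : fderiv ℝ (sdist Ω) x = InnerProductSpace.toDual ℝ (Euc N) (-(n x)) :=
      (hn x hx).2.hasFDerivAt.fderiv
    rw [hgr, sdist_frontier hx] at key
    have h0 := sdist_closure hy
    rw [Real.norm_eq_abs, abs_le] at key
    have h2 := key.2
    simp only [InnerProductSpace.toDual_apply_apply, inner_neg_left] at h2
    have e : ⟪n x, y - x⟫ = - ⟪x - y, n x⟫ := by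
      rw [real_inner_comm, ← inner_neg_left, neg_sub]
    rw [e, norm_sub_rev y x] at h2
    nlinarith

/-- A small `C^1` function whose gradient is the interior normal on a compact part of `∂Ω`. -/
theorem geo_h {hN : 0 < N} {Ω : Set (Euc N)} (hΩ : IsW2Domain hN Ω)
    {n : Euc N → Euc N} (hn : IsExteriorNormal Ω n) (x₀ : Euc N) (R : ℝ) {s₀ : ℝ} (hs₀ : 0 < s₀) :
    ∃ h : Euc N → ℝ, ContDiff ℝ 1 h ∧ (∀ x, |h x| ≤ s₀) ∧
      (∀ x, ‖gradient h x‖ ≤ 3) ∧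
      (∀ x ∈ frontier Ω, x ∈ closedBall x₀ R → gradient h x = - n x) := by
  set U : Set (Euc N) := {x | ∃ V, IsOpen V ∧ x ∈ V ∧ ContDiffOn ℝ 1 (sdist Ω) V} with hU
  have hUo : IsOpen U := by
    rw [isOpen_iff_mem_nhds]
    rintro x ⟨V, hV, hxV, hc⟩
    filter_upwards [hV.mem_nhds hxV] with y hy
    exact ⟨V, hV, hy, hc⟩
  have hUat : ∀ x ∈ U, ContDiffAt ℝ 1 (sdist Ω) x := by
    rintro x ⟨V, hV, hxV, hc⟩
    exact hc.contDiffAt (hV.mem_nhds hxV)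
  set K := frontier Ω ∩ closedBall x₀ R with hK
  have hKc : IsCompact K := (isCompact_closedBall x₀ R).inter_left isClosed_frontier
  have hKU : K ⊆ U := by
    rintro x ⟨hx, -⟩
    obtain ⟨r, ψ, ψinv, hch⟩ := hΩ.2 x hx
    exact ⟨ball x r, isOpen_ball, mem_ball_self hch.1, (chart_sdist hch).1⟩
  obtain ⟨K', hK'c, hKK', hK'U⟩ := exists_compact_between hKc hUo hKU
  obtain ⟨f, hf1, hf0, hf01⟩ := exists_contMDiffMap_one_nhds_of_subset_interior
    (n := 1) (modelWithCornersSelf ℝ (Euc N)) hKc.isClosed hKK'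
  have hfcd : ContDiff ℝ 1 f := f.contMDiff.contDiff
  have hfz : ∀ x ∉ K', (f : Euc N → ℝ) =ᶠ[𝓝 x] fun _ => 0 := by
    intro x hx
    filter_upwards [hK'c.isClosed.isOpen_compl.mem_nhds hx] with y hy using hf0 y hy
  have hB : ∃ B, ∀ x, ‖fderiv ℝ f x‖ ≤ B := by
    obtain ⟨B, hB⟩ := hK'c.exists_bound_of_continuousOn
      (hfcd.continuous_fderiv (by norm_num)).continuousOn
    refine ⟨max B 0, fun x => ?_⟩
    by_cases hx : x ∈ K'
    · exact (hB x hx).trans (le_max_left _ _)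
    · rw [(hfz x hx).fderiv_eq]; simp
  obtain ⟨B, hB⟩ := hB
  have hB0 : 0 ≤ B := (norm_nonneg _).trans (hB x₀)
  set s : ℝ := min s₀ (1 / (B + 1)) with hs
  have hspos : 0 < s := lt_min hs₀ (by positivity)
  have hsB : s * B ≤ 1 := by
    have : s ≤ 1 / (B + 1) := min_le_right _ _
    calc s * B ≤ 1 / (B + 1) * (B + 1) := by gcongr; linarith
      _ = 1 := by field_simp
  set T : Euc N → ℝ := fun x => s * Real.sin (sdist Ω x / s) with hT
  have hTb : ∀ x, |T x| ≤ s := by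
    intro x
    rw [hT]; simp only [abs_mul, abs_of_pos hspos]
    have := Real.abs_sin_le_one (sdist Ω x / s)
    nlinarith
  have hTcd : ∀ x ∈ U, ContDiffAt ℝ 1 T x := by
    intro x hx
    exact contDiffAt_const.mul (((hUat x hx).div_const s).sin)
  have hTder : ∀ x, ∀ a : Euc N, HasGradientAt (sdist Ω) a x →
      HasGradientAt T (Real.cos (sdist Ω x / s) • a) x := by
    intro x a ha
    have hd : HasDerivAt (fun t => s * Real.sin (t / s)) (Real.cos (sdist Ω x / s)) (sdist Ω x) := by
      have := ((Real.hasDerivAt_sin (sdist Ω x / s)).comp (sdist Ω x)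
        ((hasDerivAt_id (sdist Ω x)).div_const s)).const_mul s
      refine this.congr_deriv ?_
      field_simp
    exact grad_comp (f := sdist Ω) hd ha
  refine ⟨fun x => f x * T x, ?_, ?_, ?_, ?_⟩
  · rw [contDiff_iff_contDiffAt]
    intro x
    by_cases hx : x ∈ K'
    · exact hfcd.contDiffAt.mul (hTcd x (hK'U hx))
    · refine (contDiffAt_const (c := (0:ℝ))).congr_of_eventuallyEq ?_
      filter_upwards [hfz x hx] with y hy
      simp [hy]
  · intro x
    rw [abs_mul, abs_of_nonneg (hf01 x).1]
    calc f x * |T x| ≤ 1 * s := mul_le_mul (hf01 x).2 (hTb x) (abs_nonneg _) zero_le_one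
      _ ≤ s₀ := by rw [one_mul]; exact min_le_left _ _
  · intro x
    by_cases hx : x ∈ K'
    · have hda : DifferentiableAt ℝ (sdist Ω) x := (hUat x (hK'U hx)).differentiableAt (by norm_num)
      have h1 := (hTder x _ hda.hasGradientAt).hasFDerivAt
      have h2 : DifferentiableAt ℝ f x := hfcd.contDiffAt.differentiableAt (by norm_num)
      have h3 := h2.hasFDerivAt.mul h1
      have hg : ‖gradient (fun x => f x * T x) x‖ = ‖fderiv ℝ (fun x => f x * T x) x‖ := by
        unfold gradient; simp
      have h3' : fderiv ℝ (fun x => f x * T x) x = _ := h3.fderiv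
      rw [hg, h3']
      have hsd : ‖gradient (sdist Ω) x‖ ≤ 2 := by
        have : ‖fderiv ℝ (sdist Ω) x‖ ≤ (2:ℝ≥0) := norm_fderiv_le_of_lipschitz ℝ (sdist_lip Ω)
        unfold gradient; simpa using this
      calc _ ≤ ‖f x • InnerProductSpace.toDual ℝ (Euc N) (Real.cos (sdist Ω x / s) • gradient (sdist Ω) x)‖
            + ‖T x • fderiv ℝ f x‖ := norm_add_le _ _
        _ = |f x| * (|Real.cos (sdist Ω x / s)| * ‖gradient (sdist Ω) x‖) + |T x| * ‖fderiv ℝ f x‖ := by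
            rw [norm_smul, norm_smul, LinearIsometryEquiv.norm_map, norm_smul]; simp
        _ ≤ 1 * (1 * 2) + s * B := by
            gcongr
            · rw [abs_of_nonneg (hf01 x).1]; exact (hf01 x).2
            · exact Real.abs_cos_le_one _
            · exact hTb x
            · exact hB x
        _ ≤ 3 := by linarith
    · have : (fun x => f x * T x) =ᶠ[𝓝 x] fun _ => 0 := by
        filter_upwards [hfz x hx] with y hy
        simp [hy]
      unfold gradient
      rw [this.fderiv_eq]; simp
  · intro x hx hxR
    have h1 := hTder x _ (hn x hx).2
    rw [sdist_frontier hx] at h1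
    simp only [zero_div, Real.cos_zero, one_smul] at h1
    have hev : (fun x => f x * T x) =ᶠ[𝓝 x] T := by
      have : ∀ᶠ y in 𝓝 x, f y = 1 := (eventually_nhdsSet_iff_forall.1 hf1) x ⟨hx, hxR⟩
      filter_upwards [this] with y hy
      simp [hy]
    exact (h1.congr_of_eventuallyEq hev).gradient

/-- The boundary is Lebesgue-null. -/
theorem frontier_null {hN : 0 < N} {Ω : Set (Euc N)} (hΩ : IsW2Domain hN Ω) :
    volume (frontier Ω) = 0 := by
  apply measure_null_of_locally_null
  intro x hx
  obtain ⟨r, ψ, ψinv, hch⟩ := hΩ.2 x hx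
  obtain ⟨hr, hψ, -, hψi, -, hinv, hd⟩ := hch
  refine ⟨frontier Ω ∩ ball x r, inter_mem_nhdsWithin _ (ball_mem_nhds x hr), ?_⟩
  set i : Fin N := ⟨N - 1, Nat.sub_lt hN Nat.one_pos⟩ with hi
  set Z : Set (Euc N) := ψ '' (frontier Ω ∩ ball x r) with hZ
  have hZ0 : volume Z = 0 := by
    have hsub : Z ⊆ ((LinearMap.ker (EuclideanSpace.proj i : Euc N →L[ℝ] ℝ).toLinearMap : Submodule ℝ (Euc N)) : Set (Euc N)) := by
      rintro _ ⟨y, ⟨hy, hyr⟩, rfl⟩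
      have := hd y hyr
      rw [sdist_frontier hy] at this
      simpa using this
    refine measure_mono_null hsub ?_
    apply Measure.addHaar_submodule
    intro htop
    have : (EuclideanSpace.single i (1:ℝ) : Euc N) ∈ (LinearMap.ker (EuclideanSpace.proj i : Euc N →L[ℝ] ℝ).toLinearMap : Submodule ℝ (Euc N)) := by
      rw [htop]; trivial
    simp at this
  have himg : frontier Ω ∩ ball x r ⊆ ψinv '' Z := by
    intro y hy
    exact ⟨ψ y, ⟨y, hy, rfl⟩, hinv y hy.2⟩
  refine measure_mono_null himg ?_
  apply addHaar_image_eq_zero_of_differentiableOn_of_addHaar_eq_zero _ _ hZ0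
  exact (hψi.differentiableOn (by norm_num)).mono (image_mono inter_subset_right)


/-- radial constants -/
def Rad (N : ℕ) (σ c : ℝ) : Prop := 0 < c ∧ ∀ ξ > (0:ℝ),
  (IntegrableOn (fun z : Euc N => ‖z‖ * ‖z‖ ^ (-((N:ℝ)+σ))) {z | ‖z‖ < ξ} ∧
    ∫ z in {z : Euc N | ‖z‖ < ξ}, ‖z‖ * ‖z‖ ^ (-((N:ℝ)+σ)) ≤ c * ξ ^ (1 - σ)) ∧
  (IntegrableOn (fun z : Euc N => ‖z‖ ^ (-((N:ℝ)+σ))) {z | ξ ≤ ‖z‖} ∧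
    ∫ z in {z : Euc N | ξ ≤ ‖z‖}, ‖z‖ ^ (-((N:ℝ)+σ)) ≤ c * ξ ^ (-σ))

theorem rad_exists (hN : 0 < N) {σ : ℝ} (h0 : 0 < σ) (h1 : σ < 1) : ∃ c, Rad N σ c := by
  obtain ⟨c, hc, h⟩ := exists_radial_const hN h0 h1
  exact ⟨c, hc, h⟩

theorem kz_nonneg (σ : ℝ) (z : Euc N) : 0 ≤ ‖z‖ ^ (-((N:ℝ)+σ)) := Real.rpow_nonneg (norm_nonneg _) _

theorem ms_lt (ξ : ℝ) : MeasurableSet {z : Euc N | ‖z‖ < ξ} :=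
  (isOpen_lt continuous_norm continuous_const).measurableSet

theorem ms_le (ξ : ℝ) : MeasurableSet {z : Euc N | ξ ≤ ‖z‖} :=
  (isClosed_le continuous_const continuous_norm).measurableSet

section nonlocal
variable {Ω : Set (Euc N)} {g : Euc N → Euc N → ℝ} {Cμ Dμ σ c Aj Cj' Cj Dj : ℝ}
  {j : Euc N → Euc N → Euc N}

theorem j_cont (hJ0 : AssumptionJ0 Ω j Aj) {x : Euc N} (hx : x ∈ closure Ω) :
    Continuous (fun z => x + j x z) := continuous_const.add (hJ0 x hx).1.continuous

theorem ms_in (hJ0 : AssumptionJ0 Ω j Aj) {x : Euc N} (hx : x ∈ closure Ω) (ξ : ℝ) :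
    MeasurableSet {z : Euc N | ‖z‖ < ξ ∧ x + j x z ∈ closure Ω} :=
  (ms_lt ξ).inter ((isClosed_closure.preimage (j_cont hJ0 hx)).measurableSet)

theorem ms_out (hJ0 : AssumptionJ0 Ω j Aj) {x : Euc N} (hx : x ∈ closure Ω) (ξ : ℝ) :
    MeasurableSet {z : Euc N | ξ ≤ ‖z‖ ∧ x + j x z ∈ closure Ω} :=
  (ms_le ξ).inter ((isClosed_closure.preimage (j_cont hJ0 hx)).measurableSet)

theorem Iin_bound (hc : Rad N σ c) (hM : AssumptionM1 Ω g Cμ σ) (hJ0 : AssumptionJ0 Ω j Aj)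
    (hJ1 : AssumptionJ1 Ω j Cj' Cj Dj) {x : Euc N} (hx : x ∈ closure Ω) {ξ : ℝ} (hξ : 0 < ξ)
    {K : ℝ} (hK : 0 ≤ K) {φ : Euc N → ℝ}
    (hφ : ∀ y ∈ closedBall x (Cj * ξ), |φ y - φ x| ≤ K * ‖y - x‖) :
    |Iin Ω j g ξ φ x| ≤ c * Cμ * K * Cj * ξ ^ (1 - σ) := by
  obtain ⟨hCμ, hσ, hgm, hg0, hgb⟩ := hM
  obtain ⟨hCj', hCj, hDj, hj, hjl⟩ := hJ1
  obtain ⟨⟨hi, hle⟩, -⟩ := hc.2 ξ hξ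
  have hsub : {z : Euc N | ‖z‖ < ξ ∧ x + j x z ∈ closure Ω} ⊆ {z : Euc N | ‖z‖ < ξ} := fun z h => h.1
  have hi2 : IntegrableOn (fun z : Euc N => (K * Cj * Cμ) * (‖z‖ * ‖z‖ ^ (-((N:ℝ)+σ)))) {z | ‖z‖ < ξ} :=
    hi.const_mul _
  have h1 : |Iin Ω j g ξ φ x| ≤ ∫ z in {z : Euc N | ‖z‖ < ξ ∧ x + j x z ∈ closure Ω},
      (K * Cj * Cμ) * (‖z‖ * ‖z‖ ^ (-((N:ℝ)+σ))) := by
    unfold Iin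
    rw [← Real.norm_eq_abs]
    apply norm_integral_le_of_norm_le (hi2.mono_set hsub)
    refine (ae_restrict_iff' (ms_in hJ0 hx ξ)).2 (Eventually.of_forall ?_)
    intro z hz
    have hjz := (hj x hx z).2
    have hb : x + j x z ∈ closedBall x (Cj * ξ) := by
      rw [mem_closedBall, dist_eq_norm, add_sub_cancel_left]
      exact hjz.trans (mul_le_mul_of_nonneg_left hz.1.le hCj.le)
    have := hφ _ hb
    rw [add_sub_cancel_left] at this
    rw [Real.norm_eq_abs, abs_mul, abs_of_nonneg (hg0 x hx z)]
    calc _ ≤ (K * (Cj * ‖z‖)) * (Cμ * ‖z‖ ^ (-((N:ℝ)+σ))) := by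
          apply mul_le_mul (this.trans (mul_le_mul_of_nonneg_left hjz hK)) (hgb x hx z) (hg0 x hx z)
          positivity
      _ = _ := by ring
  refine h1.trans ?_
  calc _ ≤ ∫ z in {z : Euc N | ‖z‖ < ξ}, (K * Cj * Cμ) * (‖z‖ * ‖z‖ ^ (-((N:ℝ)+σ))) := by
        apply setIntegral_mono_set hi2
        · exact Eventually.of_forall (fun z => by have := kz_nonneg σ z; simp only [Pi.zero_apply]; positivity)
        · exact Eventually.of_forall hsub
    _ = (K * Cj * Cμ) * ∫ z in {z : Euc N | ‖z‖ < ξ}, (‖z‖ * ‖z‖ ^ (-((N:ℝ)+σ))) := integral_const_mul _ _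
    _ ≤ (K * Cj * Cμ) * (c * ξ ^ (1 - σ)) := by gcongr
    _ = _ := by ring

/-- the integrand of `Iout` -/
def Fo (Ω : Set (Euc N)) (j : Euc N → Euc N → Euc N) (g : Euc N → Euc N → ℝ)
    (ξ : ℝ) (u : Euc N → ℝ) (x : Euc N) : Euc N → ℝ :=
  indicator {z : Euc N | ξ ≤ ‖z‖ ∧ x + j x z ∈ closure Ω} (fun z => (u (x + j x z) - u x) * g x z)

theorem Iout_eq (hJ0 : AssumptionJ0 Ω j Aj) {x : Euc N} (hx : x ∈ closure Ω) (ξ : ℝ) (u : Euc N → ℝ) :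
    Iout Ω j g ξ u x = ∫ z, Fo Ω j g ξ u x z := by
  unfold Iout Fo
  rw [integral_indicator (ms_out hJ0 hx ξ)]

theorem Fo_meas (hM : AssumptionM1 Ω g Cμ σ) (hJ0 : AssumptionJ0 Ω j Aj) {x : Euc N} (hx : x ∈ closure Ω) (ξ : ℝ)
    {u : Euc N → ℝ} (hu : Measurable ((closure Ω).indicator u)) : Measurable (Fo Ω j g ξ u x) := by
  have : Fo Ω j g ξ u x = indicator {z : Euc N | ξ ≤ ‖z‖ ∧ x + j x z ∈ closure Ω}
      (fun z => ((closure Ω).indicator u (x + j x z) - u x) * g x z) := by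
    unfold Fo
    apply indicator_congr
    intro z hz
    simp only [indicator_of_mem hz.2]
  rw [this]
  apply Measurable.indicator _ (ms_out hJ0 hx ξ)
  exact ((hu.comp (j_cont hJ0 hx).measurable).sub measurable_const).mul (hM.2.2.1 x)

theorem Fo_bound (hM : AssumptionM1 Ω g Cμ σ) {x : Euc N} (hx : x ∈ closure Ω) (ξ : ℝ)
    {u : Euc N → ℝ} {M : ℝ} (hb : ∀ y ∈ closure Ω, |u y| ≤ M) (z : Euc N) :
    |Fo Ω j g ξ u x z| ≤ indicator {z : Euc N | ξ ≤ ‖z‖} (fun z => (2 * M * Cμ) * ‖z‖ ^ (-((N:ℝ)+σ))) z := by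
  obtain ⟨hCμ, hσ, hgm, hg0, hgb⟩ := hM
  have hM0 : 0 ≤ M := (abs_nonneg _).trans (hb x hx)
  unfold Fo
  by_cases hz : ξ ≤ ‖z‖
  · rw [indicator_of_mem (s := {z : Euc N | ξ ≤ ‖z‖}) hz]
    by_cases hz2 : x + j x z ∈ closure Ω
    · rw [indicator_of_mem (show z ∈ {z : Euc N | ξ ≤ ‖z‖ ∧ x + j x z ∈ closure Ω} from ⟨hz, hz2⟩)]
      rw [abs_mul, abs_of_nonneg (hg0 x hx z)]
      have h1 : |u (x + j x z) - u x| ≤ 2 * M := by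
        have h1 := abs_le.1 (hb _ hz2); have h2 := abs_le.1 (hb _ hx)
        rw [abs_le]; constructor <;> linarith
      calc _ ≤ (2 * M) * (Cμ * ‖z‖ ^ (-((N:ℝ)+σ))) :=
            mul_le_mul h1 (hgb x hx z) (hg0 x hx z) (by positivity)
        _ = _ := by ring
    · rw [indicator_of_notMem (fun h => hz2 h.2), abs_zero]
      have := kz_nonneg σ z; positivity
  · rw [indicator_of_notMem (fun h => hz h.1), indicator_of_notMem (s := {z : Euc N | ξ ≤ ‖z‖}) (fun h => hz h), abs_zero]

theorem bd_int (hc : Rad N σ c) {ξ : ℝ} (hξ : 0 < ξ) (K : ℝ) :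
    Integrable (indicator {z : Euc N | ξ ≤ ‖z‖} (fun z => K * ‖z‖ ^ (-((N:ℝ)+σ)))) :=
  IntegrableOn.integrable_indicator ((hc.2 ξ hξ).2.1.const_mul K) (ms_le ξ)

theorem Fo_int (hc : Rad N σ c) (hM : AssumptionM1 Ω g Cμ σ) (hJ0 : AssumptionJ0 Ω j Aj) {x : Euc N} (hx : x ∈ closure Ω)
    {ξ : ℝ} (hξ : 0 < ξ) {u : Euc N → ℝ} {M : ℝ} (hb : ∀ y ∈ closure Ω, |u y| ≤ M)
    (hu : Measurable ((closure Ω).indicator u)) : Integrable (Fo Ω j g ξ u x) := by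
  refine (bd_int hc hξ (2 * M * Cμ)).mono' (Fo_meas hM hJ0 hx ξ hu).aestronglyMeasurable ?_
  exact Eventually.of_forall (fun z => by rw [Real.norm_eq_abs]; exact Fo_bound hM hx ξ hb z)

theorem Iout_bound (hc : Rad N σ c) (hM : AssumptionM1 Ω g Cμ σ) (hJ0 : AssumptionJ0 Ω j Aj) {x : Euc N} (hx : x ∈ closure Ω)
    {ξ : ℝ} (hξ : 0 < ξ) {u : Euc N → ℝ} {M : ℝ} (hb : ∀ y ∈ closure Ω, |u y| ≤ M) :
    |Iout Ω j g ξ u x| ≤ 2 * M * c * Cμ * ξ ^ (-σ) := by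
  have hM0 : 0 ≤ M := (abs_nonneg _).trans (hb x hx)
  have hCμ := hM.1
  rw [Iout_eq hJ0 hx, ← Real.norm_eq_abs]
  refine (norm_integral_le_of_norm_le (bd_int hc hξ (2 * M * Cμ))
    (Eventually.of_forall (fun z => by rw [Real.norm_eq_abs]; exact Fo_bound hM hx ξ hb z))).trans ?_
  rw [integral_indicator (ms_le ξ), integral_const_mul]
  calc _ ≤ 2 * M * Cμ * (c * ξ ^ (-σ)) := mul_le_mul_of_nonneg_left (hc.2 ξ hξ).2.2 (by positivity)
    _ = _ := by ring

theorem Iout_max (hc : Rad N σ c) (hM : AssumptionM1 Ω g Cμ σ) (hJ0 : AssumptionJ0 Ω j Aj)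
    (hJ1 : AssumptionJ1 Ω j Cj' Cj Dj) {x : Euc N} (hx : x ∈ closure Ω)
    {ξ : ℝ} (hξ : 0 < ξ) {w v θ : Euc N → ℝ} {M K S : ℝ} (hwb : ∀ y ∈ closure Ω, |w y| ≤ M)
    (hw : Measurable ((closure Ω).indicator w)) (hvb : ∀ y ∈ closure Ω, |v y| ≤ M)
    (hv : Measurable ((closure Ω).indicator v)) (hK : 0 ≤ K) (hθ : ∀ x y, |θ x - θ y| ≤ K * ‖x - y‖)
    (hS : ∀ y, |θ y| ≤ S)
    (hmax : ∀ y ∈ closure Ω, w y - v y + θ y ≤ w x - v x + θ x) :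
    Iout Ω j g ξ w x - Iout Ω j g ξ v x ≤ c * Cμ * (K * Cj + 2 * S) := by
  have hS0 : 0 ≤ S := (abs_nonneg _).trans (hS x)
  rw [Iout_eq hJ0 hx, Iout_eq hJ0 hx, ← integral_sub (Fo_int hc hM hJ0 hx hξ hwb hw) (Fo_int hc hM hJ0 hx hξ hvb hv)]
  obtain ⟨⟨hi1, hle1⟩, -⟩ := hc.2 1 one_pos
  obtain ⟨-, ⟨hi2, hle2⟩⟩ := hc.2 1 one_pos
  have hI1 : Integrable (indicator {z : Euc N | ‖z‖ < 1} (fun z => (K * Cj * Cμ) * (‖z‖ * ‖z‖ ^ (-((N:ℝ)+σ))))) :=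
    IntegrableOn.integrable_indicator (hi1.const_mul _) (ms_lt 1)
  have hI2 := bd_int hc one_pos (2 * S * Cμ)
  obtain ⟨hCμ, hσ, hgm, hg0, hgb⟩ := id hM
  obtain ⟨hCj', hCj, hDj, hj, hjl⟩ := hJ1
  calc _ ≤ ∫ z, (indicator {z : Euc N | ‖z‖ < 1} (fun z => (K * Cj * Cμ) * (‖z‖ * ‖z‖ ^ (-((N:ℝ)+σ)))) z
        + indicator {z : Euc N | 1 ≤ ‖z‖} (fun z => (2 * S * Cμ) * ‖z‖ ^ (-((N:ℝ)+σ))) z) := by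
        apply integral_mono ((Fo_int hc hM hJ0 hx hξ hwb hw).sub (Fo_int hc hM hJ0 hx hξ hvb hv)) (hI1.add hI2)
        intro z
        have hk := kz_nonneg σ z
        have hgz := hg0 x hx z
        have hgz2 := hgb x hx z
        by_cases hz : ξ ≤ ‖z‖ ∧ x + j x z ∈ closure Ω
        · have e1 : Fo Ω j g ξ w x z - Fo Ω j g ξ v x z ≤ (θ x - θ (x + j x z)) * g x z := by
            unfold Fo
            rw [indicator_of_mem (show z ∈ {z : Euc N | ξ ≤ ‖z‖ ∧ x + j x z ∈ closure Ω} from hz),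
              indicator_of_mem (show z ∈ {z : Euc N | ξ ≤ ‖z‖ ∧ x + j x z ∈ closure Ω} from hz), ← sub_mul]
            apply mul_le_mul_of_nonneg_right _ hgz
            have := hmax _ hz.2
            linarith
          have e2 : (θ x - θ (x + j x z)) * g x z ≤ |θ x - θ (x + j x z)| * (Cμ * ‖z‖ ^ (-((N:ℝ)+σ))) :=
            mul_le_mul (le_abs_self _) hgz2 hgz (abs_nonneg _)
          refine (e1.trans e2).trans ?_
          rw [Pi.add_apply]
          by_cases h1 : ‖z‖ < 1
          · rw [indicator_of_mem (show z ∈ {z : Euc N | ‖z‖ < 1} from h1),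
              indicator_of_notMem (show z ∉ {z : Euc N | 1 ≤ ‖z‖} from not_le.2 h1), add_zero]
            have : |θ x - θ (x + j x z)| ≤ K * (Cj * ‖z‖) := by
              refine (hθ _ _).trans (mul_le_mul_of_nonneg_left ?_ hK)
              rw [sub_add_cancel_left, norm_neg]; exact (hj x hx z).2
            calc _ ≤ (K * (Cj * ‖z‖)) * (Cμ * ‖z‖ ^ (-((N:ℝ)+σ))) := mul_le_mul_of_nonneg_right this (by positivity)
              _ = _ := by ring
          · rw [indicator_of_notMem (show z ∉ {z : Euc N | ‖z‖ < 1} from h1),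
              indicator_of_mem (show z ∈ {z : Euc N | 1 ≤ ‖z‖} from not_lt.1 h1), zero_add]
            have : |θ x - θ (x + j x z)| ≤ 2 * S := by
              have h1 := abs_le.1 (hS x); have h2 := abs_le.1 (hS (x + j x z))
              rw [abs_le]; constructor <;> linarith
            calc _ ≤ (2 * S) * (Cμ * ‖z‖ ^ (-((N:ℝ)+σ))) := mul_le_mul_of_nonneg_right this (by positivity)
              _ = _ := by ring
        · have e0 : ∀ w, Fo Ω j g ξ w x z = 0 := fun w => indicator_of_notMem (s := {z : Euc N | ξ ≤ ‖z‖ ∧ x + j x z ∈ closure Ω}) hz _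
          simp only [Pi.sub_apply, e0, sub_zero]
          apply add_nonneg <;> apply indicator_nonneg <;> intro z _ <;> have := kz_nonneg σ z <;> positivity
    _ = (K * Cj * Cμ) * (∫ z in {z : Euc N | ‖z‖ < 1}, ‖z‖ * ‖z‖ ^ (-((N:ℝ)+σ)))
        + (2 * S * Cμ) * ∫ z in {z : Euc N | 1 ≤ ‖z‖}, ‖z‖ ^ (-((N:ℝ)+σ)) := by
        rw [integral_add hI1 hI2, integral_indicator (ms_le 1), integral_indicator (ms_lt 1), integral_const_mul, integral_const_mul]
    _ ≤ (K * Cj * Cμ) * c + (2 * S * Cμ) * c := by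
        rw [Real.one_rpow, mul_one] at hle1 hle2
        gcongr
    _ = _ := by ring

theorem usc_meas {u : Euc N → ℝ} (hu : UpperSemicontinuousOn u (closure Ω)) :
    Measurable ((closure Ω).indicator u) := by
  have h1 := (upperSemicontinuousOn_iff_restrict.2 hu).measurable
  apply measurable_of_restrict_of_restrict_compl (s := closure Ω) isClosed_closure.measurableSet
  · convert h1 using 1
    ext x; exact indicator_of_mem x.2 _
  · convert measurable_const (a := (0:ℝ)) using 1
    ext x; exact indicator_of_notMem x.2 _

theorem lsc_neg {u : Euc N → ℝ} {S : Set (Euc N)} (hu : LowerSemicontinuousOn u S) :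
    UpperSemicontinuousOn (fun x => - u x) S := by
  intro x hx a ha
  filter_upwards [hu x hx (-a) (by simp only at ha; linarith)] with y hy
  linarith

theorem lsc_meas {u : Euc N → ℝ} (hu : LowerSemicontinuousOn u (closure Ω)) :
    Measurable ((closure Ω).indicator u) := by
  have h1 := (usc_meas (lsc_neg hu)).neg
  convert h1 using 1
  ext x
  by_cases hx : x ∈ closure Ω <;> simp [hx]

theorem Iout_neg (ξ : ℝ) (u : Euc N → ℝ) (x : Euc N) : Iout Ω j g ξ (fun y => - u y) x = - Iout Ω j g ξ u x := by
  unfold Iout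
  rw [← integral_neg]; congr 1; ext z; ring

theorem Iout_mul (ξ a : ℝ) (u : Euc N → ℝ) (x : Euc N) : Iout Ω j g ξ (fun y => a * u y) x = a * Iout Ω j g ξ u x := by
  unfold Iout
  rw [← integral_const_mul]; congr 1; ext z; ring

theorem Iin_mul (ξ a : ℝ) (u : Euc N → ℝ) (x : Euc N) : Iin Ω j g ξ (fun y => a * u y) x = a * Iin Ω j g ξ u x := by
  unfold Iin
  rw [← integral_const_mul]; congr 1; ext z; ring

theorem ae_not_frontier {hN : 0 < N} (hΩ : IsW2Domain hN Ω) (hJ0 : AssumptionJ0 Ω j Aj) {x : Euc N} (hx : x ∈ closure Ω) :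
    ∀ᵐ z : Euc N, x + j x z ∉ frontier Ω := by
  rw [ae_iff]
  obtain ⟨-, hb, hi, -⟩ := hJ0 x hx
  have h0 : volume ((fun y => x + y) ⁻¹' frontier Ω) = 0 := by
    rw [measure_preimage_add]; exact frontier_null hΩ
  have h1 := addHaar_image_eq_zero_of_differentiableOn_of_addHaar_eq_zero volume
    (hi.differentiable (by norm_num)).differentiableOn h0
  refine measure_mono_null ?_ h1
  intro z hz
  simp only [not_not, mem_ofPred_eq] at hz
  exact ⟨j x z, hz, Function.leftInverse_invFun hb.1 z⟩

theorem Iout_usc {hN : 0 < N} (hΩ : IsW2Domain hN Ω) (hc : Rad N σ c) (hM : AssumptionM Ω g Cμ Dμ σ)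
    (hJ0 : AssumptionJ0 Ω j Aj) (hJ1 : AssumptionJ1 Ω j Cj' Cj Dj) {ξ : ℝ} (hξ : 0 < ξ)
    {w : Euc N → ℝ} {M : ℝ} (hwb : ∀ y ∈ closure Ω, |w y| ≤ M) (husc : UpperSemicontinuousOn w (closure Ω))
    {xs : ℕ → Euc N} {x : Euc N} (hx : x ∈ closure Ω) (hxs : ∀ k, xs k ∈ closure Ω)
    (hlim : Tendsto xs atTop (𝓝 x)) (hwl : Tendsto (fun k => w (xs k)) atTop (𝓝 (w x))) :
    ∀ η > 0, ∀ᶠ k in atTop, Iout Ω j g ξ w (xs k) ≤ Iout Ω j g ξ w x + η := by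
  obtain ⟨hM1, hDμ, hgl⟩ := hM
  have hw := usc_meas husc
  obtain ⟨hCj', hCj, hDj, hj, hjl⟩ := id hJ1
  have hnorm : Tendsto (fun k => ‖xs k - x‖) atTop (𝓝 0) := by
    rw [tendsto_iff_norm_sub_tendsto_zero] at hlim; exact hlim
  have key : Tendsto (fun k => ∫ z, max (Fo Ω j g ξ w (xs k) z) (Fo Ω j g ξ w x z)) atTop
      (𝓝 (∫ z, Fo Ω j g ξ w x z)) := by
    apply tendsto_integral_of_dominated_convergence
      (indicator {z : Euc N | ξ ≤ ‖z‖} (fun z => (2 * M * Cμ) * ‖z‖ ^ (-((N:ℝ)+σ))))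
    · intro k
      exact ((Fo_meas hM1 hJ0 (hxs k) ξ hw).max (Fo_meas hM1 hJ0 hx ξ hw)).aestronglyMeasurable
    · exact bd_int hc hξ _
    · intro k
      refine Eventually.of_forall (fun z => ?_)
      rw [Real.norm_eq_abs]
      have h1 := abs_le.1 (Fo_bound (j := j) hM1 (hxs k) ξ hwb z)
      have h2 := abs_le.1 (Fo_bound (j := j) hM1 hx ξ hwb z)
      exact abs_le.2 ⟨h1.1.trans (le_max_left _ _), max_le h1.2 h2.2⟩
    · filter_upwards [ae_not_frontier hΩ hJ0 hx] with z hz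
      have hjt : Tendsto (fun k => xs k + j (xs k) z) atTop (𝓝 (x + j x z)) := by
        apply hlim.add
        rw [tendsto_iff_norm_sub_tendsto_zero]
        refine squeeze_zero (fun k => norm_nonneg _) (fun k => hjl _ (hxs k) _ hx z) ?_
        simpa using hnorm.const_mul (Dj * ‖z‖)
      have hgt : Tendsto (fun k => g (xs k) z) atTop (𝓝 (g x z)) := by
        rw [tendsto_iff_norm_sub_tendsto_zero]
        refine squeeze_zero (fun k => norm_nonneg _) (fun k => hgl _ (hxs k) _ hx z) ?_
        simpa using (hnorm.const_mul Dμ).mul_const (‖z‖ ^ (-((N:ℝ)+σ)))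
      by_cases hξz : ξ ≤ ‖z‖
      swap
      · have e0 : ∀ y, Fo Ω j g ξ w y z = 0 := fun y => indicator_of_notMem (fun h => hξz h.1) _
        simp only [e0, max_self]; exact tendsto_const_nhds
      by_cases hin : x + j x z ∈ closure Ω
      · have hin2 : x + j x z ∈ Ω := by
          by_contra hcon
          exact hz ⟨hin, by rwa [hΩ.1.interior_eq]⟩
        have hev : ∀ᶠ k in atTop, xs k + j (xs k) z ∈ Ω := hjt.eventually (hΩ.1.mem_nhds hin2)
        have hmt : Tendsto (fun k => max (w (xs k + j (xs k) z)) (w (x + j x z))) atTop (𝓝 (w (x + j x z))) := by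
          rw [tendsto_order]
          constructor
          · intro a ha
            exact Eventually.of_forall (fun k => ha.trans_le (le_max_right _ _))
          · intro a ha
            have h1 := husc _ hin a ha
            have h2 : Tendsto (fun k => xs k + j (xs k) z) atTop (𝓝[closure Ω] (x + j x z)) :=
              tendsto_nhdsWithin_iff.2 ⟨hjt, hev.mono (fun k hk => subset_closure hk)⟩
            filter_upwards [h2.eventually h1] with k hk
            exact max_lt hk ha
        have hFx : Fo Ω j g ξ w x z = (w (x + j x z) - w x) * g x z :=
          indicator_of_mem (show z ∈ {z : Euc N | ξ ≤ ‖z‖ ∧ x + j x z ∈ closure Ω} from ⟨hξz, hin⟩) _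
        have hlim2 : Tendsto (fun k => max ((max (w (xs k + j (xs k) z)) (w (x + j x z)) - w (xs k)) * g (xs k) z)
            (Fo Ω j g ξ w x z)) atTop (𝓝 (Fo Ω j g ξ w x z)) := by
          have := ((hmt.sub hwl).mul hgt).max (tendsto_const_nhds (x := Fo Ω j g ξ w x z))
          rwa [← hFx, max_self] at this
        refine tendsto_of_tendsto_of_tendsto_of_le_of_le' tendsto_const_nhds hlim2
          (Eventually.of_forall (fun k => le_max_right _ _)) ?_
        filter_upwards [hev] with k hk
        apply max_le_max _ le_rfl
        have : Fo Ω j g ξ w (xs k) z = (w (xs k + j (xs k) z) - w (xs k)) * g (xs k) z :=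
          indicator_of_mem (show z ∈ {z : Euc N | ξ ≤ ‖z‖ ∧ xs k + j (xs k) z ∈ closure Ω} from ⟨hξz, subset_closure hk⟩) _
        rw [this]
        exact mul_le_mul_of_nonneg_right (sub_le_sub_right (le_max_left _ _) _) (hM1.2.2.2.1 _ (hxs k) z)
      · have hev : ∀ᶠ k in atTop, xs k + j (xs k) z ∈ (closure Ω)ᶜ :=
          hjt.eventually (isClosed_closure.isOpen_compl.mem_nhds hin)
        have hFx : Fo Ω j g ξ w x z = 0 := indicator_of_notMem (fun h => hin h.2) _
        apply tendsto_const_nhds.congr'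
        filter_upwards [hev] with k hk
        have : Fo Ω j g ξ w (xs k) z = 0 := indicator_of_notMem (fun h => hk h.2) _
        rw [this, hFx, max_self]
  intro η hη
  filter_upwards [key.eventually (gt_mem_nhds (show _ < (∫ z, Fo Ω j g ξ w x z) + η by linarith))] with k hk
  rw [Iout_eq hJ0 hx, Iout_eq hJ0 (hxs k)]
  refine le_trans ?_ hk.le
  have i1 := Fo_int hc hM1 hJ0 (hxs k) hξ hwb hw
  have i2 := Fo_int hc hM1 hJ0 hx hξ hwb hw
  exact integral_mono i1 (i1.sup i2) (fun z => le_max_left _ _)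

end nonlocal


theorem usc_add_cont {X : Type*} [TopologicalSpace X] {f k : X → ℝ} {S : Set X}
    (hf : UpperSemicontinuousOn f S) (hk : Continuous k) :
    UpperSemicontinuousOn (fun x => f x + k x) S := by
  intro x hx a ha
  simp only at ha
  have h1 := hf x hx (f x + (a - (f x + k x)) / 2) (by linarith)
  have h2 : ∀ᶠ y in 𝓝[S] x, k y < k x + (a - (f x + k x)) / 2 :=
    (hk.tendsto x).mono_left nhdsWithin_le_nhds |>.eventually (gt_mem_nhds (by linarith))
  filter_upwards [h1, h2] with y hy1 hy2
  linarith

theorem rpow_dom {σ m c : ℝ} (h0 : 0 < σ) (hm : σ < m) (hc : 0 < c) (A B : ℝ) :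
    ∃ L₀, ∀ L ≥ L₀, A + B * L ^ σ < c * L ^ m := by
  have h1 := (tendsto_rpow_atTop (sub_pos.2 hm)).eventually_ge_atTop ((|A| + |B| + 1) / c)
  obtain ⟨L₀, hL⟩ := eventually_atTop.1 (h1.and (eventually_ge_atTop (1:ℝ)))
  refine ⟨L₀, fun L hLL => ?_⟩
  obtain ⟨h2, h3⟩ := hL L hLL
  have h4 : L ^ m = L ^ σ * L ^ (m - σ) := by
    rw [← Real.rpow_add (by linarith)]; congr 1; ring
  have h5 : 1 ≤ L ^ σ := Real.one_le_rpow h3 h0.le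
  rw [div_le_iff₀ hc] at h2
  rw [h4]
  have h6 : (|A| + |B| + 1) * L ^ σ ≤ L ^ (m - σ) * c * L ^ σ := mul_le_mul_of_nonneg_right h2 (by linarith)
  have h7 : A ≤ |A| * L ^ σ := (le_abs_self A).trans (le_mul_of_one_le_right (abs_nonneg _) h5)
  have h8 : B * L ^ σ ≤ |B| * L ^ σ := mul_le_mul_of_nonneg_right (le_abs_self B) (by linarith)
  nlinarith

theorem h_lip {h : Euc N → ℝ} (hcd : ContDiff ℝ 1 h) (hg : ∀ x, ‖gradient h x‖ ≤ 3) (x y : Euc N) :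
    |h x - h y| ≤ 3 * ‖x - y‖ :=
  lip_of_grad (fun x => (hcd.differentiable (by norm_num) x).hasGradientAt) hg x y

theorem sq_ratio {τ : ℝ} (hτ : 0 < τ) {x : Euc N} (h : 3 * τ ≤ ‖x‖) : 3 / 4 * sq τ x ≤ ‖x‖ := by
  have h1 := sq_sq τ x
  have h2 := sq_pos hτ x
  rw [← pow_le_pow_iff_left₀ (by positivity) (by positivity) (two_ne_zero)]
  nlinarith

set_option maxHeartbeats 1000000 in
theorem u_loc_lip {Ω : Set (Euc N)} {g : Euc N → Euc N → ℝ} {Cμ σ c Aj Cj' Cj Dj : ℝ}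
    {j : Euc N → Euc N → Euc N} {hN : 0 < N} (hΩ : IsW2Domain hN Ω)
    {n : Euc N → Euc N} (hn : IsExteriorNormal Ω n) (hc : Rad N σ c) (hM : AssumptionM1 Ω g Cμ σ)
    (hJ0 : AssumptionJ0 Ω j Aj) (hJ1 : AssumptionJ1 Ω j Cj' Cj Dj)
    {H : Euc N → Euc N → ℝ} {m c₀ D : ℝ} (hH : AssumptionH1 Ω H σ m c₀ D) {u : Euc N → ℝ} {M : ℝ}
    (hb : ∀ x ∈ closure Ω, |u x| ≤ M) (husc : UpperSemicontinuousOn u (closure Ω))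
    (hsub : IsSubSol Ω j g n Cj (statF H) u) {xb : Euc N} (hxb : xb ∈ closure Ω) :
    ∃ r > (0:ℝ), ∃ L ≥ (0:ℝ), ∀ x ∈ closure Ω, x ∈ ball xb r → ∀ y ∈ closure Ω, y ∈ ball xb r →
      u y - u x ≤ L * ‖y - x‖ := by
  obtain ⟨r, hr, C, hC, hgeo⟩ := geo_normal hΩ hn hxb
  obtain ⟨h, hhcd, -, hhg, hhn⟩ := geo_h hΩ hn xb r one_pos
  obtain ⟨hσm, hc₀, hD, hH⟩ := hH
  have hM0 : 0 ≤ M := (abs_nonneg _).trans (hb xb hxb)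
  have hCμ := hM.1
  have hσ := hM.2.1
  have hcp := hc.1
  have hCj := hJ1.2.1
  have hlip := h_lip hhcd hhg
  have hhd : ∀ x, HasGradientAt h (gradient h x) x := fun x => (hhcd.differentiable (by norm_num) x).hasGradientAt
  obtain ⟨L₀, hL₀⟩ := rpow_dom hσ.1 hσm (c := c₀ * (1/4) ^ m) (by positivity) (D + M) (c * Cμ * (3/2 * Cj + 2 * M))
  obtain ⟨L, hL0, hL1, hLr, hLC, hLCj⟩ : ∃ L : ℝ, L₀ ≤ L ∧ 1 ≤ L ∧ (4 * M + 2) * 8 / r < L ∧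
      (4 * M + 2) * (12 * (C + 1)) < L ∧ 16 * Cj / r < L := by
    refine ⟨max L₀ (max 1 (max ((4 * M + 2) * 8 / r + 1) (max ((4 * M + 2) * (12 * (C + 1)) + 1) (16 * Cj / r + 1)))),
      le_max_left _ _, ?_, ?_, ?_, ?_⟩
    · exact (le_max_left _ _).trans (le_max_right _ _)
    · exact lt_of_lt_of_le (lt_add_one _) ((le_max_left _ _).trans ((le_max_right _ _).trans (le_max_right _ _)))
    · exact lt_of_lt_of_le (lt_add_one _) ((le_max_left _ _).trans ((le_max_right _ _).trans ((le_max_right _ _).trans (le_max_right _ _))))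
    · exact lt_of_lt_of_le (lt_add_one _) ((le_max_right _ _).trans ((le_max_right _ _).trans ((le_max_right _ _).trans (le_max_right _ _))))
  have hLp : 0 < L := by linarith
  have hcoer := hL₀ L hL0
  set K : Set (Euc N) := closedBall xb (r/2) ∩ closure Ω with hK
  have hKc : IsCompact K := (isCompact_closedBall _ _).inter_right isClosed_closure
  -- main claim
  have main : ∀ x ∈ closure Ω, x ∈ ball xb (r/4) → ∀ τ > 0, τ ≤ 1 / L →
      ∃ y ∈ closure Ω, ‖y - x‖ < 3 * τ ∧ ∀ y' ∈ K,
        u y' - L * sq τ (y' - x) + L / 6 * h y' ≤ u y - L * sq τ (y - x) + L / 6 * h y := by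
    intro x hx hxr τ hτ hτL
    have hxr' : ‖x - xb‖ < r / 4 := by rwa [mem_ball, dist_eq_norm] at hxr
    have hxK : x ∈ K := ⟨by rw [mem_closedBall, dist_eq_norm]; linarith, hx⟩
    have hqcd : ContDiff ℝ 1 (fun y => L * sq τ (y - x) - L / 6 * h y) :=
      (contDiff_const.mul (sq_cd hτ x)).sub (contDiff_const.mul hhcd)
    have husc2 : UpperSemicontinuousOn (fun y => u y + (-(L * sq τ (y - x) - L / 6 * h y))) K :=
      usc_add_cont (husc.mono inter_subset_right) hqcd.continuous.neg
    obtain ⟨y, hyK, hymax⟩ := husc2.exists_isMaxOn ⟨x, hxK⟩ hKc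
    have hymax' : ∀ y' ∈ K, u y' - L * sq τ (y' - x) + L / 6 * h y' ≤ u y - L * sq τ (y - x) + L / 6 * h y := by
      intro y' hy'
      have := hymax hy'
      simp only [mem_ofPred_eq] at this
      linarith
    refine ⟨y, hyK.2, ?_, hymax'⟩
    by_contra hcon
    push Not at hcon
    have hyb := hb y hyK.2
    have hxub := hb x hx
    rw [abs_le] at hyb hxub
    have hdist : ‖y - x‖ * L ≤ 4 * M + 2 := by
      have h1 := hymax' x hxK
      rw [sub_self, sq_zero hτ] at h1
      have h2 := norm_le_sq τ (y - x)
      have h3 := (abs_le.1 (hlip y x)).2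
      have h4 : L * τ ≤ 1 := by rw [le_div_iff₀ hLp] at hτL; linarith
      have h5 : L * ‖y - x‖ ≤ L * sq τ (y - x) := mul_le_mul_of_nonneg_left h2 hLp.le
      have h6 : L / 6 * (h y - h x) ≤ L / 6 * (3 * ‖y - x‖) := mul_le_mul_of_nonneg_left h3 (by positivity)
      nlinarith
    have hd1 : ‖y - x‖ < r / 8 := by
      rw [div_lt_iff₀ hr] at hLr
      by_contra hc1
      push Not at hc1
      nlinarith
    have hd2 : C * ‖y - x‖ < 1 / 12 := by
      have : (C + 1) * ‖y - x‖ ≤ 1 / 12 := by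
        by_contra hc1
        push Not at hc1
        have h7 : 0 ≤ (C + 1) := by linarith
        have h8 := mul_le_mul_of_nonneg_left hdist h7
        have h9 := mul_lt_mul_of_pos_left hc1 hLp
        nlinarith
      have h0 : 0 < ‖y - x‖ := by linarith
      nlinarith
    have hyxb : ‖y - xb‖ < 3 * r / 8 := by
      have : y - xb = (y - x) + (x - xb) := by abel
      rw [this]
      refine (norm_add_le _ _).trans_lt (by linarith)
    have hyr : y ∈ ball xb r := by rw [mem_ball, dist_eq_norm]; linarith
    have hxr2 : x ∈ ball xb r := by rw [mem_ball, dist_eq_norm]; linarith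
    -- test
    set φ : Euc N → ℝ := fun y => L * sq τ (y - x) - L / 6 * h y with hφ
    have hξ : (0:ℝ) < 1 / L := by positivity
    have hCjξ : Cj * (1 / L) < r / 16 := by
      rw [div_lt_iff₀ hr] at hLCj
      rw [mul_one_div, div_lt_iff₀ hLp]; linarith
    have htest := hsub (1 / L) hξ φ hqcd y hyK.2 (by
      intro y' hy'
      have hy'K : y' ∈ K := by
        refine ⟨?_, hy'.2⟩
        have h1 := hy'.1
        rw [mem_closedBall, dist_eq_norm] at h1 ⊢
        have : y' - xb = (y' - y) + (y - xb) := by abel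
        rw [this]
        refine (norm_add_le _ _).trans (by linarith)
      have := hymax' y' hy'K
      simp only [hφ]; linarith)
    have hgrad : HasGradientAt φ (L • ((sq τ (y - x))⁻¹ • (y - x)) - (L / 6) • gradient h y) y :=
      grad_sub (grad_mul L (sq_grad hτ x y)) (grad_mul (L / 6) (hhd y))
    rw [hgrad.gradient] at htest
    set p : Euc N := L • ((sq τ (y - x))⁻¹ • (y - x)) - (L / 6) • gradient h y with hp
    have hsqp := sq_pos hτ (y - x)
    have hF : statF H y (u y) p (Iin Ω j g (1 / L) φ y + Iout Ω j g (1 / L) u y) ≤ 0 := by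
      by_cases hyΩ : y ∈ Ω
      · exact htest.1 hyΩ
      · have hyf : y ∈ frontier Ω := by rw [hΩ.1.frontier_eq]; exact ⟨hyK.2, hyΩ⟩
        have h1 := htest.2 hyf
        rcases min_le_iff.1 h1 with h2 | h2
        · exact h2
        · exfalso
          have h3 := hgeo y hyf hyr x hx hxr2
          rw [hp, hhn y hyf (ball_subset_closedBall hyr), inner_sub_left, inner_smul_left, inner_smul_left,
            inner_smul_left, inner_neg_left, real_inner_self_eq_norm_sq, (hn y hyf).1] at h2
          simp only [conj_trivial] at h2
          have h4 : -(1/12) ≤ (sq τ (y - x))⁻¹ * ⟪y - x, n y⟫ := by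
            have h5 : C * ‖y - x‖ ^ 2 ≤ 1/12 * sq τ (y - x) := by
              have := norm_le_sq τ (y - x)
              have h0 := norm_nonneg (y - x)
              nlinarith
            rw [inv_mul_eq_div, le_div_iff₀ hsqp]; linarith
          nlinarith
    have hpn : L / 4 ≤ ‖p‖ := by
      have h1 : ‖L • ((sq τ (y - x))⁻¹ • (y - x))‖ - ‖(L / 6) • gradient h y‖ ≤ ‖p‖ := norm_sub_norm_le _ _
      rw [norm_smul, norm_smul, norm_smul, Real.norm_of_nonneg hLp.le, Real.norm_of_nonneg (inv_pos.2 hsqp).le,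
        Real.norm_of_nonneg (by positivity : 0 ≤ L / 6)] at h1
      have h2 : 3 / 4 ≤ (sq τ (y - x))⁻¹ * ‖y - x‖ := by
        rw [inv_mul_eq_div, le_div_iff₀ hsqp]
        exact sq_ratio hτ hcon
      have h3 := hhg y
      have h4 := mul_le_mul_of_nonneg_left h2 hLp.le
      have h5 := mul_le_mul_of_nonneg_left h3 hLp.le
      linarith
    have hHy := hH y hyK.2 p
    have hpm : (L / 4) ^ m ≤ ‖p‖ ^ m := Real.rpow_le_rpow (by positivity) hpn (by linarith [hσ.1])
    have hL4 : (L / 4) ^ m = (1/4) ^ m * L ^ m := by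
      rw [← Real.mul_rpow (by norm_num) hLp.le]; congr 1; ring
    have hIi := Iin_bound hc hM hJ0 hJ1 hyK.2 hξ (K := 3/2 * L) (by positivity) (φ := φ) (by
      intro y' _
      have h1 := abs_le.1 (sq_lip_abs hτ (y' - x) (y - x))
      rw [sub_sub_sub_cancel_right] at h1
      have h2 := abs_le.1 (hlip y' y)
      simp only [hφ]
      rw [abs_le]
      constructor <;> nlinarith)
    have hIo := Iout_bound hc hM hJ0 hyK.2 hξ hb
    have e1 : (1 / L) ^ (-σ) = L ^ σ := by
      rw [one_div, Real.inv_rpow hLp.le, Real.rpow_neg hLp.le, inv_inv]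
    have e2 : L * (1 / L) ^ (1 - σ) = L ^ σ := by
      have : (1 - σ) = 1 + (-σ) := by ring
      rw [this, Real.rpow_add (by positivity), Real.rpow_one, e1]; field_simp
    rw [e1] at hIo
    have e3 : c * Cμ * (3 / 2 * L) * Cj * (1 / L) ^ (1 - σ) = c * Cμ * (3/2 * Cj) * L ^ σ := by
      rw [← e2]; ring
    rw [e3] at hIi
    unfold statF at hF
    rw [abs_le] at hIi hIo
    have : c₀ * (L/4) ^ m ≤ c₀ * ‖p‖ ^ m := mul_le_mul_of_nonneg_left hpm hc₀.le
    rw [hL4] at this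
    nlinarith
  refine ⟨r/4, by positivity, 3/2 * L, by positivity, ?_⟩
  intro x hx hxr y hy hyr
  have hyK : y ∈ K := ⟨by rw [mem_ball] at hyr; rw [mem_closedBall]; linarith, hy⟩
  suffices hs : u y ≤ u x + 3/2 * L * ‖y - x‖ by linarith
  apply le_of_forall_pos_le_add
  intro ε hε
  have h1 := husc x hx (u x + ε/2) (by linarith)
  obtain ⟨ρ, hρ, hρ2⟩ := mem_nhdsWithin_iff.1 h1
  obtain ⟨τ, hτ, hτ1, hτ2, hτ3⟩ : ∃ τ > 0, τ ≤ 1 / L ∧ 3 * τ ≤ ρ ∧ 3/2 * L * τ + L * τ ≤ ε/2 := by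
    refine ⟨min (1/L) (min (ρ/3) (ε / (5 * L))), by positivity, min_le_left _ _, ?_, ?_⟩
    · have : min (1/L) (min (ρ/3) (ε / (5 * L))) ≤ ρ/3 := (min_le_right _ _).trans (min_le_left _ _)
      linarith
    · have : min (1/L) (min (ρ/3) (ε / (5 * L))) ≤ ε / (5 * L) := (min_le_right _ _).trans (min_le_right _ _)
      rw [le_div_iff₀ (by positivity)] at this
      linarith
  obtain ⟨z, hz, hzx, hzm⟩ := main x hx hxr τ hτ hτ1
  have h2 := hzm y hyK
  have h3 : u z < u x + ε/2 := hρ2 ⟨by rw [mem_ball, dist_eq_norm]; linarith, hz⟩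
  have h4 := sq_le hτ (y - x)
  have h5 := (sq_pos hτ (z - x)).le
  have h6 := (abs_le.1 (hlip z x)).2
  have h7 := (abs_le.1 (hlip x y)).2
  rw [norm_sub_rev x y] at h7
  nlinarith [mul_le_mul_of_nonneg_left h4 hLp.le, mul_nonneg hLp.le h5, mul_le_mul_of_nonneg_left h6 hLp.le,
    mul_le_mul_of_nonneg_left h7 hLp.le, mul_le_mul_of_nonneg_left hzx.le hLp.le]


theorem modulus_small {ω : ℝ → ℝ} (hω : IsModulus ω) {ε : ℝ} (hε : 0 < ε) :
    ∃ ρ > 0, ∀ s ≤ ρ, ω s ≤ ε := by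
  obtain ⟨-, hmono, hlim⟩ := hω
  have h1 : ∀ᶠ s in 𝓝[>] (0:ℝ), ω s < ε := hlim.eventually (gt_mem_nhds hε)
  obtain ⟨s, hs1, hs2⟩ := (h1.and self_mem_nhdsWithin).exists
  exact ⟨s, hs2, fun t ht => (hmono ht).trans hs1.le⟩

theorem ham_abs {Ω : Set (Euc N)} {H : Euc N → Euc N → ℝ} {σ : ℝ} (hHam : StatCoerciveOK Ω H σ) :
    ∀ η > 0, ∃ μ : ℝ, 0 < μ ∧ μ ≤ 1 ∧ 1 - μ ≤ η ∧ ∃ e > 0, ∀ P ≥ 0, ∃ ρ > 0, ∀ x y p q : Euc N,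
      ‖x - y‖ ≤ ρ → ‖p‖ ≤ P → ‖q‖ ≤ P → ‖p - q‖ ≤ e → H y q - μ * H x (μ⁻¹ • p) ≤ η := by
  intro η hη
  obtain ⟨m, c₀, D, -, hcase⟩ := hHam
  rcases hcase with ⟨-, C, ω, hC, hω, hHa⟩ | ⟨A, Cb, ⟨hm, hA, hCb, hHb⟩, C, ω, hC, hω, hHc⟩
  · refine ⟨1, one_pos, le_rfl, by linarith, η / (2 * C), by positivity, fun P hP => ?_⟩
    obtain ⟨ρ, hρ, hρ2⟩ := modulus_small hω (show 0 < η / (2 * (1 + P)) by positivity)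
    refine ⟨ρ, hρ, fun x y p q hxy hp hq hpq => ?_⟩
    rw [inv_one, one_smul, one_mul]
    have h1 := hHa x y q p
    have h2 : ω ‖x - y‖ * (1 + ‖q‖) ≤ η / (2 * (1 + P)) * (1 + P) := by
      have := norm_nonneg q
      apply mul_le_mul (hρ2 _ hxy) (by linarith) (by positivity) (by positivity)
    have h3 : η / (2 * (1 + P)) * (1 + P) = η / 2 := by field_simp
    have h4 : C * ‖q - p‖ ≤ C * (η / (2 * C)) := by
      rw [norm_sub_rev]; gcongr
    have h5 : C * (η / (2 * C)) = η / 2 := by field_simp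
    linarith
  · set t : ℝ := min (1/2) (min η (η / (4 * A))) with ht
    have ht0 : 0 < t := by positivity
    have ht1 : t ≤ 1/2 := min_le_left _ _
    have ht2 : t ≤ η := (min_le_right _ _).trans (min_le_left _ _)
    have ht3 : t * A ≤ η / 4 := by
      have : t ≤ η / (4 * A) := (min_le_right _ _).trans (min_le_right _ _)
      rw [le_div_iff₀ (by positivity)] at this; linarith
    have hm1 : 0 < m - 1 := by linarith
    set κ : ℝ := min (η / 4) (t * (Cb * (m - 1))) with hκ
    have hκ0 : 0 < κ := by positivity
    have h2m : (0:ℝ) < 2 ^ (m - 1) := by positivity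
    refine ⟨1 - t, by linarith, by linarith, by linarith, min 1 (κ / (C * 2 ^ (m - 1))), by positivity, fun P hP => ?_⟩
    obtain ⟨ρ, hρ, hρ2⟩ := modulus_small hω (show 0 < η / (4 * (1 + P ^ m)) by positivity)
    refine ⟨ρ, hρ, fun x y p q hxy hp hq hpq => ?_⟩
    have h1 := hHb (1 - t) ⟨by linarith, by linarith⟩ x p
    have h2 := hHc x y q p
    have hmax : max ‖q‖ ‖p‖ ≤ P := max_le hq hp
    have hmax0 : 0 ≤ max ‖q‖ ‖p‖ := le_max_of_le_left (norm_nonneg _)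
    have h3 : ω ‖x - y‖ * (1 + max ‖q‖ ‖p‖ ^ m) ≤ η / (4 * (1 + P ^ m)) * (1 + P ^ m) := by
      apply mul_le_mul (hρ2 _ hxy) _ (by positivity) (by positivity)
      have := Real.rpow_le_rpow hmax0 hmax (by linarith : 0 ≤ m)
      linarith
    have h4 : η / (4 * (1 + P ^ m)) * (1 + P ^ m) = η / 4 := by field_simp
    have hmax2 : max ‖q‖ ‖p‖ ≤ 2 * max 1 ‖p‖ := by
      have ha : ‖q‖ ≤ ‖p‖ + ‖p - q‖ := by
        have : q = p - (p - q) := by abel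
        calc ‖q‖ = ‖p - (p - q)‖ := by rw [← this]
          _ ≤ _ := norm_sub_le _ _
      have hb : ‖p - q‖ ≤ 1 := hpq.trans (min_le_left _ _)
      have hc := le_max_left 1 ‖p‖
      have hd := le_max_right 1 ‖p‖
      exact max_le (by linarith) (by linarith)
    have h5 : max ‖q‖ ‖p‖ ^ (m - 1) ≤ 2 ^ (m - 1) * (1 + ‖p‖ ^ m) := by
      calc _ ≤ (2 * max 1 ‖p‖) ^ (m - 1) := Real.rpow_le_rpow hmax0 hmax2 hm1.le
        _ = 2 ^ (m - 1) * (max 1 ‖p‖) ^ (m - 1) := Real.mul_rpow (by norm_num) (by positivity)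
        _ ≤ 2 ^ (m - 1) * (1 + ‖p‖ ^ m) := by
          gcongr
          have hpm : 0 ≤ ‖p‖ ^ m := by positivity
          rcases le_total ‖p‖ 1 with hp1 | hp1
          · rw [max_eq_left hp1, Real.one_rpow]; linarith
          · rw [max_eq_right hp1]
            have := Real.rpow_le_rpow_of_exponent_le hp1 (by linarith : m - 1 ≤ m)
            linarith
    have h6 : C * ‖q - p‖ * max ‖q‖ ‖p‖ ^ (m - 1) ≤ κ * (1 + ‖p‖ ^ m) := by
      have ha : ‖q - p‖ ≤ κ / (C * 2 ^ (m - 1)) := by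
        rw [norm_sub_rev]; exact hpq.trans (min_le_right _ _)
      calc _ ≤ C * (κ / (C * 2 ^ (m - 1))) * (2 ^ (m - 1) * (1 + ‖p‖ ^ m)) := by gcongr
        _ = κ * (1 + ‖p‖ ^ m) := by field_simp
    have h7 : κ ≤ η / 4 := min_le_left _ _
    have h8 : κ * ‖p‖ ^ m ≤ t * (Cb * (m - 1)) * ‖p‖ ^ m :=
      mul_le_mul_of_nonneg_right (min_le_right _ _) (by positivity)
    have h9 : (1 - (1 - t)) * (Cb * (1 - m) * ‖p‖ ^ m + A) = - (t * (Cb * (m - 1)) * ‖p‖ ^ m) + t * A := by ring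
    rw [h9] at h1
    linarith


theorem sub_step {Ω : Set (Euc N)} {j : Euc N → Euc N → Euc N} {g : Euc N → Euc N → ℝ}
    {n : Euc N → Euc N} {Cj : ℝ} {H : Euc N → Euc N → ℝ} {u : Euc N → ℝ} (hΩo : IsOpen Ω)
    (hsub : IsSubSol Ω j g n Cj (statF H) u) {μ : ℝ} (hμ : 0 < μ) {ξ : ℝ} (hξ : 0 < ξ)
    {φ : Euc N → ℝ} (hφ : ContDiff ℝ 1 φ) {x : Euc N} (hx : x ∈ closure Ω)
    (hmax : ∀ y ∈ closedBall x (Cj * ξ) ∩ closure Ω, μ * u y - φ y ≤ μ * u x - φ x)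
    {p : Euc N} (hp : HasGradientAt φ p x) (hfr : x ∈ frontier Ω → 0 < ⟪p, n x⟫) :
    μ * u x - Iin Ω j g ξ φ x - Iout Ω j g ξ (fun y => μ * u y) x + μ * H x (μ⁻¹ • p) ≤ 0 := by
  have h1 := hsub ξ hξ (fun y => μ⁻¹ * φ y) (contDiff_const.mul hφ) x hx (by
    intro y hy
    have h2 := mul_le_mul_of_nonneg_left (hmax y hy) (inv_pos.2 hμ).le
    rw [mul_sub, mul_sub, inv_mul_cancel_left₀ hμ.ne', inv_mul_cancel_left₀ hμ.ne'] at h2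
    exact h2)
  rw [(grad_mul μ⁻¹ hp).gradient, Iin_mul] at h1
  have h3 : statF H x (u x) (μ⁻¹ • p) (μ⁻¹ * Iin Ω j g ξ φ x + Iout Ω j g ξ u x) ≤ 0 := by
    by_cases hxΩ : x ∈ Ω
    · exact h1.1 hxΩ
    · have hxf : x ∈ frontier Ω := by rw [hΩo.frontier_eq]; exact ⟨hx, hxΩ⟩
      rcases min_le_iff.1 (h1.2 hxf) with h4 | h4
      · exact h4
      · exfalso
        rw [inner_smul_left] at h4
        have := mul_pos (inv_pos.2 hμ) (hfr hxf)
        simp only [conj_trivial] at h4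
        linarith
  unfold statF at h3
  rw [Iout_mul]
  have h5 := mul_le_mul_of_nonneg_left h3 hμ.le
  have h6 : μ * (μ⁻¹ * Iin Ω j g ξ φ x) = Iin Ω j g ξ φ x := mul_inv_cancel_left₀ hμ.ne' _
  nlinarith

theorem sup_step {Ω : Set (Euc N)} {j : Euc N → Euc N → Euc N} {g : Euc N → Euc N → ℝ}
    {n : Euc N → Euc N} {Cj : ℝ} {H : Euc N → Euc N → ℝ} {v : Euc N → ℝ} (hΩo : IsOpen Ω)
    (hsup : IsSuperSol Ω j g n Cj (statF H) v) {ξ : ℝ} (hξ : 0 < ξ)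
    {φ : Euc N → ℝ} (hφ : ContDiff ℝ 1 φ) {x : Euc N} (hx : x ∈ closure Ω)
    (hmin : ∀ y ∈ closedBall x (Cj * ξ) ∩ closure Ω, v x - φ x ≤ v y - φ y)
    {p : Euc N} (hp : HasGradientAt φ p x) (hfr : x ∈ frontier Ω → ⟪p, n x⟫ < 0) :
    0 ≤ v x - Iin Ω j g ξ φ x - Iout Ω j g ξ v x + H x p := by
  have h1 := hsup ξ hξ φ hφ x hx hmin
  rw [hp.gradient] at h1
  have h3 : 0 ≤ statF H x (v x) p (Iin Ω j g ξ φ x + Iout Ω j g ξ v x) := by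
    by_cases hxΩ : x ∈ Ω
    · exact h1.1 hxΩ
    · have hxf : x ∈ frontier Ω := by rw [hΩo.frontier_eq]; exact ⟨hx, hxΩ⟩
      rcases le_max_iff.1 (h1.2 hxf) with h4 | h4
      · exact h4
      · exact absurd (hfr hxf) (not_lt.2 h4)
  unfold statF at h3
  linarith

theorem doubling {Ω : Set (Euc N)} {w v a b : Euc N → ℝ} {xb : Euc N} (hxb : xb ∈ closure Ω)
    (hw : UpperSemicontinuousOn w (closure Ω)) (hv : LowerSemicontinuousOn v (closure Ω))
    (ha : Continuous a) (hbc : Continuous b)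
    (hmax : ∀ y ∈ closure Ω, w y - v y + (a y + b y) ≤ w xb - v xb + (a xb + b xb))
    {r L : ℝ} (hr : 0 < r) (hL : 0 ≤ L)
    (hlip : ∀ x ∈ closure Ω, x ∈ ball xb r → ∀ y ∈ closure Ω, y ∈ ball xb r →
      (w y + a y) - (w x + a x) ≤ L * ‖y - x‖) :
    ∃ (xs ys : ℕ → Euc N) (τ : ℕ → ℝ), (∀ k, 0 < τ k) ∧ (∀ k, xs k ∈ closure Ω) ∧ (∀ k, ys k ∈ closure Ω) ∧
      Tendsto xs atTop (𝓝 xb) ∧ Tendsto ys atTop (𝓝 xb) ∧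
      Tendsto (fun k => w (xs k)) atTop (𝓝 (w xb)) ∧ Tendsto (fun k => v (ys k)) atTop (𝓝 (v xb)) ∧
      ∀ k, ∀ x ∈ closedBall xb (r/2) ∩ closure Ω, ∀ y ∈ closedBall xb (r/2) ∩ closure Ω,
        w x + a x - v y + b y - (L + 1) * sq (τ k) (x - y) - ‖y - xb‖ ^ 2 ≤
        w (xs k) + a (xs k) - v (ys k) + b (ys k) - (L + 1) * sq (τ k) (xs k - ys k) - ‖ys k - xb‖ ^ 2 := by
  set K : Set (Euc N) := closedBall xb (r/2) ∩ closure Ω with hK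
  have hKc : IsCompact K := (isCompact_closedBall _ _).inter_right isClosed_closure
  have hxbK : xb ∈ K := ⟨mem_closedBall_self (by positivity), hxb⟩
  have hKr : ∀ x ∈ K, x ∈ ball xb r := fun x hx => closedBall_subset_ball (by linarith) hx.1
  set τ : ℕ → ℝ := fun k => 1 / ((k:ℝ) + 1) with hτ
  have hτp : ∀ k, 0 < τ k := fun k => by simp only [hτ]; positivity
  have hτl : Tendsto τ atTop (𝓝 0) := tendsto_one_div_add_atTop_nhds_zero_nat
  have husc : UpperSemicontinuousOn (fun q : Euc N × Euc N => w q.1 - v q.2) (K ×ˢ K) := by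
    rintro ⟨x, y⟩ ⟨hx, hy⟩ t ht
    simp only at hx hy ht
    have h1 := hw x hx.2 (w x + (t - (w x - v y)) / 2) (by linarith)
    have h2 := hv y hy.2 (v y - (t - (w x - v y)) / 2) (by linarith)
    have e1 : Tendsto (Prod.fst : Euc N × Euc N → Euc N) (𝓝[K ×ˢ K] (x, y)) (𝓝[closure Ω] x) :=
      continuous_fst.continuousWithinAt.tendsto_nhdsWithin (fun q hq => hq.1.2)
    have e2 : Tendsto (Prod.snd : Euc N × Euc N → Euc N) (𝓝[K ×ˢ K] (x, y)) (𝓝[closure Ω] y) :=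
      continuous_snd.continuousWithinAt.tendsto_nhdsWithin (fun q hq => hq.2.2)
    filter_upwards [e1.eventually h1, e2.eventually h2] with q hq1 hq2
    linarith
  have hex : ∀ k, ∃ q ∈ K ×ˢ K, ∀ q' ∈ K ×ˢ K,
      (w q'.1 - v q'.2) + (a q'.1 + b q'.2 - (L + 1) * sq (τ k) (q'.1 - q'.2) - ‖q'.2 - xb‖ ^ 2) ≤
      (w q.1 - v q.2) + (a q.1 + b q.2 - (L + 1) * sq (τ k) (q.1 - q.2) - ‖q.2 - xb‖ ^ 2) := by
    intro k
    have hcont : Continuous (fun q : Euc N × Euc N =>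
        a q.1 + b q.2 - (L + 1) * sq (τ k) (q.1 - q.2) - ‖q.2 - xb‖ ^ 2) := by
      have : Continuous (fun q : Euc N × Euc N => sq (τ k) (q.1 - q.2)) := by
        unfold sq; fun_prop
      fun_prop
    obtain ⟨q, hq, hqm⟩ := (usc_add_cont husc hcont).exists_isMaxOn
      (show (K ×ˢ K).Nonempty from ⟨(xb, xb), hxbK, hxbK⟩) (hKc.prod hKc)
    exact ⟨q, hq, fun q' hq' => hqm hq'⟩
  choose q hqK hqm using hex
  have hx : ∀ k, (q k).1 ∈ K := fun k => (hqK k).1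
  have hy : ∀ k, (q k).2 ∈ K := fun k => (hqK k).2
  have hd : ∀ k, ‖(q k).1 - (q k).2‖ ≤ (L + 1) * τ k := by
    intro k
    have h1 := hqm k ((q k).2, (q k).2) ⟨hy k, hy k⟩
    simp only [sub_self, sq_zero (hτp k)] at h1
    have h2 := hlip _ (hy k).2 (hKr _ (hy k)) _ (hx k).2 (hKr _ (hx k))
    have h3 := norm_le_sq (τ k) ((q k).1 - (q k).2)
    nlinarith
  have hd2 : ∀ k, ‖(q k).2 - xb‖ ^ 2 ≤ (L + 1) * τ k + L * ((L + 1) * τ k) := by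
    intro k
    have h1 := hqm k (xb, xb) ⟨hxbK, hxbK⟩
    simp only [sub_self, sq_zero (hτp k), norm_zero] at h1
    have h2 := hlip _ (hy k).2 (hKr _ (hy k)) _ (hx k).2 (hKr _ (hx k))
    have h3 := (sq_pos (hτp k) ((q k).1 - (q k).2)).le
    have h4 := hmax _ (hy k).2
    have h5 := mul_le_mul_of_nonneg_left (hd k) hL
    have h6 : 0 ≤ (L + 1) * sq (τ k) ((q k).1 - (q k).2) := by positivity
    simp only [ne_eq, OfNat.ofNat_ne_zero, not_false_eq_true, zero_pow] at h1
    linarith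
  have hyl : Tendsto (fun k => (q k).2) atTop (𝓝 xb) := by
    rw [tendsto_iff_norm_sub_tendsto_zero]
    have h0 : Tendsto (fun k => (L + 1) * τ k + L * ((L + 1) * τ k)) atTop (𝓝 0) := by
      simpa using (hτl.const_mul (L + 1)).add ((hτl.const_mul (L + 1)).const_mul L)
    have h1 : Tendsto (fun k => ‖(q k).2 - xb‖ ^ 2) atTop (𝓝 0) := squeeze_zero (fun k => by positivity) hd2 h0
    have h2 := h1.sqrt
    simpa [Real.sqrt_sq (norm_nonneg _)] using h2
  have hxyl : Tendsto (fun k => (q k).1 - (q k).2) atTop (𝓝 0) := by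
    rw [tendsto_zero_iff_norm_tendsto_zero]
    refine squeeze_zero (fun k => norm_nonneg _) hd ?_
    simpa using hτl.const_mul (L + 1)
  have hxl : Tendsto (fun k => (q k).1) atTop (𝓝 xb) := by
    simpa using hxyl.add hyl
  have hwa : Tendsto (fun k => w (q k).1 + a (q k).1) atTop (𝓝 (w xb + a xb)) := by
    rw [tendsto_iff_norm_sub_tendsto_zero]
    refine squeeze_zero (g := fun k => L * ‖(q k).1 - xb‖) (fun k => norm_nonneg _) (fun k => ?_) ?_
    · rw [Real.norm_eq_abs, abs_le]
      have h1 := hlip _ hxb (mem_ball_self hr) _ (hx k).2 (hKr _ (hx k))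
      have h2 := hlip _ (hx k).2 (hKr _ (hx k)) _ hxb (mem_ball_self hr)
      rw [norm_sub_rev] at h2
      constructor <;> linarith
    · rw [tendsto_iff_norm_sub_tendsto_zero] at hxl
      simpa using hxl.const_mul L
  have hwl : Tendsto (fun k => w (q k).1) atTop (𝓝 (w xb)) := by
    have := hwa.sub ((ha.tendsto xb).comp hxl)
    simpa using this
  have hvl : Tendsto (fun k => v (q k).2) atTop (𝓝 (v xb)) := by
    rw [tendsto_order]
    constructor
    · intro t ht
      have h1 := hv xb hxb t ht
      have e2 : Tendsto (fun k => (q k).2) atTop (𝓝[closure Ω] xb) :=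
        tendsto_nhdsWithin_iff.2 ⟨hyl, Eventually.of_forall (fun k => (hy k).2)⟩
      exact e2.eventually h1
    · intro t ht
      have h1 : Tendsto (fun k => (w (q k).1 + a (q k).1) + b (q k).2 - (w xb - v xb + (a xb + b xb)) + (L + 1) * τ k)
          atTop (𝓝 ((w xb + a xb) + b xb - (w xb - v xb + (a xb + b xb)) + (L + 1) * 0)) :=
        ((hwa.add ((hbc.tendsto xb).comp hyl)).sub tendsto_const_nhds).add (hτl.const_mul _)
      filter_upwards [h1.eventually (gt_mem_nhds (show _ < t by linarith))] with k hk
      refine lt_of_le_of_lt ?_ hk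
      have h1 := hqm k (xb, xb) ⟨hxbK, hxbK⟩
      simp only [sub_self, sq_zero (hτp k), norm_zero] at h1
      have h3 := (sq_pos (hτp k) ((q k).1 - (q k).2)).le
      have h6 : 0 ≤ (L + 1) * sq (τ k) ((q k).1 - (q k).2) := by positivity
      have h7 : 0 ≤ ‖(q k).2 - xb‖ ^ 2 := by positivity
      simp only [ne_eq, OfNat.ofNat_ne_zero, not_false_eq_true, zero_pow] at h1
      linarith
  refine ⟨fun k => (q k).1, fun k => (q k).2, τ, hτp, fun k => (hx k).2, fun k => (hy k).2, hxl, hyl, hwl, hvl, ?_⟩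
  intro k x hx y hy
  have := hqm k (x, y) ⟨hx, hy⟩
  simp only at this ⊢
  linarith


set_option maxHeartbeats 2000000 in
theorem comparison_aux
    (hN : 0 < N) (Ω : Set (Euc N)) (hΩ : IsW2Domain hN Ω)
    (n : Euc N → Euc N) (hn : IsExteriorNormal Ω n)
    (g : Euc N → Euc N → ℝ) (Cμ Dμ σ : ℝ) (hM : AssumptionM Ω g Cμ Dμ σ)
    (j : Euc N → Euc N → Euc N) (Aj : ℝ) (hJ0 : AssumptionJ0 Ω j Aj)
    (Cj' Cj Dj : ℝ) (hJ1 : AssumptionJ1 Ω j Cj' Cj Dj)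
    (H : Euc N → Euc N → ℝ) (hHam : StatCoerciveOK Ω H σ)
    (u v : Euc N → ℝ) (M : ℝ) (hM1 : 1 ≤ M)
    (hub : ∀ x ∈ closure Ω, |u x| ≤ M) (husc : UpperSemicontinuousOn u (closure Ω))
    (hsub : IsSubSol Ω j g n Cj (statF H) u)
    (hvb : ∀ x ∈ closure Ω, |v x| ≤ M) (hlsc : LowerSemicontinuousOn v (closure Ω))
    (hsup : IsSuperSol Ω j g n Cj (statF H) v) (xst : Euc N) (hxst : xst ∈ closure Ω)
    (hpos : v xst < u xst) : False := by
  obtain ⟨c, hc⟩ := rad_exists hN hM.1.2.1.1 hM.1.2.1.2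
  have hcp := hc.1
  have hCμ := hM.1.1
  have hCj := hJ1.2.1
  have hσ := hM.1.2.1
  set A : ℝ := (u xst - v xst) / 2 with hA
  have hAp : 0 < A := by simp only [hA]; linarith
  obtain ⟨η, hη0, hη1, hη2⟩ : ∃ η > 0, η ≤ A / 8 ∧ η * M ≤ A := by
    refine ⟨min (A/8) (A / M), by positivity, min_le_left _ _, ?_⟩
    have : min (A/8) (A / M) ≤ A / M := min_le_right _ _
    rwa [le_div_iff₀ (by linarith)] at this
  obtain ⟨μ, hμ0, hμ1, hμη, e, he, hHe⟩ := ham_abs hHam η hη0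
  set w : Euc N → ℝ := fun y => μ * u y with hw
  have hwb : ∀ x ∈ closure Ω, |w x| ≤ M := by
    intro x hx
    simp only [hw, abs_mul, abs_of_pos hμ0]
    have := hub x hx
    nlinarith [abs_nonneg (u x)]
  have hwusc : UpperSemicontinuousOn w (closure Ω) := by
    intro x hx t ht
    have h1 := husc x hx (t / μ) (show u x < t / μ by
      have ht : w x < t := ht
      rw [lt_div_iff₀ hμ0]; simp only [hw] at ht; linarith)
    filter_upwards [h1] with y hy
    have hy : u y < t / μ := hy
    rw [lt_div_iff₀ hμ0] at hy
    show w y < t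
    simp only [hw]; linarith
  have hwst : A ≤ w xst - v xst := by
    have h1 := abs_le.1 (hub xst hxst)
    have h2 : (1 - μ) * u xst ≤ (1 - μ) * M := mul_le_mul_of_nonneg_left h1.2 (by linarith)
    have h3 : (1 - μ) * M ≤ η * M := mul_le_mul_of_nonneg_right hμη (by linarith)
    simp only [hw]
    have h4 : μ * u xst = u xst - (1 - μ) * u xst := by ring
    have h5 : u xst - v xst = 2 * A := by simp only [hA]; ring
    linarith
  -- δ
  obtain ⟨δ, hδ0, hδe, hδ1, hδ2⟩ : ∃ δ > 0, 28 * δ ≤ e ∧ 9 * δ ≤ A / 8 ∧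
      c * Cμ * (27 * Cj + 8) * δ ≤ A / 8 := by
    refine ⟨min (e / 28) (min (A / 72) (A / (8 * (c * Cμ * (27 * Cj + 8))))), by positivity, ?_, ?_, ?_⟩
    · have := min_le_left (e / 28) (min (A / 72) (A / (8 * (c * Cμ * (27 * Cj + 8)))))
      linarith
    · have : min (e / 28) (min (A / 72) (A / (8 * (c * Cμ * (27 * Cj + 8))))) ≤ A / 72 :=
        (min_le_right _ _).trans (min_le_left _ _)
      linarith
    · have : min (e / 28) (min (A / 72) (A / (8 * (c * Cμ * (27 * Cj + 8))))) ≤ A / (8 * (c * Cμ * (27 * Cj + 8))) :=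
        (min_le_right _ _).trans (min_le_right _ _)
      rw [le_div_iff₀ (by positivity)] at this
      linarith
  -- sup
  set S : Set ℝ := (fun x => w x - v x) '' closure Ω with hS
  have hSb : BddAbove S := by
    refine ⟨2 * M, ?_⟩
    rintro _ ⟨x, hx, rfl⟩
    have h1 := abs_le.1 (hwb x hx); have h2 := abs_le.1 (hvb x hx)
    simp only; linarith
  have hSne : S.Nonempty := ⟨_, xst, hxst, rfl⟩
  have hle : ∀ x ∈ closure Ω, w x - v x ≤ sSup S := fun x hx => le_csSup hSb ⟨x, hx, rfl⟩
  have hAS : A ≤ sSup S := hwst.trans (hle _ hxst)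
  obtain ⟨_, ⟨x₀, hx₀, rfl⟩, hx₀S⟩ := exists_lt_of_lt_csSup hSne (show sSup S - δ < sSup S by linarith)
  simp only at hx₀S
  -- h
  obtain ⟨h, hhcd, hhb, hhg, hhn⟩ := geo_h hΩ hn x₀ 2 (show (0:ℝ) < 1 / 64 by norm_num)
  have hhlip := h_lip hhcd hhg
  have hhd : ∀ x, HasGradientAt h (gradient h x) x := fun x => (hhcd.differentiable (by norm_num) x).hasGradientAt
  set Θ : Euc N → ℝ := fun y => 3 * δ * (1 + ‖y - x₀‖ ^ 2)⁻¹ with hΘ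
  set gΘ : Euc N → Euc N := fun x => (3 * δ) • ((-((1+‖x-x₀‖^2)^2)⁻¹)•((2:ℝ)•(x-x₀))) with hgΘ
  have hΘd : ∀ x, HasGradientAt Θ (gΘ x) x := fun x => grad_mul (3 * δ) (bump_grad x₀ x)
  have hΘcd : ContDiff ℝ 1 Θ := contDiff_const.mul (bump_cd x₀)
  have hgΘn : ∀ x, ‖gΘ x‖ ≤ 3 * δ := by
    intro x
    simp only [hgΘ]
    rw [norm_smul, Real.norm_of_nonneg (by positivity)]
    have := bump_grad_norm x₀ x
    nlinarith
  have hΘlip := lip_of_grad hΘd hgΘn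
  clear_value gΘ
  have hΘ0 : ∀ x, 0 ≤ Θ x := fun x => by simp only [hΘ]; positivity
  have hΘ3 : ∀ x, Θ x ≤ 3 * δ := by
    intro x
    simp only [hΘ]
    have : (1 + ‖x - x₀‖ ^ 2)⁻¹ ≤ 1 := inv_le_one_of_one_le₀ (by nlinarith [norm_nonneg (x - x₀)])
    nlinarith
  set a : Euc N → ℝ := fun y => Θ y + 4 * δ * h y with ha
  set b : Euc N → ℝ := fun y => 4 * δ * h y with hbdef
  have hacd : ContDiff ℝ 1 a := hΘcd.add (contDiff_const.mul hhcd)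
  have hbcd : ContDiff ℝ 1 b := contDiff_const.mul hhcd
  have hblip : ∀ x y, |b x - b y| ≤ 12 * δ * ‖x - y‖ := by
    intro x y
    simp only [hbdef]
    rw [← mul_sub, abs_mul, abs_of_pos (by positivity)]
    have := hhlip x y
    nlinarith
  have halip : ∀ x y, |a x - a y| ≤ 15 * δ * ‖x - y‖ := by
    intro x y
    have h1 := abs_le.1 (hblip x y); have h2 := abs_le.1 (hΘlip x y)
    simp only [hbdef] at h1
    simp only [ha]
    rw [abs_le]; constructor <;> linarith
  set θ : Euc N → ℝ := fun y => a y + b y with hθ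
  have hθlip : ∀ x y, |θ x - θ y| ≤ (27 * δ) * ‖x - y‖ := by
    intro x y
    have h1 := abs_le.1 (hblip x y); have h2 := abs_le.1 (halip x y)
    simp only [hθ]
    rw [abs_le]; constructor <;> linarith
  have hθb : ∀ x, |θ x| ≤ 4 * δ := by
    intro x
    have h1 := abs_le.1 (hhb x); have h2 := hΘ0 x; have h3 := hΘ3 x
    simp only [hθ, ha, hbdef]
    rw [abs_le]; constructor <;> nlinarith
  -- global max
  obtain ⟨xb, hxb, hxb1, hmax⟩ : ∃ xb ∈ closure Ω, xb ∈ closedBall x₀ 1 ∧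
      ∀ y ∈ closure Ω, w y - v y + (a y + b y) ≤ w xb - v xb + (a xb + b xb) := by
    have hus : UpperSemicontinuousOn (fun y => w y + -(v y) + (a y + b y)) (closedBall x₀ 1 ∩ closure Ω) :=
      usc_add_cont ((hwusc.add (lsc_neg hlsc)).mono inter_subset_right) (hacd.continuous.add hbcd.continuous)
    have hx₀m : x₀ ∈ closedBall x₀ 1 ∩ closure Ω := ⟨mem_closedBall_self zero_le_one, hx₀⟩
    obtain ⟨xb, hxb, hm⟩ := hus.exists_isMaxOn ⟨x₀, hx₀m⟩
      ((isCompact_closedBall _ _).inter_right isClosed_closure)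
    refine ⟨xb, hxb.2, hxb.1, fun y hy => ?_⟩
    by_cases hy1 : y ∈ closedBall x₀ 1
    · have := hm (show y ∈ closedBall x₀ 1 ∩ closure Ω from ⟨hy1, hy⟩)
      simp only [mem_ofPred_eq] at this
      linarith
    · have h1 := hm hx₀m
      simp only [mem_ofPred_eq] at h1
      have h2 := hle y hy
      have h3 : Θ x₀ = 3 * δ := by simp [hΘ]
      have h4 : Θ y ≤ 3 * δ / 2 := by
        rw [mem_closedBall, dist_eq_norm, not_le] at hy1
        simp only [hΘ]
        have : (1 + ‖y - x₀‖ ^ 2)⁻¹ ≤ 2⁻¹ := inv_anti₀ (by norm_num) (by nlinarith)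
        nlinarith
      have h5 := (abs_le.1 (hhb y)).2
      have h6 := (abs_le.1 (hhb x₀)).1
      have h7 : a y + b y ≤ 3 * δ / 2 + δ / 8 := by simp only [ha, hbdef]; nlinarith
      have h8 : 3 * δ - δ / 8 ≤ a x₀ + b x₀ := by simp only [ha, hbdef]; nlinarith
      linarith
  have hxbA : A - 9 * δ ≤ w xb - v xb := by
    have h1 := hmax x₀ hx₀
    have h2 := abs_le.1 (hθb x₀); have h3 := abs_le.1 (hθb xb)
    simp only [hθ] at h2 h3
    linarith
  -- local constants
  obtain ⟨r1, hr1, C, hC, hgeo⟩ := geo_normal hΩ hn hxb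
  obtain ⟨m, c₀, D, hH1, -⟩ := id hHam
  obtain ⟨r2, hr2, L, hL, hulip⟩ := u_loc_lip hΩ hn hc hM.1 hJ0 hJ1 hH1 hub husc hsub hxb
  set r : ℝ := min 1 (min r1 r2) with hr
  have hr0 : 0 < r := by positivity
  have hrr1 : r ≤ r1 := (min_le_right _ _).trans (min_le_left _ _)
  have hrr2 : r ≤ r2 := (min_le_right _ _).trans (min_le_right _ _)
  have hr11 : r ≤ 1 := min_le_left _ _
  have hlipw : ∀ x ∈ closure Ω, x ∈ ball xb r → ∀ y ∈ closure Ω, y ∈ ball xb r →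
      (w y + a y) - (w x + a x) ≤ (L + 15 * δ) * ‖y - x‖ := by
    intro x hx hxr y hy hyr
    have h1 := hulip x hx (ball_subset_ball hrr2 hxr) y hy (ball_subset_ball hrr2 hyr)
    have h2 := (abs_le.1 (halip y x)).2
    have h3 : μ * (u y - u x) ≤ L * ‖y - x‖ := by
      have h4 := mul_le_mul_of_nonneg_left h1 hμ0.le
      have h5 : μ * (L * ‖y - x‖) ≤ 1 * (L * ‖y - x‖) := mul_le_mul_of_nonneg_right hμ1 (by positivity)
      linarith
    simp only [hw]
    linarith
  obtain ⟨xs, ys, τ, hτ, hxs, hys, hxl, hyl, hwl, hvl, hdm⟩ :=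
    doubling hxb hwusc hlsc hacd.continuous hbcd.continuous hmax hr0 (by positivity) hlipw
  set P : ℝ := L + 15 * δ + 1 with hP
  have hP0 : 0 < P := by positivity
  obtain ⟨ρ, hρ, hHρ⟩ := hHe (P + 15 * δ) (by positivity)
  -- ξ
  obtain ⟨ξ, hξ, hξr, hξI⟩ : ∃ ξ > 0, Cj * ξ ≤ r / 8 ∧
      c * Cμ * (2 * P + 27 * δ + 2) * Cj * ξ ^ (1 - σ) ≤ A / 8 := by
    have h1 : Tendsto (fun ξ : ℝ => c * Cμ * (2 * P + 27 * δ + 2) * Cj * ξ ^ (1 - σ)) (𝓝[>] 0) (𝓝 0) := by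
      have h2 : Tendsto (fun ξ : ℝ => ξ ^ (1 - σ)) (𝓝 0) (𝓝 0) := by
        have h3 := (Real.continuousAt_rpow_const 0 (1 - σ) (Or.inr (by linarith [hσ.2]))).tendsto
        rwa [Real.zero_rpow (by linarith [hσ.2])] at h3
      simpa using (h2.mono_left nhdsWithin_le_nhds).const_mul (c * Cμ * (2 * P + 27 * δ + 2) * Cj)
    have h2 : Tendsto (fun ξ : ℝ => Cj * ξ) (𝓝[>] 0) (𝓝 0) := by
      have : Tendsto (fun ξ : ℝ => Cj * ξ) (𝓝 0) (𝓝 (Cj * 0)) := (continuous_const.mul continuous_id).tendsto 0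
      rw [mul_zero] at this
      exact this.mono_left nhdsWithin_le_nhds
    obtain ⟨ξ, ⟨h3, h4⟩, h5⟩ := (((h1.eventually (gt_mem_nhds (show 0 < A / 8 by positivity))).and
      (h2.eventually (gt_mem_nhds (show 0 < r / 8 by positivity)))).and self_mem_nhdsWithin).exists
    exact ⟨ξ, h5, h4.le, h3.le⟩
  -- eventual properties
  have hxyl : Tendsto (fun k => ‖xs k - ys k‖) atTop (𝓝 0) := by
    have := (hxl.sub hyl).norm
    simpa using this
  have hxn : Tendsto (fun k => ‖xs k - xb‖) atTop (𝓝 0) := tendsto_iff_norm_sub_tendsto_zero.1 hxl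
  have hyn : Tendsto (fun k => ‖ys k - xb‖) atTop (𝓝 0) := tendsto_iff_norm_sub_tendsto_zero.1 hyl
  have hPC : Tendsto (fun k => P * C * ‖xs k - ys k‖) atTop (𝓝 0) := by
    simpa using hxyl.const_mul (P * C)
  have ev1 := Iout_usc hΩ hc hM hJ0 hJ1 hξ hwb hwusc hxb hxs hxl hwl (A / 32) (by positivity)
  have ev2 := Iout_usc hΩ hc hM hJ0 hJ1 hξ (w := fun y => - v y) (M := M)
    (fun y hy => by rw [abs_neg]; exact hvb y hy) (lsc_neg hlsc) hxb hys hyl hvl.neg (A / 32) (by positivity)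
  have ev3 := (hwl.sub hvl).eventually (lt_mem_nhds (show w xb - v xb - A / 32 < w xb - v xb by linarith))
  obtain ⟨k, ⟨⟨k1, k2⟩, k3⟩, ⟨⟨k4, k5⟩, k6⟩, ⟨k7, k8⟩⟩ := (((ev1.and ev2).and ev3).and
    (((hxn.eventually (gt_mem_nhds (show 0 < r / 4 by positivity))).and
      (hyn.eventually (gt_mem_nhds (show 0 < r / 4 by positivity)))).and
      (hyn.eventually (gt_mem_nhds (show 0 < δ / 2 by positivity))) |>.and
    ((hxyl.eventually (gt_mem_nhds hρ)).and
      (hPC.eventually (gt_mem_nhds hδ0))))).exists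
  have hdk := hdm k
  generalize hX : xs k = X at *
  generalize hY : ys k = Y at *
  generalize hT : τ k = T at *
  have hTp : 0 < T := hT ▸ hτ k
  have hXc : X ∈ closure Ω := hX ▸ hxs k
  have hYc : Y ∈ closure Ω := hY ▸ hys k
  have hXK : ∀ y ∈ closedBall X (Cj * ξ), y ∈ closedBall xb (r/2) := by
    intro y hy
    rw [mem_closedBall, dist_eq_norm] at hy ⊢
    have : y - xb = (y - X) + (X - xb) := by abel
    rw [this]
    exact (norm_add_le _ _).trans (by linarith)
  have hYK : ∀ y ∈ closedBall Y (Cj * ξ), y ∈ closedBall xb (r/2) := by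
    intro y hy
    rw [mem_closedBall, dist_eq_norm] at hy ⊢
    have : y - xb = (y - Y) + (Y - xb) := by abel
    rw [this]
    exact (norm_add_le _ _).trans (by linarith)
  have hXself : X ∈ closedBall xb (r/2) := by rw [mem_closedBall, dist_eq_norm]; linarith
  have hYself : Y ∈ closedBall xb (r/2) := by rw [mem_closedBall, dist_eq_norm]; linarith
  have hXr1 : X ∈ ball xb r1 := by rw [mem_ball, dist_eq_norm]; linarith
  have hYr1 : Y ∈ ball xb r1 := by rw [mem_ball, dist_eq_norm]; linarith
  have hball2 : ∀ y ∈ closedBall xb (r/2), y ∈ closedBall x₀ 2 := by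
    intro y hy
    rw [mem_closedBall, dist_eq_norm] at hy hxb1 ⊢
    have : y - x₀ = (y - xb) + (xb - x₀) := by abel
    rw [this]
    exact (norm_add_le _ _).trans (by linarith)
  set s : ℝ := sq T (X - Y) with hs
  have hs0 : 0 < s := sq_pos hTp _
  have hsYX : sq T (Y - X) = s := by rw [hs, ← sq_neg, neg_sub]
  have hns : ‖X - Y‖ ≤ s := norm_le_sq T _
  -- sub
  have hφcd : ContDiff ℝ 1 (fun y => P * sq T (y - Y) - a y) := (contDiff_const.mul (sq_cd hTp Y)).sub hacd
  have hpg : HasGradientAt (fun y => P * sq T (y - Y) - a y)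
      (P • (s⁻¹ • (X - Y)) - (gΘ X + (4 * δ) • gradient h X)) X :=
    grad_sub (grad_mul P (sq_grad hTp Y X)) (grad_add (hΘd X) (grad_mul (4 * δ) (hhd X)))
  set p : Euc N := P • (s⁻¹ • (X - Y)) - (gΘ X + (4 * δ) • gradient h X) with hp
  have hpfr : X ∈ frontier Ω → 0 < ⟪p, n X⟫ := by
    intro hXf
    have h3 := hgeo X hXf hXr1 Y hYc hYr1
    have h4 : -(C * ‖X - Y‖) ≤ s⁻¹ * ⟪X - Y, n X⟫ := by
      have h5 : C * ‖X - Y‖ * ‖X - Y‖ ≤ C * ‖X - Y‖ * s := mul_le_mul_of_nonneg_left hns (by positivity)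
      rw [inv_mul_eq_div, le_div_iff₀ hs0]; linarith
    have h6 : ⟪gΘ X, n X⟫ ≤ 3 * δ := by
      have := real_inner_le_norm (gΘ X) (n X)
      rw [(hn X hXf).1, mul_one] at this
      exact this.trans (hgΘn X)
    have h7 : P * -(C * ‖X - Y‖) ≤ P * (s⁻¹ * ⟪X - Y, n X⟫) := mul_le_mul_of_nonneg_left h4 hP0.le
    rw [hp, hhn X hXf (hball2 X hXself), inner_sub_left, inner_add_left, inner_smul_left, inner_smul_left,
      inner_smul_left, inner_neg_left, real_inner_self_eq_norm_sq, (hn X hXf).1]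
    simp only [conj_trivial]
    linarith
  have st1 := sub_step hΩ.1 hsub hμ0 hξ hφcd hXc (by
    intro y hy
    have h1 := hdk y ⟨hXK y hy.1, hy.2⟩ Y ⟨hYself, hYc⟩
    simp only [hw] at h1
    linarith) hpg hpfr
  -- super
  have hψcd : ContDiff ℝ 1 (fun y => b y - P * sq T (y - X) - ‖y - xb‖ ^ 2) :=
    (hbcd.sub (contDiff_const.mul (sq_cd hTp X))).sub (cd_normsq xb)
  have hqg : HasGradientAt (fun y => b y - P * sq T (y - X) - ‖y - xb‖ ^ 2)
      ((4 * δ) • gradient h Y - P • ((sq T (Y - X))⁻¹ • (Y - X)) - (2:ℝ) • (Y - xb)) Y :=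
    grad_sub (grad_sub (grad_mul (4 * δ) (hhd Y)) (grad_mul P (sq_grad hTp X Y))) (grad_normsq xb Y)
  rw [hsYX] at hqg
  set q : Euc N := (4 * δ) • gradient h Y - P • (s⁻¹ • (Y - X)) - (2:ℝ) • (Y - xb) with hq
  have hqfr : Y ∈ frontier Ω → ⟪q, n Y⟫ < 0 := by
    intro hYf
    have h3 := hgeo Y hYf hYr1 X hXc hXr1
    rw [norm_sub_rev] at h3
    have h4 : -(C * ‖X - Y‖) ≤ s⁻¹ * ⟪Y - X, n Y⟫ := by
      have h5 : C * ‖X - Y‖ * ‖X - Y‖ ≤ C * ‖X - Y‖ * s := mul_le_mul_of_nonneg_left hns (by positivity)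
      rw [inv_mul_eq_div, le_div_iff₀ hs0]; linarith
    have h6 : -⟪Y - xb, n Y⟫ ≤ ‖Y - xb‖ := by
      have := (abs_le.1 (abs_real_inner_le_norm (Y - xb) (n Y))).1
      rw [(hn Y hYf).1, mul_one] at this
      linarith
    have h7 : P * -(C * ‖X - Y‖) ≤ P * (s⁻¹ * ⟪Y - X, n Y⟫) := mul_le_mul_of_nonneg_left h4 hP0.le
    rw [hq, hhn Y hYf (hball2 Y hYself), inner_sub_left, inner_sub_left, inner_smul_left, inner_smul_left,
      inner_smul_left, inner_smul_left, inner_neg_left, real_inner_self_eq_norm_sq, (hn Y hYf).1]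
    simp only [conj_trivial]
    linarith
  have st2 := sup_step hΩ.1 hsup hξ hψcd hYc (by
    intro y hy
    have h1 := hdk X ⟨hXself, hXc⟩ y ⟨hYK y hy.1, hy.2⟩
    have h2 : sq T (y - X) = sq T (X - y) := by rw [← sq_neg, neg_sub]
    simp only [h2, hsYX]
    linarith) hqg hqfr
  -- hamiltonian
  have hns1 : ‖P • (s⁻¹ • (X - Y))‖ ≤ P := by
    rw [norm_smul, norm_smul, Real.norm_of_nonneg hP0.le, Real.norm_of_nonneg (inv_pos.2 hs0).le]
    have : s⁻¹ * ‖X - Y‖ ≤ 1 := by rw [inv_mul_eq_div, div_le_one hs0]; exact hns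
    nlinarith
  have hgh : ∀ x, ‖(4 * δ) • gradient h x‖ ≤ 12 * δ := by
    intro x
    rw [norm_smul, Real.norm_of_nonneg (by positivity)]
    have := hhg x
    nlinarith
  have h2Y : ‖(2:ℝ) • (Y - xb)‖ ≤ δ := by
    rw [norm_smul, Real.norm_of_nonneg (by norm_num)]; linarith
  have hpn : ‖p‖ ≤ P + 15 * δ := by
    refine (norm_sub_le _ _).trans ?_
    have := norm_add_le (gΘ X) ((4 * δ) • gradient h X)
    linarith [hgΘn X, hgh X]
  have hqeq : q = P • (s⁻¹ • (X - Y)) + (4 * δ) • gradient h Y - (2:ℝ) • (Y - xb) := by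
    rw [hq, ← neg_sub X Y, smul_neg, smul_neg]; abel
  have hqn : ‖q‖ ≤ P + 15 * δ := by
    rw [hqeq]
    refine (norm_sub_le _ _).trans ?_
    have := norm_add_le (P • (s⁻¹ • (X - Y))) ((4 * δ) • gradient h Y)
    linarith [hgh Y]
  have hpq : ‖p - q‖ ≤ e := by
    have : p - q = (2:ℝ) • (Y - xb) - (gΘ X + (4 * δ) • gradient h X) - (4 * δ) • gradient h Y := by
      rw [hqeq, hp]; abel
    rw [this]
    refine (norm_sub_le _ _).trans ?_
    have h1 := norm_sub_le ((2:ℝ) • (Y - xb)) (gΘ X + (4 * δ) • gradient h X)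
    have h2 := norm_add_le (gΘ X) ((4 * δ) • gradient h X)
    linarith [hgΘn X, hgh X, hgh Y]
  have hham := hHρ X Y p q k7.le hpn hqn hpq
  -- inner nonlocal terms
  have hI1 := Iin_bound hc hM.1 hJ0 hJ1 hXc hξ (K := P + 15 * δ) (by positivity)
    (φ := fun y => P * sq T (y - Y) - a y) (by
      intro y _
      have h1 := abs_le.1 (sq_lip_abs hTp (y - Y) (X - Y))
      rw [sub_sub_sub_cancel_right] at h1
      have h2 := abs_le.1 (halip y X)
      rw [abs_le]
      have h3 := mul_le_mul_of_nonneg_left h1.1 hP0.le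
      have h4 := mul_le_mul_of_nonneg_left h1.2 hP0.le
      constructor <;> linarith)
  have hI2 := Iin_bound hc hM.1 hJ0 hJ1 hYc hξ (K := P + 12 * δ + 2) (by positivity)
    (φ := fun y => b y - P * sq T (y - X) - ‖y - xb‖ ^ 2) (by
      intro y hy
      have h1 := abs_le.1 (sq_lip_abs hTp (y - X) (Y - X))
      rw [sub_sub_sub_cancel_right] at h1
      have h2 := abs_le.1 (hblip y Y)
      have hyb := hYK y hy
      rw [mem_closedBall, dist_eq_norm] at hyb
      have h5 : |‖y - xb‖ - ‖Y - xb‖| ≤ ‖y - Y‖ := by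
        have := abs_norm_sub_norm_le (y - xb) (Y - xb)
        rwa [sub_sub_sub_cancel_right] at this
      have h6 : |‖y - xb‖ ^ 2 - ‖Y - xb‖ ^ 2| ≤ 2 * ‖y - Y‖ := by
        have e1 : ‖y - xb‖ ^ 2 - ‖Y - xb‖ ^ 2 = (‖y - xb‖ + ‖Y - xb‖) * (‖y - xb‖ - ‖Y - xb‖) := by ring
        rw [e1, abs_mul, abs_of_nonneg (by positivity)]
        exact mul_le_mul (by linarith) h5 (abs_nonneg _) (by norm_num)
      rw [abs_le] at h6
      rw [abs_le]
      have h3 := mul_le_mul_of_nonneg_left h1.1 hP0.le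
      have h4 := mul_le_mul_of_nonneg_left h1.2 hP0.le
      constructor <;> linarith)
  have hI3 := Iout_max hc hM.1 hJ0 hJ1 hxb hξ hwb (usc_meas hwusc) hvb (lsc_meas hlsc)
    (K := 27 * δ) (S := 4 * δ) (by positivity) hθlip hθb hmax
  have e4 : c * Cμ * (27 * δ * Cj + 2 * (4 * δ)) = c * Cμ * (27 * Cj + 8) * δ := by ring
  have e5 : c * Cμ * (P + 15 * δ) * Cj * ξ ^ (1 - σ) + c * Cμ * (P + 12 * δ + 2) * Cj * ξ ^ (1 - σ)
      = c * Cμ * (2 * P + 27 * δ + 2) * Cj * ξ ^ (1 - σ) := by ring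
  rw [Iout_neg, Iout_neg] at k2
  have hI1' := (abs_le.1 hI1).2
  have hI2' := (abs_le.1 hI2).1
  have st1' : w X - Iin Ω j g ξ (fun y => P * sq T (y - Y) - a y) X - Iout Ω j g ξ w X
      + μ * H X (μ⁻¹ • p) ≤ 0 := st1
  rw [e4] at hI3
  linarith


/-- **Comparison principle (coercive case).**  If `Ω` is of class `W^{2,∞}`, the measures
satisfy (M), the jump function satisfies (J0), (J1), and `H` is a coercive Hamiltonian
satisfying (H1), (Ha) (sublinear case) or (H1), (Hb), (Hc) (superlinear case), then any
bounded usc viscosity subsolution `u` and bounded lsc viscosity supersolution `v` of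
`u - I[u] + H(x, Du) = 0` in `Ω`, with generalized Neumann boundary condition
`∂u/∂n = 0` on `∂Ω`, satisfy `u ≤ v` on `closure Ω`. -/
theorem comparison_coercive
    (hN : 0 < N) (Ω : Set (Euc N)) (hΩ : IsW2Domain hN Ω)
    (n : Euc N → Euc N) (hn : IsExteriorNormal Ω n)
    (g : Euc N → Euc N → ℝ) (Cμ Dμ σ : ℝ) (hM : AssumptionM Ω g Cμ Dμ σ)
    (j : Euc N → Euc N → Euc N) (Aj : ℝ) (hJ0 : AssumptionJ0 Ω j Aj)
    (Cj' Cj Dj : ℝ) (hJ1 : AssumptionJ1 Ω j Cj' Cj Dj)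
    (H : Euc N → Euc N → ℝ) (hHam : StatCoerciveOK Ω H σ)
    (u v : Euc N → ℝ)
    (hub : BddOn u (closure Ω)) (husc : UpperSemicontinuousOn u (closure Ω))
    (hsub : IsSubSol Ω j g n Cj (statF H) u)
    (hvb : BddOn v (closure Ω)) (hlsc : LowerSemicontinuousOn v (closure Ω))
    (hsup : IsSuperSol Ω j g n Cj (statF H) v) :
    ∀ x ∈ closure Ω, u x ≤ v x := by
  intro x hx
  by_contra hcon
  push Not at hcon
  obtain ⟨M1, h1⟩ := hub
  obtain ⟨M2, h2⟩ := hvb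
  exact comparison_aux hN Ω hΩ n hn g Cμ Dμ σ hM j Aj hJ0 Cj' Cj Dj hJ1 H hHam u v (max 1 (max M1 M2))
    (le_max_left _ _) (fun y hy => (h1 y hy).trans ((le_max_left _ _).trans (le_max_right _ _))) husc hsub
    (fun y hy => (h2 y hy).trans ((le_max_right _ _).trans (le_max_right _ _))) hlsc hsup x hx hcon

end Censored

end
end

section
/- Key boundary-rectification estimate. Let Ω ⊂ ℝ^N be an open set of class W^{2,∞}, let j satisfy (J0) and (J1), let σ ∈ (0,1), fix ŝ ∈ ∂Ω with r = r(ŝ) the radius from the W^{2,∞} boundary chart, and fix 0 < δ₀ < r C_j⁻¹/2. For s in the closure of Ω set J_s = {z ∈ ℝ^N : s + j(s,z) ∈ cl(Ω)}. Then there exists a constant C > 0 such that for all s₁, s₂ ∈ B_{r/2}(ŝ) ∩ cl(Ω) with d(s₁) = d(s₂), one has ∫_{(J_{s₁} \ J_{s₂}) ∩ {|z| ≤ δ₀}} |z|^{−(N+σ−1)} dz ≤ C|s₁ − s₂|. -/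
set_option autoImplicit false

/- Common framework for censored nonlocal Hamilton–Jacobi equations with
Neumann boundary conditions (Barles-type viscosity solutions). -/

open Set Metric MeasureTheory Filter Topology Function
open scoped RealInnerProductSpace NNReal ENNReal

noncomputable section

namespace Censored

variable {N : ℕ}

lemma mem_closure_iff_sdist {Ω : Set (Euc N)} (hne : Ω.Nonempty) (y : Euc N) :
    y ∈ closure Ω ↔ 0 ≤ sdist Ω y := by
  constructor
  · intro h
    have := (mem_closure_iff_infDist_zero hne).1 h
    simp only [sdist, this, sub_zero]
    exact infDist_nonneg
  · intro h
    by_contra hy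
    have h1 : 0 < infDist y Ω := by
      rcases (infDist_nonneg (x := y) (s := Ω)).lt_or_eq with h2 | h2
      · exact h2
      · exact absurd ((mem_closure_iff_infDist_zero hne).2 h2.symm) hy
    have h2 : infDist y Ωᶜ = 0 := infDist_zero_of_mem (fun hh => hy (subset_closure hh))
    simp only [sdist, h2] at h
    linarith

lemma continuous_sdist (Ω : Set (Euc N)) : Continuous (sdist Ω) :=
  (continuous_infDist_pt _).sub (continuous_infDist_pt _)

/-- Volume of a slab in a cube. -/
lemma volume_box_le (i₀ : Fin N) (p : Euc N) (B ε : ℝ) (hB : 0 ≤ B) :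
    volume {w : Euc N | ‖w - p‖ ≤ B ∧ 0 ≤ w i₀ ∧ w i₀ ≤ ε} ≤
      ENNReal.ofReal ((2 * B) ^ (N - 1) * ε) := by
  classical
  set a : Fin N → ℝ := Function.update (fun i => p i - B) i₀ 0 with ha
  set b : Fin N → ℝ := Function.update (fun i => p i + B) i₀ ε with hb
  have hsub : {w : Euc N | ‖w - p‖ ≤ B ∧ 0 ≤ w i₀ ∧ w i₀ ≤ ε} ⊆
      (@WithLp.ofLp 2 (Fin N → ℝ)) ⁻¹' (Icc a b) := by
    rintro w ⟨h1, h2, h3⟩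
    have key : ∀ i, |w i - p i| ≤ B := fun i => by
      have := PiLp.norm_apply_le (w - p) i
      simp only [PiLp.sub_apply, Real.norm_eq_abs] at this
      exact this.trans h1
    refine ⟨fun i => ?_, fun i => ?_⟩
    · by_cases hi : i = i₀
      · subst hi; simpa [ha] using h2
      · have := (abs_le.1 (key i)).1
        simp only [ha, Function.update_of_ne hi]; linarith
    · by_cases hi : i = i₀
      · subst hi; simpa [hb] using h3
      · have := (abs_le.1 (key i)).2
        simp only [hb, Function.update_of_ne hi]; linarith
  refine (measure_mono hsub).trans ?_
  rw [(PiLp.volume_preserving_ofLp (Fin N)).measure_preimage measurableSet_Icc.nullMeasurableSet,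
    Real.volume_Icc_pi, ← Finset.mul_prod_erase _ _ (Finset.mem_univ i₀)]
  have : ∀ i ∈ Finset.univ.erase i₀, ENNReal.ofReal (b i - a i) = ENNReal.ofReal (2 * B) := by
    intro i hi
    have hi := Finset.ne_of_mem_erase hi
    simp only [ha, hb, Function.update_of_ne hi]
    congr 1; ring
  rw [Finset.prod_congr rfl this, Finset.prod_const, Finset.card_erase_of_mem (Finset.mem_univ _),
    Finset.card_univ, Fintype.card_fin, mul_comm,
    ENNReal.ofReal_mul (p := (2 * B) ^ (N - 1)) (by positivity),
    ENNReal.ofReal_pow (by positivity)]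
  simp [ha, hb]

lemma chart_det_ne_zero {U : Set (Euc N)} (hU : IsOpen U) {ψ ψinv : Euc N → Euc N}
    (h1 : ContDiffOn ℝ 1 ψ U) (h2 : ContDiffOn ℝ 1 ψinv (ψ '' U))
    (h3 : ∀ x ∈ U, ψinv (ψ x) = x) {x : Euc N} (hx : x ∈ U) :
    (fderiv ℝ ψ x).det ≠ 0 := by
  have d1 : HasFDerivAt ψ (fderiv ℝ ψ x) x :=
    ((h1.differentiableOn one_ne_zero).differentiableAt (hU.mem_nhds hx)).hasFDerivAt
  have d2 := (h2.differentiableOn one_ne_zero (ψ x) (mem_image_of_mem _ hx)).hasFDerivWithinAt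
  have d3 := d2.comp x d1.hasFDerivWithinAt (mapsTo_image ψ U)
  have d4 := d3.hasFDerivAt (hU.mem_nhds hx)
  have d5 : HasFDerivAt (ψinv ∘ ψ) (ContinuousLinearMap.id ℝ (Euc N)) x := by
    refine (hasFDerivAt_id x).congr_of_eventuallyEq ?_
    filter_upwards [hU.mem_nhds hx] with y hy using h3 y hy
  have d6 := d4.unique d5
  intro h0
  have := congrArg ContinuousLinearMap.det d6
  have h7 : LinearMap.det ((fderivWithin ℝ ψinv (ψ '' U) (ψ x)).toLinearMap ∘ₗ
      (fderiv ℝ ψ x).toLinearMap) = LinearMap.det (LinearMap.id : Euc N →ₗ[ℝ] Euc N) := this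
  rw [LinearMap.det_comp, LinearMap.det_id] at h7
  have h8 : LinearMap.det (fderiv ℝ ψ x).toLinearMap = 0 := h0
  rw [h8] at h7
  simp at h7

/-- Volume of the slab `{0 ≤ d ≤ ε}` in a ball of radius `R`. -/
lemma slab_volume (i₀ : Fin N) (d : Euc N → ℝ) (hd : Continuous d) (s₀ : Euc N) (r ρ : ℝ)
    (hρ : ρ < r) (ψ ψinv : Euc N → Euc N)
    (h1 : ContDiffOn ℝ 1 ψ (ball s₀ r)) (h2 : ContDiffOn ℝ 1 ψinv (ψ '' ball s₀ r))
    (h3 : ∀ x ∈ ball s₀ r, ψinv (ψ x) = x) (h4 : ∀ x ∈ ball s₀ r, ψ x i₀ = d x)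
    (M : ℝ) (hM : ∀ x ∈ closedBall s₀ ρ, ‖fderiv ℝ ψ x‖ ≤ M) (hM0 : 0 ≤ M) :
    ∃ C₁ : ℝ, 0 ≤ C₁ ∧ ∀ p R ε, 0 ≤ R → closedBall p R ⊆ closedBall s₀ ρ →
      volume {y : Euc N | y ∈ closedBall p R ∧ 0 ≤ d y ∧ d y ≤ ε} ≤
        ENNReal.ofReal (C₁ * (R ^ (N - 1) * ε)) := by
  have hK : closedBall s₀ ρ ⊆ ball s₀ r := closedBall_subset_ball hρ
  have hdiff : ∀ x ∈ closedBall s₀ ρ, HasFDerivAt ψ (fderiv ℝ ψ x) x := fun x hx =>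
    ((h1.differentiableOn one_ne_zero).differentiableAt (isOpen_ball.mem_nhds (hK hx))).hasFDerivAt
  have hcont : ContinuousOn (fun x => |(fderiv ℝ ψ x).det|) (closedBall s₀ ρ) := by
    refine continuous_abs.comp_continuousOn ?_
    exact ContinuousLinearMap.continuous_det.comp_continuousOn
      ((h1.continuousOn_fderiv_of_isOpen isOpen_ball le_rfl).mono hK)
  obtain ⟨c, hc, hcb⟩ : ∃ c > 0, ∀ x ∈ closedBall s₀ ρ, c ≤ |(fderiv ℝ ψ x).det| := by
    rcases (closedBall s₀ ρ).eq_empty_or_nonempty with he | hne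
    · exact ⟨1, one_pos, by simp [he]⟩
    · obtain ⟨x, hx, hmin⟩ := (isCompact_closedBall s₀ ρ).exists_isMinOn hne hcont
      exact ⟨_, abs_pos.2 (chart_det_ne_zero isOpen_ball h1 h2 h3 (hK hx)), fun y hy => hmin hy⟩
  refine ⟨c⁻¹ * (2 * M) ^ (N - 1), by positivity, ?_⟩
  intro p R ε hR hsub
  set T := {y : Euc N | y ∈ closedBall p R ∧ 0 ≤ d y ∧ d y ≤ ε} with hT
  have hTK : T ⊆ closedBall s₀ ρ := fun y hy => hsub hy.1
  have hTm : MeasurableSet T := by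
    refine (isClosed_closedBall.inter ((isClosed_le continuous_const hd).inter
      (isClosed_le hd continuous_const))).measurableSet
  have hinj : InjOn ψ T := fun x hx y hy hxy => by
    rw [← h3 x (hK (hTK hx)), ← h3 y (hK (hTK hy)), hxy]
  have e1 := lintegral_abs_det_fderiv_eq_addHaar_image volume hTm
    (fun x hx => (hdiff x (hTK hx)).hasFDerivWithinAt) hinj
  have e2 : ENNReal.ofReal c * volume T ≤ volume (ψ '' T) := by
    rw [← e1, ← setLIntegral_const]
    exact setLIntegral_mono' hTm (fun x hx => ENNReal.ofReal_le_ofReal (hcb x (hTK hx)))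
  have e3 : volume (ψ '' T) ≤ ENNReal.ofReal ((2 * (M * R)) ^ (N - 1) * ε) := by
    refine le_trans (measure_mono ?_) (volume_box_le i₀ (ψ p) (M * R) ε (by positivity))
    rintro _ ⟨y, hy, rfl⟩
    refine ⟨?_, ?_⟩
    · have := (convex_closedBall s₀ ρ).norm_image_sub_le_of_norm_hasFDerivWithin_le
        (fun x hx => (hdiff x hx).hasFDerivWithinAt) hM (hsub (mem_closedBall_self hR)) (hTK hy)
      refine this.trans ?_
      have : ‖y - p‖ ≤ R := by simpa [dist_eq_norm] using hy.1
      gcongr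
    · rw [h4 y (hK (hTK hy))]; exact hy.2
  have e4 : volume T ≤ ENNReal.ofReal c⁻¹ * ENNReal.ofReal ((2 * (M * R)) ^ (N - 1) * ε) := by
    calc volume T = ENNReal.ofReal c⁻¹ * (ENNReal.ofReal c * volume T) := by
          rw [← mul_assoc, ← ENNReal.ofReal_mul (by positivity), inv_mul_cancel₀ hc.ne']; simp
      _ ≤ _ := by gcongr; exact e2.trans e3
  refine e4.trans (le_of_eq ?_)
  rw [← ENNReal.ofReal_mul (by positivity)]
  congr 1
  rw [show 2 * (M * R) = (2 * M) * R by ring, mul_pow]; ring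

/-- Second-order increment estimate. -/
lemma increment_est (s₀ : Euc N) (r ρ : ℝ) (hρ : ρ < r) (ψ : Euc N → Euc N)
    (h1 : ContDiffOn ℝ 1 ψ (ball s₀ r)) (L : ℝ≥0)
    (hL : LipschitzOnWith L (fun x => fderiv ℝ ψ x) (ball s₀ r))
    (M : ℝ) (hM : ∀ x ∈ closedBall s₀ ρ, ‖fderiv ℝ ψ x‖ ≤ M)
    (s₁ s₂ a b : Euc N)
    (ha : ∀ t ∈ Icc (0:ℝ) 1, s₁ + t • a ∈ closedBall s₀ ρ)
    (hb : ∀ t ∈ Icc (0:ℝ) 1, s₂ + t • b ∈ closedBall s₀ ρ) :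
    ‖(ψ (s₁ + a) - ψ s₁) - (ψ (s₂ + b) - ψ s₂)‖ ≤
      L * (‖s₁ - s₂‖ + ‖a - b‖) * ‖a‖ + M * ‖a - b‖ := by
  have hK : closedBall s₀ ρ ⊆ ball s₀ r := closedBall_subset_ball hρ
  have hdiff : ∀ x ∈ closedBall s₀ ρ, HasFDerivAt ψ (fderiv ℝ ψ x) x := fun x hx =>
    ((h1.differentiableOn one_ne_zero).differentiableAt (isOpen_ball.mem_nhds (hK hx))).hasFDerivAt
  have hline : ∀ (s a : Euc N) (t : ℝ), HasDerivAt (fun t : ℝ => s + t • a) a t := fun s a t => by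
    simpa using ((hasDerivAt_id t).smul_const a).const_add s
  have := norm_image_sub_le_of_norm_deriv_le_segment_01'
    (f := fun t : ℝ => ψ (s₁ + t • a) - ψ (s₂ + t • b))
    (f' := fun t : ℝ => fderiv ℝ ψ (s₁ + t • a) a - fderiv ℝ ψ (s₂ + t • b) b)
    (C := L * (‖s₁ - s₂‖ + ‖a - b‖) * ‖a‖ + M * ‖a - b‖) ?_ ?_
  · simp only [one_smul, zero_smul, add_zero] at this
    rwa [sub_sub_sub_comm]
  · intro t ht
    refine HasDerivAt.hasDerivWithinAt (HasDerivAt.sub ?_ ?_)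
    · exact (hdiff _ (ha t ht)).comp_hasDerivAt t (hline s₁ a t)
    · exact (hdiff _ (hb t ht)).comp_hasDerivAt t (hline s₂ b t)
  · intro t ht
    have ht' : t ∈ Icc (0:ℝ) 1 := ⟨ht.1, ht.2.le⟩
    have e : fderiv ℝ ψ (s₁ + t • a) a - fderiv ℝ ψ (s₂ + t • b) b =
        (fderiv ℝ ψ (s₁ + t • a) - fderiv ℝ ψ (s₂ + t • b)) a
          + fderiv ℝ ψ (s₂ + t • b) (a - b) := by
      simp only [ContinuousLinearMap.sub_apply, map_sub]; abel
    rw [e]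
    refine (norm_add_le _ _).trans (add_le_add ?_ ?_)
    · refine (ContinuousLinearMap.le_opNorm _ _).trans ?_
      gcongr
      refine (hL.norm_sub_le (hK (ha t ht')) (hK (hb t ht'))).trans ?_
      gcongr
      have : s₁ + t • a - (s₂ + t • b) = (s₁ - s₂) + t • (a - b) := by
        rw [smul_sub]; abel
      rw [this]
      refine (norm_add_le _ _).trans ?_
      gcongr
      rw [norm_smul, Real.norm_of_nonneg ht.1]
      exact mul_le_of_le_one_left (norm_nonneg _) ht.2.le
    · refine (ContinuousLinearMap.le_opNorm _ _).trans ?_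
      gcongr
      exact hM _ (hb t ht')

/-- Determinants of operators of bounded norm are bounded. -/
lemma det_bound (A : ℝ) : ∃ B : ℝ, 0 ≤ B ∧ ∀ T : Euc N →L[ℝ] Euc N, ‖T‖ ≤ A → |T.det| ≤ B := by
  haveI : ProperSpace (Euc N →L[ℝ] Euc N) := FiniteDimensional.proper ℝ _
  obtain ⟨B, hB⟩ := (isCompact_closedBall (0 : Euc N →L[ℝ] Euc N) A).exists_bound_of_continuousOn
    ContinuousLinearMap.continuous_det.continuousOn
  exact ⟨max B 0, le_max_right _ _, fun T hT =>
    (hB T (by simpa using hT)).trans (le_max_left _ _)⟩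

/-- Volume of the preimage of a set under a jump function. -/
lemma preimage_volume (f : Euc N → Euc N) (hbij : Function.Bijective f)
    (hf : ContDiff ℝ 1 (Function.invFun f)) (A B : ℝ)
    (hA : ∀ z, ‖fderiv ℝ (Function.invFun f) z‖ ≤ A)
    (hB : ∀ T : Euc N →L[ℝ] Euc N, ‖T‖ ≤ A → |T.det| ≤ B)
    (s : Euc N) (T : Set (Euc N)) (hT : MeasurableSet T) :
    volume {z | s + f z ∈ T} ≤ ENNReal.ofReal B * volume T := by
  set T' := (fun y => s + y) ⁻¹' T with hT'
  have hT'm : MeasurableSet T' := (measurable_const_add s) hT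
  have hvol : volume T' = volume T := measure_preimage_add volume s T
  have hsub : {z | s + f z ∈ T} ⊆ Function.invFun f '' T' := fun z hz =>
    ⟨f z, hz, Function.leftInverse_invFun hbij.1 z⟩
  refine (measure_mono hsub).trans ?_
  refine (addHaar_image_le_lintegral_abs_det_fderiv volume hT'm
    (fun x _ => ((hf.differentiable one_ne_zero) x).hasFDerivAt.hasFDerivWithinAt)).trans ?_
  rw [← hvol, ← setLIntegral_const]
  exact setLIntegral_mono' hT'm (fun x _ => ENNReal.ofReal_le_ofReal (hB _ (hA x)))

/-- Dyadic summation. -/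
lemma dyadic_bound (A : Set (Euc N)) (hN : 0 < N) (hAm : MeasurableSet A) (σ δ₀ K : ℝ) (hσ : σ ∈ Ioo (0:ℝ) 1)
    (hδ₀ : 0 < δ₀) (hK : 0 ≤ K) (hA0 : ∀ z ∈ A, 0 < ‖z‖ ∧ ‖z‖ ≤ δ₀)
    (hvol : ∀ ρ : ℝ, 0 < ρ → ρ ≤ δ₀ → volume (A ∩ {z | ‖z‖ ≤ ρ}) ≤ ENNReal.ofReal (K * ρ ^ N)) :
    ∫ z in A, ‖z‖ ^ (-((N : ℝ) + σ - 1)) ≤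
      K * (2 ^ ((N : ℝ) + σ - 1) * δ₀ ^ (1 - σ) * (1 - (1 / 2 : ℝ) ^ (1 - σ))⁻¹) := by
  set p : ℝ := (N : ℝ) + σ - 1 with hp
  have hN1 : (1 : ℝ) ≤ N := by exact_mod_cast hN
  have hp0 : 0 < p := by have := hσ.1; rw [hp]; linarith
  set q : ℝ := (1 / 2 : ℝ) ^ (1 - σ) with hq
  have hq0 : 0 ≤ q := by positivity
  have hq1 : q < 1 := Real.rpow_lt_one (by norm_num) (by norm_num) (by linarith [hσ.2])
  set S : ℕ → Set (Euc N) := fun k =>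
    A ∩ {z | ‖z‖ ≤ δ₀ * (1 / 2) ^ k} ∩ {z | δ₀ * (1 / 2) ^ (k + 1) < ‖z‖} with hS
  have hcov : A ⊆ ⋃ k, S k := by
    intro z hz
    obtain ⟨h0, h1⟩ := hA0 z hz
    obtain ⟨k, hk1, hk2⟩ := exists_nat_pow_near_of_lt_one (x := ‖z‖ / δ₀) (y := (1/2 : ℝ))
      (by positivity) ((div_le_one hδ₀).2 h1) (by norm_num) (by norm_num)
    refine mem_iUnion.2 ⟨k, ⟨hz, ?_⟩, ?_⟩
    · show ‖z‖ ≤ δ₀ * (1 / 2) ^ k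
      rw [div_le_iff₀ hδ₀] at hk2; linarith
    · show δ₀ * (1 / 2) ^ (k + 1) < ‖z‖
      rw [lt_div_iff₀ hδ₀] at hk1; linarith
  have hSm : ∀ k, MeasurableSet (S k) := fun k =>
    (hAm.inter (measurableSet_le measurable_norm measurable_const)).inter
      (measurableSet_lt measurable_const measurable_norm)
  have hshell : ∀ k, ∫⁻ z in S k, ENNReal.ofReal (‖z‖ ^ (-p)) ≤
      ENNReal.ofReal (K * (2 ^ p * δ₀ ^ (1 - σ)) * q ^ k) := by
    intro k
    have hρ : 0 < δ₀ * (1 / 2 : ℝ) ^ k := by positivity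
    have hρ1 : δ₀ * (1 / 2 : ℝ) ^ k ≤ δ₀ :=
      mul_le_of_le_one_right hδ₀.le (pow_le_one₀ (by norm_num) (by norm_num))
    set ρ := δ₀ * (1 / 2 : ℝ) ^ k with hρd
    calc ∫⁻ z in S k, ENNReal.ofReal (‖z‖ ^ (-p))
        ≤ ∫⁻ z in S k, ENNReal.ofReal ((ρ / 2) ^ (-p)) := by
          refine setLIntegral_mono' (hSm k) (fun z hz => ENNReal.ofReal_le_ofReal ?_)
          refine Real.rpow_le_rpow_of_nonpos (by positivity) ?_ (by linarith)
          have : δ₀ * (1 / 2) ^ (k + 1) < ‖z‖ := hz.2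
          rw [pow_succ] at this
          rw [hρd]; linarith
      _ = ENNReal.ofReal ((ρ / 2) ^ (-p)) * volume (S k) := setLIntegral_const _ _
      _ ≤ ENNReal.ofReal ((ρ / 2) ^ (-p)) * ENNReal.ofReal (K * ρ ^ N) := by
          gcongr
          exact (measure_mono inter_subset_left).trans (hvol ρ hρ hρ1)
      _ = ENNReal.ofReal (K * (2 ^ p * δ₀ ^ (1 - σ)) * q ^ k) := by
          rw [← ENNReal.ofReal_mul (by positivity)]
          congr 1
          have e1 : (ρ / 2) ^ (-p) = 2 ^ p * ρ ^ (-p) := by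
            rw [Real.div_rpow hρ.le (by norm_num), Real.rpow_neg (x := 2) (by norm_num)]
            field_simp
          have e2 : ρ ^ (-p) * ρ ^ N = ρ ^ (1 - σ) := by
            rw [← Real.rpow_natCast ρ N, ← Real.rpow_add hρ]
            congr 1; rw [hp]; ring
          have e3 : ρ ^ (1 - σ) = δ₀ ^ (1 - σ) * q ^ k := by
            rw [hρd, Real.mul_rpow hδ₀.le (by positivity), hq, ← Real.rpow_natCast,
              ← Real.rpow_natCast, ← Real.rpow_mul (by norm_num), ← Real.rpow_mul (by norm_num),
              mul_comm (k : ℝ)]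
          calc (ρ / 2) ^ (-p) * (K * ρ ^ N) = K * (2 ^ p * (ρ ^ (-p) * ρ ^ N)) := by rw [e1]; ring
            _ = _ := by rw [e2, e3]; ring
  have hmeas : Measurable (fun z : Euc N => ‖z‖ ^ (-p)) := measurable_norm.pow_const _
  rw [integral_eq_lintegral_of_nonneg_ae (Eventually.of_forall fun z => by positivity)
    hmeas.aestronglyMeasurable]
  have hq1' : 0 < 1 - q := by linarith
  refine ENNReal.toReal_le_of_le_ofReal (by positivity) ?_
  calc ∫⁻ z in A, ENNReal.ofReal (‖z‖ ^ (-p))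
      ≤ ∫⁻ z in ⋃ k, S k, ENNReal.ofReal (‖z‖ ^ (-p)) := lintegral_mono_set hcov
    _ ≤ ∑' k, ∫⁻ z in S k, ENNReal.ofReal (‖z‖ ^ (-p)) := lintegral_iUnion_le _ _
    _ ≤ ∑' k, ENNReal.ofReal (K * (2 ^ p * δ₀ ^ (1 - σ)) * q ^ k) := ENNReal.tsum_le_tsum hshell
    _ = ENNReal.ofReal (∑' k, K * (2 ^ p * δ₀ ^ (1 - σ)) * q ^ k) := by
        rw [ENNReal.ofReal_tsum_of_nonneg (fun k => by positivity)
          ((summable_geometric_of_lt_one hq0 hq1).mul_left _)]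
    _ = _ := by
        rw [tsum_mul_left, tsum_geometric_of_lt_one hq0 hq1]
        congr 1; ring

/-- **Key boundary-rectification estimate (Lemma `claimlip`).**  Let `Ω` be of class
`W^{2,∞}` with a boundary chart of radius `r` at `s₀ ∈ ∂Ω`, let `j` satisfy (J0), (J1),
`σ ∈ (0,1)` and `0 < δ₀ < r C_j⁻¹ / 2`.  Then there is `C > 0` such that for all
`s₁, s₂ ∈ B_{r/2}(s₀) ∩ closure Ω` with `d(s₁) = d(s₂)`,
`∫_{(J_{s₁} \ J_{s₂}) ∩ {|z| ≤ δ₀}} |z|^{-(N+σ-1)} dz ≤ C |s₁ - s₂|`. -/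
theorem boundary_rectification
    (hN : 0 < N) (Ω : Set (Euc N)) (hΩ : IsOpen Ω)
    (s₀ : Euc N) (hs₀ : s₀ ∈ frontier Ω)
    (r : ℝ) (ψ ψinv : Euc N → Euc N) (hchart : IsW2Chart hN Ω s₀ r ψ ψinv)
    (j : Euc N → Euc N → Euc N) (Aj : ℝ) (hJ0 : AssumptionJ0 Ω j Aj)
    (Cj' Cj Dj : ℝ) (hJ1 : AssumptionJ1 Ω j Cj' Cj Dj)
    (σ : ℝ) (hσ : σ ∈ Ioo (0:ℝ) 1)
    (δ₀ : ℝ) (hδ₀ : 0 < δ₀) (hδ₀' : δ₀ < r * Cj⁻¹ / 2) :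
    ∃ C > (0:ℝ), ∀ s₁ ∈ ball s₀ (r / 2) ∩ closure Ω, ∀ s₂ ∈ ball s₀ (r / 2) ∩ closure Ω,
      sdist Ω s₁ = sdist Ω s₂ →
      (∫ z in ({z : Euc N | s₁ + j s₁ z ∈ closure Ω} \
          {z : Euc N | s₂ + j s₂ z ∈ closure Ω}) ∩ {z : Euc N | ‖z‖ ≤ δ₀},
        ‖z‖ ^ (-((N : ℝ) + σ - 1))) ≤ C * ‖s₁ - s₂‖ := by
  obtain ⟨hr, hψ, ⟨L, hL⟩, hψi, -, hinv, hcomp⟩ := hchart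
  obtain ⟨hCj', hCj, hDj, hJb, hJl⟩ := hJ1
  set i₀ : Fin N := ⟨N - 1, Nat.sub_lt hN Nat.one_pos⟩ with hi₀
  have hne : Ω.Nonempty := closure_nonempty_iff.1 ⟨s₀, frontier_subset_closure hs₀⟩
  have hCδ : Cj * δ₀ < r / 2 := by
    have : Cj * δ₀ < Cj * (r * Cj⁻¹ / 2) := mul_lt_mul_of_pos_left hδ₀' hCj
    have e : Cj * (r * Cj⁻¹ / 2) = r / 2 := by field_simp
    linarith
  set ρ : ℝ := r / 2 + Cj * δ₀ with hρd
  have hρ : ρ < r := by linarith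
  have hK : closedBall s₀ ρ ⊆ ball s₀ r := closedBall_subset_ball hρ
  obtain ⟨M', hM'⟩ := (isCompact_closedBall s₀ ρ).exists_bound_of_continuousOn
    ((hψ.continuousOn_fderiv_of_isOpen isOpen_ball le_rfl).mono hK)
  set M : ℝ := max M' 0 with hMd
  have hM : ∀ x ∈ closedBall s₀ ρ, ‖fderiv ℝ ψ x‖ ≤ M := fun x hx =>
    (hM' x hx).trans (le_max_left _ _)
  have hM0 : 0 ≤ M := le_max_right _ _
  obtain ⟨C₁, hC₁, hslab⟩ := slab_volume i₀ (sdist Ω) (continuous_sdist Ω) s₀ r ρ hρ ψ ψinv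
    hψ hψi hinv hcomp M hM hM0
  obtain ⟨B, hB0, hB⟩ := det_bound (N := N) Aj
  set C₂ : ℝ := L * (1 + Dj * δ₀) * Cj + M * Dj with hC₂d
  have hC₂ : 0 ≤ C₂ := by positivity
  set G : ℝ := 2 ^ ((N : ℝ) + σ - 1) * δ₀ ^ (1 - σ) * (1 - (1 / 2 : ℝ) ^ (1 - σ))⁻¹ with hGd
  have hG : 0 ≤ G := by
    have : (1 / 2 : ℝ) ^ (1 - σ) < 1 :=
      Real.rpow_lt_one (by norm_num) (by norm_num) (by linarith [hσ.2])
    have : 0 < 1 - (1 / 2 : ℝ) ^ (1 - σ) := by linarith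
    positivity
  set K : ℝ := B * (C₁ * (Cj ^ (N - 1) * C₂)) with hKd
  have hK0 : 0 ≤ K := by positivity
  refine ⟨K * G + 1, by positivity, ?_⟩
  rintro s₁ ⟨hs₁, hs₁c⟩ s₂ ⟨hs₂, hs₂c⟩ heq
  obtain ⟨hj1, hbij1, hji1, hA1⟩ := hJ0 s₁ hs₁c
  obtain ⟨hj2, -⟩ := hJ0 s₂ hs₂c
  rw [mem_ball, dist_eq_norm] at hs₁ hs₂
  -- points stay in the compact ball
  have hseg : ∀ s ∈ closure Ω, ‖s - s₀‖ < r / 2 → ∀ z : Euc N, ‖z‖ ≤ δ₀ →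
      ∀ t ∈ Icc (0:ℝ) 1, s + t • j s z ∈ closedBall s₀ ρ := by
    intro s hs hsr z hz t ht
    rw [mem_closedBall, dist_eq_norm]
    have h1 : s + t • j s z - s₀ = (s - s₀) + t • j s z := by abel
    have h2 : ‖t • j s z‖ ≤ Cj * δ₀ := by
      rw [norm_smul, Real.norm_of_nonneg ht.1]
      refine (mul_le_of_le_one_left (norm_nonneg _) ht.2).trans ?_
      exact ((hJb s hs z).2).trans (by gcongr)
    rw [h1, hρd]
    exact (norm_add_le _ _).trans (add_le_add hsr.le h2)
  have hone : (1:ℝ) ∈ Icc (0:ℝ) 1 := ⟨zero_le_one, le_rfl⟩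
  have hzero : (0:ℝ) ∈ Icc (0:ℝ) 1 := ⟨le_rfl, zero_le_one⟩
  have hinc : ∀ z : Euc N, ‖z‖ ≤ δ₀ →
      sdist Ω (s₁ + j s₁ z) - sdist Ω (s₂ + j s₂ z) ≤ C₂ * ‖z‖ * ‖s₁ - s₂‖ := by
    intro z hz
    have h1 := hseg s₁ hs₁c hs₁ z hz
    have h2 := hseg s₂ hs₂c hs₂ z hz
    have key := increment_est s₀ r ρ hρ ψ hψ L hL M hM s₁ s₂ (j s₁ z) (j s₂ z) h1 h2
    have key2 := (PiLp.norm_apply_le ((ψ (s₁ + j s₁ z) - ψ s₁) - (ψ (s₂ + j s₂ z) - ψ s₂)) i₀).trans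
      key
    have a1 := hcomp _ (hK (by simpa using h1 1 hone))
    have a2 := hcomp _ (hK (by simpa using h2 1 hone))
    have b1 := hcomp _ (hK (by simpa using h1 0 hzero))
    have b2 := hcomp _ (hK (by simpa using h2 0 hzero))
    simp only [PiLp.sub_apply, Real.norm_eq_abs] at key2
    rw [a1, a2, b1, b2, heq] at key2
    have key3 := (le_abs_self _).trans key2
    have c1 := hJl s₁ hs₁c s₂ hs₂c z
    have c2 := (hJb s₁ hs₁c z).2
    have c3 : ‖j s₁ z - j s₂ z‖ ≤ Dj * δ₀ * ‖s₁ - s₂‖ := c1.trans (by gcongr)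
    calc sdist Ω (s₁ + j s₁ z) - sdist Ω (s₂ + j s₂ z)
        ≤ L * (‖s₁ - s₂‖ + ‖j s₁ z - j s₂ z‖) * ‖j s₁ z‖ + M * ‖j s₁ z - j s₂ z‖ := by linarith
      _ ≤ L * (‖s₁ - s₂‖ + Dj * δ₀ * ‖s₁ - s₂‖) * (Cj * ‖z‖) + M * (Dj * ‖z‖ * ‖s₁ - s₂‖) := by
          gcongr
      _ = C₂ * ‖z‖ * ‖s₁ - s₂‖ := by rw [hC₂d]; ring
  have hcj1 : Continuous (j s₁) := hj1.continuous
  have hcj2 : Continuous (j s₂) := hj2.continuous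
  set A := ({z : Euc N | s₁ + j s₁ z ∈ closure Ω} \
          {z : Euc N | s₂ + j s₂ z ∈ closure Ω}) ∩ {z : Euc N | ‖z‖ ≤ δ₀} with hAd
  have hAm : MeasurableSet A := by
    refine MeasurableSet.inter (MeasurableSet.diff ?_ ?_) ?_
    · exact (isClosed_closure.preimage (continuous_const.add hcj1)).measurableSet
    · exact (isClosed_closure.preimage (continuous_const.add hcj2)).measurableSet
    · exact measurableSet_le measurable_norm measurable_const
  have hA0 : ∀ z ∈ A, 0 < ‖z‖ ∧ ‖z‖ ≤ δ₀ := by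
    rintro z ⟨⟨-, hz2⟩, hz3⟩
    refine ⟨norm_pos_iff.2 ?_, hz3⟩
    rintro rfl
    apply hz2
    have : j s₂ 0 = 0 := by simpa using (hJb s₂ hs₂c 0).2
    show s₂ + j s₂ 0 ∈ closure Ω
    rw [this, add_zero]; exact hs₂c
  have hvol : ∀ τ : ℝ, 0 < τ → τ ≤ δ₀ →
      volume (A ∩ {z | ‖z‖ ≤ τ}) ≤ ENNReal.ofReal (K * ‖s₁ - s₂‖ * τ ^ N) := by
    intro τ hτ hτ'
    set ε := C₂ * τ * ‖s₁ - s₂‖ with hε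
    set T := {y : Euc N | y ∈ closedBall s₁ (Cj * τ) ∧ 0 ≤ sdist Ω y ∧ sdist Ω y ≤ ε} with hT
    have hTm : MeasurableSet T :=
      (isClosed_closedBall.inter ((isClosed_le continuous_const (continuous_sdist Ω)).inter
        (isClosed_le (continuous_sdist Ω) continuous_const))).measurableSet
    have hsub : A ∩ {z | ‖z‖ ≤ τ} ⊆ {z | s₁ + j s₁ z ∈ T} := by
      rintro z ⟨⟨⟨hz1, hz2⟩, hz3⟩, hz4⟩
      have hz4 : ‖z‖ ≤ τ := hz4
      refine ⟨?_, (mem_closure_iff_sdist hne _).1 hz1, ?_⟩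
      · rw [mem_closedBall, dist_eq_norm, add_sub_cancel_left]
        exact ((hJb s₁ hs₁c z).2).trans (by gcongr)
      · have h1 := hinc z hz3
        have h2 : sdist Ω (s₂ + j s₂ z) < 0 :=
          not_le.1 fun h => hz2 ((mem_closure_iff_sdist hne _).2 h)
        have h3 : C₂ * ‖z‖ * ‖s₁ - s₂‖ ≤ ε := by rw [hε]; gcongr
        linarith
    have hball : closedBall s₁ (Cj * τ) ⊆ closedBall s₀ ρ := by
      apply closedBall_subset_closedBall'
      rw [dist_eq_norm, hρd]
      have : Cj * τ ≤ Cj * δ₀ := by gcongr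
      linarith
    calc volume (A ∩ {z | ‖z‖ ≤ τ}) ≤ volume {z | s₁ + j s₁ z ∈ T} := measure_mono hsub
      _ ≤ ENNReal.ofReal B * volume T := preimage_volume (j s₁) hbij1 hji1 Aj B hA1 hB s₁ T hTm
      _ ≤ ENNReal.ofReal B * ENNReal.ofReal (C₁ * ((Cj * τ) ^ (N - 1) * ε)) := by
          gcongr
          exact hslab s₁ (Cj * τ) ε (by positivity) hball
      _ = ENNReal.ofReal (K * ‖s₁ - s₂‖ * τ ^ N) := by
          rw [← ENNReal.ofReal_mul hB0]
          congr 1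
          have : τ ^ N = τ ^ (N - 1) * τ := by rw [← pow_succ, Nat.sub_add_cancel hN]
          rw [this, mul_pow, hKd, hε]; ring
  have hfin := dyadic_bound A hN hAm σ δ₀ (K * ‖s₁ - s₂‖) hσ hδ₀ (by positivity) hA0 hvol
  refine hfin.trans ?_
  have := norm_nonneg (s₁ - s₂)
  rw [← hGd]
  nlinarith

end Censored

end
end
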